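/- arXiv:1805.00340 — 3 statements merged into one kernel-verified Lean document; each statement's English description precedes it below -/
import Mathlib

section
/- For every integer k ≥ 2 there exists a constant τ (depending only on k) such that for all integers r ≥ k and all integers c_{k-1} > c_{k-2} > ... > c_1 ≥ 0, writing b = ∑_{i=1}^{k-1} C(c_i, i), one has ∑_{i=1}^{k-1} C(c_i, i+1) ≤ f(r, k, b) ≤ ∑_{i=1}^{k-1} C(c_i, i+1) + τ, where C(n,m) denotes the binomial coefficient. -/
/-- A pair `(𝒜, ℬ)` of families, where `𝒜` consists of `r`-element subsets of `ℕ` and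
`ℬ` of `(r-1)`-element subsets of `ℕ`, is `k`-valid if every `A ∈ 𝒜` has at least `k`
subsets of cardinality `r - 1` belonging to `ℬ`. -/
def ValidPair (r k : ℕ) (𝒜 ℬ : Finset (Finset ℕ)) : Prop :=
  (∀ A ∈ 𝒜, A.card = r) ∧ (∀ B ∈ ℬ, B.card = r - 1) ∧
    ∀ A ∈ 𝒜, k ≤ (ℬ.filter (fun B => B ⊆ A)).card

/-- `f r k b` is the maximum of `|𝒜|` over all `k`-valid pairs `(𝒜, ℬ)` with `|ℬ| = b`. -/
noncomputable def f (r k b : ℕ) : ℕ :=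
  sSup {a : ℕ | ∃ 𝒜 ℬ : Finset (Finset ℕ), ValidPair r k 𝒜 ℬ ∧ ℬ.card = b ∧ 𝒜.card = a}

open Finset

def VP (r p : ℕ) (𝒜 ℬ : Finset (Finset ℕ)) : Prop :=
  (∀ A ∈ 𝒜, A.card = r + 1) ∧ (∀ B ∈ ℬ, B.card = r) ∧
    ∀ A ∈ 𝒜, p < (A.filter (fun x => A.erase x ∈ ℬ)).card

lemma filter_sub_card {r : ℕ} {ℬ : Finset (Finset ℕ)} (hB : ∀ B ∈ ℬ, B.card = r)
    {A : Finset ℕ} (hA : A.card = r + 1) :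
    (ℬ.filter (fun B => B ⊆ A)).card = (A.filter (fun x => A.erase x ∈ ℬ)).card := by
  symm
  apply Finset.card_bij (fun x _ => A.erase x)
  · intro x hx
    simp only [mem_filter] at hx ⊢
    exact ⟨hx.2, erase_subset _ _⟩
  · intro x hx y hy h
    simp only [mem_filter] at hx hy
    exact (Finset.erase_inj A hx.1).1 h
  · intro B hB'
    simp only [mem_filter] at hB'
    have h1 : (A \ B).card = 1 := by
      rw [card_sdiff_of_subset hB'.2, hA, hB B hB'.1]; omega
    obtain ⟨x, hx⟩ := card_eq_one.1 h1
    have hxA : x ∈ A \ B := by rw [hx]; simp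
    have : A.erase x = B := by
      rw [← sdiff_singleton_eq_erase, ← hx, Finset.sdiff_sdiff_eq_self hB'.2]
    refine ⟨x, ?_, this⟩
    simp only [mem_filter]
    exact ⟨(mem_sdiff.1 hxA).1, this ▸ hB'.1⟩

lemma validPair_iff {r p : ℕ} {𝒜 ℬ : Finset (Finset ℕ)} :
    ValidPair (r + 1) (p + 1) 𝒜 ℬ ↔ VP r p 𝒜 ℬ := by
  unfold ValidPair VP
  constructor
  · rintro ⟨h1, h2, h3⟩
    refine ⟨h1, h2, fun A hA => ?_⟩
    rw [← filter_sub_card h2 (h1 A hA)]; exact h3 A hA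
  · rintro ⟨h1, h2, h3⟩
    refine ⟨h1, h2, fun A hA => ?_⟩
    have := h3 A hA
    rw [← filter_sub_card h2 (h1 A hA)] at this; exact this

lemma VP.mono {r p : ℕ} {𝒜 ℬ 𝒜' ℬ' : Finset (Finset ℕ)} (h : VP r p 𝒜 ℬ) (h1 : 𝒜' ⊆ 𝒜)
    (h2 : ℬ' ⊆ ℬ) (h3 : ∀ A ∈ 𝒜', ∀ x ∈ A, A.erase x ∈ ℬ → A.erase x ∈ ℬ') : VP r p 𝒜' ℬ' := by
  refine ⟨fun A hA => h.1 A (h1 hA), fun B hB => h.2.1 B (h2 hB), fun A hA => ?_⟩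
  refine lt_of_lt_of_le (h.2.2 A (h1 hA)) (card_le_card ?_)
  intro x hx
  simp only [mem_filter] at hx ⊢
  exact ⟨hx.1, h3 A hA x hx.1 hx.2⟩

/-- restriction of 𝒜 to a subfamily -/
def rst (p : ℕ) (𝒜 ℬ : Finset (Finset ℕ)) : Finset (Finset ℕ) :=
  𝒜.filter (fun A => p < (A.filter (fun x => A.erase x ∈ ℬ)).card)

lemma VP.rst {r p : ℕ} {𝒜 ℬ ℬ' : Finset (Finset ℕ)} (h : VP r p 𝒜 ℬ) (h2 : ℬ' ⊆ ℬ) :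
    VP r p (rst p 𝒜 ℬ') ℬ' := by
  refine ⟨fun A hA => h.1 A (mem_filter.1 hA).1, fun B hB => h.2.1 B (h2 hB), fun A hA => ?_⟩
  exact (mem_filter.1 hA).2

lemma rst_rst {p : ℕ} {𝒜 ℬ ℬ' : Finset (Finset ℕ)} (h : ℬ' ⊆ ℬ) :
    rst p (rst p 𝒜 ℬ) ℬ' = rst p 𝒜 ℬ' := by
  ext A
  simp only [rst, mem_filter]
  constructor
  · rintro ⟨⟨h1, h2⟩, h3⟩; exact ⟨h1, h3⟩
  · rintro ⟨h1, h3⟩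
    refine ⟨⟨h1, lt_of_lt_of_le h3 (card_le_card ?_)⟩, h3⟩
    intro x hx
    simp only [mem_filter] at hx ⊢
    exact ⟨hx.1, h hx.2⟩

lemma VP.rst_self {r p : ℕ} {𝒜 ℬ : Finset (Finset ℕ)} (h : VP r p 𝒜 ℬ) : _root_.rst p 𝒜 ℬ = 𝒜 := by
  unfold _root_.rst
  rw [filter_true_of_mem]
  exact h.2.2

lemma VP.card_le {r p : ℕ} {𝒜 ℬ : Finset (Finset ℕ)} (h : VP r p 𝒜 ℬ) (hp : 1 ≤ p) :
    𝒜.card ≤ ℬ.card.choose 2 := by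
  have : 𝒜 ⊆ (ℬ.powersetCard 2).image (fun P => P.sup id) := by
    intro A hA
    have h1 := h.2.2 A hA
    obtain ⟨x, hx, y, hy, hxy⟩ := Finset.one_lt_card.1 (lt_of_le_of_lt hp h1)
    simp only [mem_filter] at hx hy
    simp only [mem_image, mem_powersetCard]
    refine ⟨{A.erase x, A.erase y}, ⟨?_, ?_⟩, ?_⟩
    · intro B hB
      simp only [mem_insert, mem_singleton] at hB
      rcases hB with rfl | rfl
      · exact hx.2
      · exact hy.2
    · apply card_pair
      intro h'
      exact hxy ((Finset.erase_inj A hx.1).1 h')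
    · ext z
      simp only [sup_insert, sup_singleton, id, sup_eq_union, mem_union, mem_erase]
      constructor
      · rintro (h | h) <;> exact h.2
      · intro hz
        by_cases hzx : z = x
        · right; exact ⟨by rw [hzx]; exact hxy, hz⟩
        · left; exact ⟨hzx, hz⟩
  calc 𝒜.card ≤ _ := card_le_card this
    _ ≤ _ := card_image_le
    _ = _ := card_powersetCard _ _

lemma VP.lt {r p : ℕ} {𝒜 ℬ : Finset (Finset ℕ)} (h : VP r p 𝒜 ℬ) (hA : 𝒜.Nonempty) : p ≤ r := by
  obtain ⟨A, hA⟩ := hA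
  have h1 := h.2.2 A hA
  have h2 := h.1 A hA
  have := card_filter_le A (fun x => A.erase x ∈ ℬ)
  omega

def sta (x : ℕ) (𝒜 : Finset (Finset ℕ)) := 𝒜.filter (fun A => x ∈ A)
def del (x : ℕ) (𝒜 : Finset (Finset ℕ)) := 𝒜.filter (fun A => x ∉ A)
def lnk (x : ℕ) (𝒜 : Finset (Finset ℕ)) := (sta x 𝒜).image (fun A => A.erase x)
/-- members of the star whose erasure is in ℬ -/
def dwn (x : ℕ) (𝒜 ℬ : Finset (Finset ℕ)) := 𝒜.filter (fun A => x ∈ A ∧ A.erase x ∈ ℬ)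

lemma star_add_del (x : ℕ) (𝒜 : Finset (Finset ℕ)) : (sta x 𝒜).card + (del x 𝒜).card = 𝒜.card :=
  card_filter_add_card_filter_not _

lemma erase_injOn (x : ℕ) (𝒜 : Finset (Finset ℕ)) (h : ∀ A ∈ 𝒜, x ∈ A) :
    Set.InjOn (fun A : Finset ℕ => A.erase x) (𝒜 : Set (Finset ℕ)) := by
  intro A hA B hB hAB
  simp only at hAB
  rw [← insert_erase (h A hA), ← insert_erase (h B hB), hAB]

lemma card_lnk (x : ℕ) (𝒜 : Finset (Finset ℕ)) : (lnk x 𝒜).card = (sta x 𝒜).card :=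
  card_image_of_injOn (erase_injOn x _ (fun _ hA => (mem_filter.1 hA).2))

lemma VP.lnk {r p x : ℕ} {𝒜 ℬ : Finset (Finset ℕ)} (h : VP r (p + 1) 𝒜 ℬ) :
    VP (r - 1) p (lnk x 𝒜) (lnk x ℬ) := by
  refine ⟨?_, ?_, ?_⟩
  · intro A' hA'
    obtain ⟨A, hA, rfl⟩ := mem_image.1 hA'
    have hA2 := mem_filter.1 hA
    have := h.lt ⟨A, hA2.1⟩
    rw [card_erase_of_mem hA2.2, h.1 A hA2.1]; omega
  · intro A' hA'
    obtain ⟨A, hA, rfl⟩ := mem_image.1 hA'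
    have hA2 := mem_filter.1 hA
    rw [card_erase_of_mem hA2.2, h.2.1 A hA2.1]
  · intro A' hA'
    obtain ⟨A, hA, rfl⟩ := mem_image.1 hA'
    have hA2 := mem_filter.1 hA
    have h3 := h.2.2 A hA2.1
    have h4 : ((A.filter (fun y => A.erase y ∈ ℬ)).erase x) ⊆
        (A.erase x).filter (fun y => (A.erase x).erase y ∈ _root_.lnk x ℬ) := by
      intro y hy
      simp only [mem_erase, mem_filter] at hy ⊢
      refine ⟨⟨hy.1, hy.2.1⟩, ?_⟩
      rw [erase_right_comm]
      apply mem_image.2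
      refine ⟨A.erase y, mem_filter.2 ⟨hy.2.2, mem_erase.2 ⟨hy.1.symm, hA2.2⟩⟩, rfl⟩
    have h5 := card_le_card h4
    have h6 := pred_card_le_card_erase (s := A.filter (fun y => A.erase y ∈ ℬ)) (a := x)
    omega

lemma VP.del {r p x : ℕ} {𝒜 ℬ : Finset (Finset ℕ)} (h : VP r p 𝒜 ℬ) :
    VP r p (del x 𝒜) (del x ℬ) := by
  apply h.mono (filter_subset _ _) (filter_subset _ _)
  intro A hA y hy hB
  refine mem_filter.2 ⟨hB, fun hx => (mem_filter.1 hA).2 (mem_of_mem_erase hx)⟩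

lemma VP.sta {r p x : ℕ} {𝒜 ℬ : Finset (Finset ℕ)} (h : VP r p 𝒜 ℬ) :
    VP r p ((sta x 𝒜) \ (dwn x 𝒜 ℬ)) (sta x ℬ) := by
  apply h.mono (sdiff_subset.trans (filter_subset _ _)) (filter_subset _ _)
  intro A hA y hy hB
  rw [mem_sdiff] at hA
  have hA1 := mem_filter.1 hA.1
  refine mem_filter.2 ⟨hB, mem_erase.2 ⟨?_, hA1.2⟩⟩
  rintro rfl
  exact hA.2 (mem_filter.2 ⟨hA1.1, hA1.2, hB⟩)

lemma dwn_card_le (x : ℕ) (𝒜 ℬ : Finset (Finset ℕ)) : (dwn x 𝒜 ℬ).card ≤ (del x ℬ).card := by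
  rw [← card_image_of_injOn (erase_injOn x (dwn x 𝒜 ℬ) (fun _ hA => (mem_filter.1 hA).2.1))]
  apply card_le_card
  intro B hB
  obtain ⟨A, hA, rfl⟩ := mem_image.1 hB
  exact mem_filter.2 ⟨(mem_filter.1 hA).2.2, notMem_erase _ _⟩

lemma dwn_sub (x : ℕ) (𝒜 ℬ : Finset (Finset ℕ)) : dwn x 𝒜 ℬ ⊆ sta x 𝒜 := by
  intro A hA
  have := mem_filter.1 hA
  exact mem_filter.2 ⟨this.1, this.2.1⟩

lemma exists_mid {r : ℕ} {ℬ : Finset (Finset ℕ)} (hB : ∀ B ∈ ℬ, B.card = r) (h : 2 ≤ ℬ.card) :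
    ∃ x, 0 < (sta x ℬ).card ∧ 0 < (del x ℬ).card := by
  obtain ⟨B, hb, B', hb', hne⟩ := Finset.one_lt_card.1 (show 1 < ℬ.card by omega)
  have : ¬ B ⊆ B' := fun hs => hne (eq_of_subset_of_card_le hs (by rw [hB B hb, hB B' hb']))
  obtain ⟨x, hx, hx'⟩ := not_subset.1 this
  exact ⟨x, card_pos.2 ⟨B, mem_filter.2 ⟨hb, hx⟩⟩, card_pos.2 ⟨B', mem_filter.2 ⟨hb', hx'⟩⟩⟩

/-- what is lost on removing the star -/
lemma lost_star {r p x : ℕ} {𝒜 ℬ : Finset (Finset ℕ)} (h : VP r p 𝒜 ℬ) :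
    𝒜.card ≤ (sta x 𝒜).card + (rst p 𝒜 (del x ℬ)).card := by
  rw [← star_add_del x 𝒜]
  apply Nat.add_le_add_left
  apply card_le_card
  intro A hA
  exact mem_filter.2 ⟨(mem_filter.1 hA).1, h.del.2.2 A hA⟩

lemma lost_del {r p x : ℕ} {𝒜 ℬ : Finset (Finset ℕ)} (h : VP r p 𝒜 ℬ) :
    𝒜.card ≤ (dwn x 𝒜 ℬ).card + (del x 𝒜).card + (rst p 𝒜 (sta x ℬ)).card := by
  rw [← star_add_del x 𝒜, ← card_sdiff_add_card_eq_card (dwn_sub x 𝒜 ℬ)]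
  have : ((sta x 𝒜) \ (dwn x 𝒜 ℬ)).card ≤ (rst p 𝒜 (sta x ℬ)).card := by
    apply card_le_card
    intro A hA
    exact mem_filter.2 ⟨(mem_filter.1 (mem_sdiff.1 hA).1).1, h.sta.2.2 A hA⟩
  omega


noncomputable def nu (p : ℕ) (y : ℝ) : ℝ := ((p.factorial : ℝ) * y) ^ ((1 : ℝ) / p)
noncomputable def Kf (p : ℕ) (y : ℝ) : ℝ := y * nu p y / (p + 1)

lemma nu_nonneg {p : ℕ} {y : ℝ} (hy : 0 ≤ y) : 0 ≤ nu p y := by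
  unfold nu; positivity

lemma Kf_nonneg {p : ℕ} {y : ℝ} (hy : 0 ≤ y) : 0 ≤ Kf p y := by
  have := nu_nonneg (p := p) hy
  unfold Kf; positivity

lemma nu_pow {p : ℕ} (hp : 1 ≤ p) {y : ℝ} (hy : 0 ≤ y) : nu p y ^ p = p.factorial * y := by
  unfold nu
  rw [← Real.rpow_natCast, ← Real.rpow_mul (by positivity)]
  have : (p : ℝ) ≠ 0 := by positivity
  rw [one_div, inv_mul_cancel₀ this, Real.rpow_one]

lemma nu_le {p : ℕ} (hp : 1 ≤ p) {y z : ℝ} (hy : 0 ≤ y) (hz : 0 ≤ z)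
    (h : (p.factorial : ℝ) * y ≤ z ^ p) : nu p y ≤ z := by
  rw [← nu_pow hp hy] at h
  exact (pow_le_pow_iff_left₀ (nu_nonneg hy) hz (by omega)).1 h

lemma le_nu {p : ℕ} (hp : 1 ≤ p) {y z : ℝ} (hy : 0 ≤ y) (hz : 0 ≤ z)
    (h : z ^ p ≤ (p.factorial : ℝ) * y) : z ≤ nu p y := by
  rw [← nu_pow hp hy] at h
  exact (pow_le_pow_iff_left₀ hz (nu_nonneg hy) (by omega)).1 h

lemma nu_mono {p : ℕ} (hp : 1 ≤ p) {t b : ℝ} (ht : 0 ≤ t) (h : t ≤ b) : nu p t ≤ nu p b := by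
  apply nu_le hp ht (nu_nonneg (ht.trans h))
  rw [nu_pow hp (ht.trans h)]
  gcongr

lemma Kf_mono {p : ℕ} (hp : 1 ≤ p) {t b : ℝ} (ht : 0 ≤ t) (h : t ≤ b) : Kf p t ≤ Kf p b := by
  unfold Kf
  have := nu_mono hp ht h
  have := nu_nonneg (p := p) ht
  have : 0 ≤ b := ht.trans h
  gcongr

lemma nu_pos {p : ℕ} {y : ℝ} (hy : 0 < y) : 0 < nu p y := by
  unfold nu; positivity

lemma nu_one {y : ℝ} : nu 1 y = y := by simp [nu]

lemma nu_scale {p : ℕ} (hp : 1 ≤ p) {t b : ℝ} (ht : 0 ≤ t) (hb : 0 < b) (h : t ≤ b) :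
    nu p b * (t / b) ≤ nu p t := by
  have h0 : 0 ≤ t / b := by positivity
  have h1 : t / b ≤ 1 := (div_le_one hb).2 h
  apply le_nu hp ht (mul_nonneg (nu_nonneg hb.le) h0)
  rw [mul_pow, nu_pow hp hb.le]
  have : (t / b) ^ p ≤ t / b := pow_le_of_le_one h0 h1 (by omega)
  calc (p.factorial : ℝ) * b * (t / b) ^ p ≤ p.factorial * b * (t / b) := by gcongr
    _ = _ := by field_simp

lemma nu_half {p : ℕ} (hp : 1 ≤ p) {t b : ℝ} (ht : 0 ≤ t) (h : t ≤ b / 2) :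
    nu p t ≤ (1 - 1 / (2 * p)) * nu p b := by
  have hb : 0 ≤ b := by linarith
  have hp' : (1 : ℝ) ≤ p := by exact_mod_cast hp
  have h1 : (1 : ℝ) / (2 * p) ≤ 1 / 2 := by
    apply one_div_le_one_div_of_le <;> linarith
  apply nu_le hp ht (mul_nonneg (by linarith) (nu_nonneg hb))
  rw [mul_pow, nu_pow hp hb]
  have := one_add_mul_le_pow (a := -(1 / (2 * (p : ℝ)))) (by linarith) p
  have h2 : 1 + (p : ℝ) * -(1 / (2 * (p : ℝ))) = 1 / 2 := by field_simp; norm_num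
  rw [h2, ← sub_eq_add_neg] at this
  calc (p.factorial : ℝ) * t ≤ p.factorial * (b / 2) := by gcongr
    _ = 1 / 2 * (p.factorial * b) := by ring
    _ ≤ _ := by gcongr

lemma N1 {p : ℕ} (hp : 1 ≤ p) {s t b : ℝ} (hs : 0 ≤ s) (ht : 0 ≤ t) (hb : b = s + t)
    (h : s ≤ b / 2) : s * nu p b / (2 * p * (p + 1)) ≤ Kf p b - Kf p s - Kf p t := by
  have hp' : (1 : ℝ) ≤ p := by exact_mod_cast hp
  have e : Kf p b - Kf p s - Kf p t
      = (s * (nu p b - nu p s) + t * (nu p b - nu p t)) / (p + 1) := by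
    unfold Kf; rw [hb]; ring
  rw [e]
  have h1 := nu_half hp hs h
  have h2 : nu p t ≤ nu p b := nu_mono hp ht (by linarith)
  rw [show s * nu p b / (2 * p * (p + 1)) = (s * (1 / (2 * p) * nu p b)) / (p + 1) by
    field_simp]
  gcongr
  have h3 : 1 / (2 * p) * nu p b ≤ nu p b - nu p s := by linarith
  have h4 : s * (1 / (2 * p) * nu p b) ≤ s * (nu p b - nu p s) := by gcongr
  have h5 : 0 ≤ t * (nu p b - nu p t) := mul_nonneg ht (by linarith)
  linarith

lemma N2a {p : ℕ} (hp : 1 ≤ p) {s b C δ : ℝ} (hs : 0 ≤ s) (hb : 0 < b) (hδ : 0 < δ)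
    (h : s ≤ C * b / nu p b) (hn : C / δ ^ p ≤ nu p b) : nu p s ≤ δ * nu p b := by
  have hn0 := nu_pos (p := p) hb
  apply nu_le hp hs (by positivity)
  rw [mul_pow, nu_pow hp hb.le]
  have hd : 0 < δ ^ p := by positivity
  rw [div_le_iff₀ hd] at hn
  have : s ≤ δ ^ p * b := by
    refine h.trans ?_
    rw [div_le_iff₀ hn0]
    nlinarith
  calc (p.factorial : ℝ) * s ≤ p.factorial * (δ ^ p * b) := by gcongr
    _ = _ := by ring

lemma N2b {p : ℕ} (hp : 1 ≤ p) {s t b C : ℝ} (ht : 0 ≤ t) (hs : 0 ≤ s) (hb : 0 < b)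
    (hst : b = s + t)
    (h : s ≤ C * b / nu p b) : nu p b - C ≤ nu p t := by
  have hn0 := nu_pos (p := p) hb
  refine le_trans ?_ (nu_scale hp ht hb (by linarith))
  rw [le_div_iff₀ hn0] at h
  have : nu p b * (t / b) = nu p b - s * nu p b / b := by
    have : t = b - s := by linarith
    rw [this]; field_simp
  rw [this]
  have : s * nu p b / b ≤ C := by rw [div_le_iff₀ hb]; exact h
  linarith

lemma young_aux (p : ℕ) {n u : ℝ} (hn : 0 ≤ n) (hu : 0 ≤ u) :
    (p + 1) * n ^ p * u ≤ p * n ^ (p + 1) + u ^ (p + 1) := by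
  induction p with
  | zero => simp
  | succ p ih =>
    push_cast
    have h1 : (p + 1) * n ^ p * u * u ≤ (p * n ^ (p + 1) + u ^ (p + 1)) * u := by gcongr
    have h2 : 0 ≤ (p + 1) * n ^ p * (n - u) ^ 2 := by positivity
    have e : (p + 1) * n ^ (p + 1 + 1) + u ^ (p + 1 + 1) - (p + 1 + 1) * n ^ (p + 1) * u
      = (p + 1) * n ^ p * (n - u) ^ 2
        + ((p * n ^ (p + 1) + u ^ (p + 1)) * u - (p + 1) * n ^ p * u * u) := by ring
    linarith

lemma N3 {p : ℕ} (hp : 1 ≤ p) {t b : ℝ} (ht : 0 ≤ t) (hb : 0 ≤ b) :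
    (b - t) * nu p t / p ≤ Kf p b - Kf p t := by
  have hp' : (1 : ℝ) ≤ p := by exact_mod_cast hp
  have hF : (0 : ℝ) < p.factorial := by positivity
  have h1 : b = nu p b ^ p / p.factorial := by rw [nu_pow hp hb]; field_simp
  have h2 : t = nu p t ^ p / p.factorial := by rw [nu_pow hp ht]; field_simp
  unfold Kf
  set n := nu p b
  set u := nu p t
  rw [h1, h2]
  have := young_aux p (n := n) (u := u) (nu_nonneg hb) (nu_nonneg ht)
  have e : n ^ p / p.factorial * n / (p + 1) - u ^ p / p.factorial * u / (p + 1)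
      - (n ^ p / p.factorial - u ^ p / p.factorial) * u / p
      = (p * n ^ (p + 1) + u ^ (p + 1) - (p + 1) * n ^ p * u) / (p.factorial * (p * (p + 1))) := by
    field_simp; ring
  have : 0 ≤ (p * n ^ (p + 1) + u ^ (p + 1) - (p + 1) * n ^ p * u) / (p.factorial * (p * (p + 1))) := by
    apply div_nonneg (by linarith) (by positivity)
  linarith

/-- relation between levels -/
lemma nu_level {p : ℕ} (hp : 1 ≤ p) {y : ℝ} (hy : 0 ≤ y) :
    nu (p + 1) y ^ (p + 1) = (p + 1) * nu p y ^ p := by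
  rw [nu_pow (by omega) hy, nu_pow hp hy, Nat.factorial_succ]; push_cast; ring

lemma nu_large {p : ℕ} (hp : 1 ≤ p) (N : ℝ) : ∃ b0 : ℕ, ∀ b : ℝ, (b0 : ℝ) ≤ b → N ≤ nu p b := by
  obtain ⟨b0, hb0⟩ := exists_nat_ge (max N 0 ^ p)
  refine ⟨b0, fun b hb => (le_max_left N 0).trans ?_⟩
  have h0 : (0 : ℝ) ≤ b := (Nat.cast_nonneg b0).trans hb
  apply le_nu hp h0 (le_max_right _ _)
  have : (1 : ℝ) ≤ p.factorial := by exact_mod_cast Nat.one_le_iff_ne_zero.2 (Nat.factorial_ne_zero p)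
  nlinarith


lemma A_num {p : ℕ} (hp : 1 ≤ p) {η : ℝ} (hη : 0 < η) : ∃ N : ℝ, ∀ s t b : ℝ, 0 < s → 0 < t →
    b = s + t → N ≤ nu (p + 1) b →
    (1 + η) * Kf (p + 1) b < t + (1 + η) * (Kf (p + 1) s + Kf (p + 1) t) →
    Kf (p + 1) b - Kf (p + 1) t < Kf p s → False := by
  have hp' : (1 : ℝ) ≤ p := by exact_mod_cast hp
  set q : ℕ := p + 1 with hq
  have hq' : (q : ℝ) = p + 1 := by rw [hq]; push_cast; ring
  set δ : ℝ := η / (4 * q * (1 + η)) with hδ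
  have hδ0 : 0 < δ := by positivity
  have hq2 : (2 : ℝ) ≤ q := by rw [hq']; linarith
  have hη1 : 0 < 1 + η := by linarith
  have hδ1 : 4 * q * ((1 + η) * δ) = η := by
    rw [hδ]
    have : (q : ℝ) ≠ 0 := by positivity
    field_simp
  have hδ8 : 8 * δ ≤ 1 := by
    have he : 0 < (1 + η) * δ := by positivity
    have h1 : (1 + η) * (8 * δ) ≤ (1 + η) * 1 := by nlinarith
    exact le_of_mul_le_mul_left h1 hη1
  have hδ2 : δ ≤ 1 := by linarith
  set C1 : ℝ := 2 * q * (q + 1) with hC1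
  have hC10 : 0 < C1 := by positivity
  refine ⟨max (C1 / δ ^ q) (C1 / δ), fun s t b hs ht hb hN h1 h2 => ?_⟩
  have hb0 : 0 < b := by linarith
  have hn0 := nu_pos (p := q) hb0
  have hNa : C1 / δ ^ q ≤ nu q b := (le_max_left _ _).trans hN
  have hNb : C1 / δ ≤ nu q b := (le_max_right _ _).trans hN
  have hNc : C1 ≤ nu q b * δ := (div_le_iff₀ hδ0).1 hNb
  have hNd : C1 ≤ nu q b := by nlinarith
  have hq1 : 1 ≤ q := by omega
  have hdiff : Kf q b - Kf q s - Kf q t < t := by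
    by_contra hc
    push Not at hc
    nlinarith [mul_nonneg hη.le (ht.le.trans hc)]
  -- t > b/2
  have htb : b / 2 < t := by
    by_contra hc
    push Not at hc
    have := N1 hq1 ht.le hs.le (by linarith) hc
    have h3 : t * nu q b / C1 < t := by rw [hC1]; linarith
    rw [div_lt_iff₀ hC10] at h3
    nlinarith
  have hsC : s ≤ C1 * b / nu q b := by
    have := N1 hq1 hs.le ht.le hb (by linarith)
    have h3 : s * nu q b / C1 < b := by rw [hC1]; linarith
    rw [div_lt_iff₀ hC10] at h3
    rw [le_div_iff₀ hn0]; linarith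
  have hnus := N2a hq1 hs.le hb0 hδ0 hsC hNa
  have hnut := N2b hq1 ht.le hs.le hb0 hb hsC
  have h3 := N3 hq1 ht.le hb0.le
  have hbt : b - t = s := by linarith
  rw [hbt] at h3
  have hm : nu q t < nu p s := by
    have h4 : s * nu q t / q < s * nu p s / q := by
      refine lt_of_le_of_lt h3 (h2.trans_eq ?_)
      unfold Kf; rw [hq']
    have hq0 : (0 : ℝ) < q := by positivity
    rw [div_lt_div_iff_of_pos_right hq0] at h4
    exact lt_of_mul_lt_mul_left h4 hs.le
  set n := nu q b with hn
  set m := nu p s with hm'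
  have hmn : (1 - δ) * n ≤ m := by linarith
  have hKs : Kf q s ≤ s * (δ * n) / q := by
    unfold Kf
    have hq0 : (0 : ℝ) < q := by positivity
    have : 0 ≤ nu q s := nu_nonneg hs.le
    gcongr
    linarith
  have h5 : (1 + η) * (s * ((1 - δ) * n) / q - s * (δ * n) / q) < b := by
    have h6 : s * ((1 - δ) * n) / q ≤ s * nu q t / q := by
      gcongr; linarith
    have : s * ((1 - δ) * n) / q - s * (δ * n) / q ≤ Kf q b - Kf q t - Kf q s := by linarith
    have : (1 + η) * (s * ((1 - δ) * n) / q - s * (δ * n) / q) ≤ (1 + η) * (Kf q b - Kf q t - Kf q s) := by gcongr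
    linarith
  -- convert into powers
  have hsn : (1 - δ) ^ p * b ≤ s * n / q := by
    have e1 : m ^ p = p.factorial * s := nu_pow hp hs.le
    have e2 : n ^ q = q.factorial * b := nu_pow hq1 hb0.le
    have e3 : ((1 - δ) * n) ^ p ≤ m ^ p := pow_le_pow_left₀ (mul_nonneg (by linarith) hn0.le) hmn p
    rw [e1, mul_pow] at e3
    have e4 : (q.factorial : ℝ) = q * p.factorial := by
      rw [hq, Nat.factorial_succ]; push_cast; ring
    have hF : (0 : ℝ) < p.factorial := by positivity
    have hq0 : (0 : ℝ) < q := by positivity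
    rw [le_div_iff₀ hq0]
    have e5 : (p.factorial : ℝ) * ((1 - δ) ^ p * b * q) ≤ p.factorial * (s * n) := by
      calc (p.factorial : ℝ) * ((1 - δ) ^ p * b * q) = (1 - δ) ^ p * n ^ q := by rw [e2, e4]; ring
        _ = ((1 - δ) ^ p * n ^ p) * n := by rw [hq, pow_succ]; ring
        _ ≤ (p.factorial * s) * n := by gcongr
        _ = _ := by ring
    exact le_of_mul_le_mul_left e5 hF
  have hbern := one_add_mul_le_pow (a := -δ) (by linarith) p
  rw [← sub_eq_add_neg] at hbern
  have h2d : 2 * δ ≤ 1 := by linarith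
  have h7 : (1 + η) * ((1 - 2 * δ) * ((1 - p * δ) * b)) < b := by
    refine lt_of_le_of_lt ?_ h5
    have : s * ((1 - δ) * n) / q - s * (δ * n) / q = (1 - 2 * δ) * (s * n / q) := by ring
    rw [this]
    have h1 : (1 - p * δ) ≤ (1 - δ) ^ p := by linarith
    have h2 : (1 - p * δ) * b ≤ s * n / q := le_trans (by gcongr) hsn
    have : 0 ≤ 1 - 2 * δ := by linarith
    gcongr
  have h8 : (1 + η) * ((1 - 2 * δ) * (1 - p * δ)) < 1 := by
    apply lt_of_mul_lt_mul_right (a := b) _ hb0.le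
    calc _ = (1 + η) * ((1 - 2 * δ) * ((1 - p * δ) * b)) := by ring
      _ < b := h7
      _ = _ := by ring
  have h9 : (1 - (p + 2) * δ) ≤ (1 - 2 * δ) * (1 - p * δ) := by
    have : 0 ≤ 2 * p * δ * δ := by positivity
    linarith
  have h10 : (1 + η) * (1 - (p + 2) * δ) < 1 := lt_of_le_of_lt (by gcongr) h8
  rw [hq'] at hδ1
  have he : 0 < (1 + η) * δ := by positivity
  have hpe : 0 ≤ p * ((1 + η) * δ) := by positivity
  linarith

def UB (p : ℕ) (η C : ℝ) : Prop := ∀ (r : ℕ) (𝒜 ℬ : Finset (Finset ℕ)), VP r p 𝒜 ℬ →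
  (𝒜.card : ℝ) ≤ (1 + η) * Kf p ℬ.card + C * ℬ.card

lemma VP.card_le_real {r p : ℕ} {𝒜 ℬ : Finset (Finset ℕ)} (h : VP r p 𝒜 ℬ) (hp : 1 ≤ p) :
    (𝒜.card : ℝ) ≤ (ℬ.card : ℝ) * ℬ.card / 2 := by
  have h1 : (𝒜.card : ℝ) ≤ (ℬ.card.choose 2 : ℕ) := by exact_mod_cast h.card_le hp
  rw [Nat.cast_choose_two] at h1
  have : (0 : ℝ) ≤ ℬ.card := Nat.cast_nonneg _
  nlinarith

lemma UB_step {p : ℕ} (hp : 1 ≤ p) {η C' : ℝ} (hη : 0 < η) (hC' : 0 ≤ C') (h : UB p η C') :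
    ∃ C : ℝ, 0 ≤ C ∧ UB (p + 1) η C := by
  obtain ⟨N, hN⟩ := A_num hp hη
  obtain ⟨b0, hb0⟩ := nu_large (p := p + 1) (by omega) N
  refine ⟨max C' (b0 + 2), le_max_of_le_left hC', ?_⟩
  set C : ℝ := max C' (b0 + 2) with hC
  have hC1 : C' ≤ C := le_max_left _ _
  have hC2 : (b0 : ℝ) + 2 ≤ C := le_max_right _ _
  have main : ∀ (n r : ℕ) (𝒜 ℬ : Finset (Finset ℕ)), ℬ.card = n → VP r (p + 1) 𝒜 ℬ →
      (𝒜.card : ℝ) ≤ (1 + η) * Kf (p + 1) ℬ.card + C * ℬ.card := by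
    intro n
    induction n using Nat.strong_induction_on with
    | _ n ih =>
    intro r 𝒜 ℬ hn hV
    by_cases hsm : n < b0 + 2
    · have h1 := hV.card_le_real (by omega)
      have h2 : 0 ≤ Kf (p + 1) ℬ.card := Kf_nonneg (Nat.cast_nonneg _)
      have h3 : (ℬ.card : ℝ) ≤ b0 + 2 := by rw [hn]; exact_mod_cast hsm.le
      have h4 : (0 : ℝ) ≤ ℬ.card := Nat.cast_nonneg _
      have : 0 ≤ (1 + η) * Kf (p + 1) ℬ.card := by positivity
      nlinarith
    push Not at hsm
    obtain ⟨x, hs, ht⟩ := exists_mid hV.2.1 (by omega)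
    have hst := star_add_del x ℬ
    have I3 := ih _ (by omega) r _ (del x ℬ) rfl hV.del
    have I4 := ih _ (by omega) r _ (sta x ℬ) rfl hV.sta
    have I5 := h (r - 1) (lnk x 𝒜) (lnk x ℬ) hV.lnk
    rw [card_lnk, card_lnk] at I5
    have e1 : ((sta x 𝒜).card : ℝ) + (del x 𝒜).card = 𝒜.card := by exact_mod_cast star_add_del x 𝒜
    have e2 : (((sta x 𝒜) \ (dwn x 𝒜 ℬ)).card : ℝ) + (dwn x 𝒜 ℬ).card = (sta x 𝒜).card := by
      exact_mod_cast card_sdiff_add_card_eq_card (dwn_sub x 𝒜 ℬ)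
    have e3 : ((dwn x 𝒜 ℬ).card : ℝ) ≤ (del x ℬ).card := by exact_mod_cast dwn_card_le x 𝒜 ℬ
    have e4 : (ℬ.card : ℝ) = (sta x ℬ).card + (del x ℬ).card := by exact_mod_cast hst.symm
    have hs' : (0 : ℝ) < (sta x ℬ).card := by exact_mod_cast hs
    have ht' : (0 : ℝ) < (del x ℬ).card := by exact_mod_cast ht
    by_contra hc
    push Not at hc
    refine hN _ _ _ hs' ht' e4 (hb0 _ (by exact_mod_cast (by omega : b0 ≤ ℬ.card))) ?_ ?_
    · rw [e4] at hc ⊢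
      nlinarith
    · have h6 : C' * (sta x ℬ).card ≤ C * (sta x ℬ).card := by gcongr
      have h7 : (1 + η) * Kf (p + 1) ℬ.card < (1 + η) * (Kf p (sta x ℬ).card + Kf (p + 1) (del x ℬ).card) := by
        have : C * (ℬ.card : ℝ) = C * (sta x ℬ).card + C * (del x ℬ).card := by rw [e4]; ring
        linarith
      have := lt_of_mul_lt_mul_left h7 (by linarith)
      linarith
  intro r 𝒜 ℬ hV
  exact main _ r 𝒜 ℬ rfl hV

theorem exists_UB {p : ℕ} (hp : 1 ≤ p) {η : ℝ} (hη : 0 < η) : ∃ C : ℝ, 0 ≤ C ∧ UB p η C := by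
  induction p, hp using Nat.le_induction with
  | base =>
    refine ⟨0, le_rfl, fun r 𝒜 ℬ hV => ?_⟩
    have := hV.card_le_real le_rfl
    have h2 : Kf 1 ℬ.card = (ℬ.card : ℝ) * ℬ.card / 2 := by unfold Kf; rw [nu_one]; norm_num
    rw [h2]
    have : (0 : ℝ) ≤ (ℬ.card : ℝ) * ℬ.card / 2 := by positivity
    nlinarith
  | succ p hp ih =>
    obtain ⟨C', h1, h2⟩ := ih
    exact UB_step hp hη h1 h2


lemma N4 {p : ℕ} (hp : 1 ≤ p) {z w b ζ : ℝ} (hz : 0 ≤ z) (hw : 0 ≤ w) (hb : b = z + w)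
    (h : z ≤ b / 2) (hζ : 0 ≤ ζ) (hζp : 32 * p * ζ ≤ 1) :
    z * nu p b / (4 * p * (p + 1)) ≤ (1 - ζ) * (Kf p b - Kf p w) - (1 + ζ) * Kf p z := by
  have hp' : (1 : ℝ) ≤ p := by exact_mod_cast hp
  have h1 := N1 hp hz hw hb h
  have hb0 : 0 ≤ b := by linarith
  have hn := nu_nonneg (p := p) hb0
  have h2 : Kf p z ≤ z * nu p b / (p + 1) := by
    unfold Kf
    have := nu_mono hp hz (show z ≤ b by linarith)
    gcongr
  have hζ1 : ζ ≤ 1 / 32 := by nlinarith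
  set T := z * nu p b / (4 * p * (p + 1)) with hT
  have hT0 : 0 ≤ T := by positivity
  have e1 : z * nu p b / (2 * p * (p + 1)) = 2 * T := by rw [hT]; field_simp; norm_num
  have e2 : z * nu p b / (p + 1) = 4 * p * T := by rw [hT]; field_simp
  rw [e1] at h1
  rw [e2] at h2
  have h3 : (1 - ζ) * (2 * T) ≤ (1 - ζ) * (Kf p b - Kf p z - Kf p w) := by
    apply mul_le_mul_of_nonneg_left h1; linarith
  have h4 : 2 * ζ * Kf p z ≤ 2 * ζ * (4 * p * T) := by gcongr
  have h5 : 32 * p * ζ * T ≤ 1 * T := by gcongr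
  have h6 : ζ * T ≤ 1 / 32 * T := by gcongr
  linarith

def Clean (p : ℕ) (ζ : ℝ) (𝒜 ℬ : Finset (Finset ℕ)) : Prop := ∀ ℬ' ⊆ ℬ,
  (1 - ζ) * (Kf p ℬ.card - Kf p ℬ'.card) ≤ (𝒜.card : ℝ) - (rst p 𝒜 ℬ').card

lemma X_lemma {p : ℕ} (hp : 1 ≤ p) {δ ζ C : ℝ} (hδ : 0 < δ) (hδ1 : δ ≤ 1) (hζ : 0 ≤ ζ)
    (hζp : 32 * p * ζ ≤ 1) (hζδ : 8 * ζ ≤ δ) (hC : 0 ≤ C) (hU : UB p ζ C) :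
    ∃ N : ℝ, ∀ (r : ℕ) (𝒜 ℬ : Finset (Finset ℕ)), VP r p 𝒜 ℬ → Clean p ζ 𝒜 ℬ → 2 ≤ ℬ.card →
      N ≤ nu p ℬ.card → ∃ x, 0 < (sta x ℬ).card ∧
        (1 - δ) * ((sta x ℬ).card * nu p ℬ.card / p) ≤ (dwn x 𝒜 ℬ).card := by
  have hp' : (1 : ℝ) ≤ p := by exact_mod_cast hp
  set C1 : ℝ := 8 * p * (p + 1) with hC1
  have hC10 : 0 < C1 := by positivity
  set d : ℝ := δ / 8 with hd
  have hd0 : 0 < d := by positivity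
  have hd1 : d ≤ 1 := by linarith
  refine ⟨max (max (C1 * (1 + C)) (C1 / d ^ p)) (max (C1 / d) (C * p / d)),
    fun r 𝒜 ℬ hV hcl hb2 hN => ?_⟩
  obtain ⟨x, hs, ht⟩ := exists_mid hV.2.1 hb2
  refine ⟨x, hs, ?_⟩
  have hN1 : C1 * (1 + C) ≤ nu p ℬ.card := ((le_max_left _ _).trans (le_max_left _ _)).trans hN
  have hN2 : C1 / d ^ p ≤ nu p ℬ.card := ((le_max_right _ _).trans (le_max_left _ _)).trans hN
  have hN3 : C1 / d ≤ nu p ℬ.card := ((le_max_left _ _).trans (le_max_right _ _)).trans hN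
  have hN4 : C * p / d ≤ nu p ℬ.card := ((le_max_right _ _).trans (le_max_right _ _)).trans hN
  have e4 : (ℬ.card : ℝ) = (sta x ℬ).card + (del x ℬ).card := by exact_mod_cast (star_add_del x ℬ).symm
  have hs' : (0 : ℝ) < (sta x ℬ).card := by exact_mod_cast hs
  have ht' : (0 : ℝ) < (del x ℬ).card := by exact_mod_cast ht
  have hL1 : (𝒜.card : ℝ) ≤ (sta x 𝒜).card + (rst p 𝒜 (del x ℬ)).card := by
    exact_mod_cast lost_star (x := x) hV
  have hL2 : (𝒜.card : ℝ) ≤ (dwn x 𝒜 ℬ).card + (del x 𝒜).card + (rst p 𝒜 (sta x ℬ)).card := by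
    exact_mod_cast lost_del (x := x) hV
  have hc1 := hcl (del x ℬ) (filter_subset _ _)
  have hc2 := hcl (sta x ℬ) (filter_subset _ _)
  have e2 : (((sta x 𝒜) \ (dwn x 𝒜 ℬ)).card : ℝ) + (dwn x 𝒜 ℬ).card = (sta x 𝒜).card := by
    exact_mod_cast card_sdiff_add_card_eq_card (dwn_sub x 𝒜 ℬ)
  have e3 : ((dwn x 𝒜 ℬ).card : ℝ) ≤ (del x ℬ).card := by exact_mod_cast dwn_card_le x 𝒜 ℬ
  have u1 := hU _ _ _ (hV.del (x := x))
  have u2 := hU _ _ _ (hV.sta (x := x))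
  generalize ((dwn x 𝒜 ℬ).card : ℝ) = D at *
  generalize (((sta x 𝒜) \ (dwn x 𝒜 ℬ)).card : ℝ) = D1 at *
  generalize ((sta x 𝒜).card : ℝ) = D2 at *
  generalize ((del x 𝒜).card : ℝ) = D3 at *
  generalize ((rst p 𝒜 (sta x ℬ)).card : ℝ) = D4 at *
  generalize ((rst p 𝒜 (del x ℬ)).card : ℝ) = D5 at *
  generalize (𝒜.card : ℝ) = a at *
  generalize ((sta x ℬ).card : ℝ) = s at *
  generalize ((del x ℬ).card : ℝ) = t at *
  have hb0 : (0 : ℝ) < ℬ.card := by linarith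
  generalize (ℬ.card : ℝ) = b at *
  have hn0 := nu_pos (p := p) hb0
  have htb : b / 2 < t := by
    by_contra hc
    push Not at hc
    have h1 := N4 hp ht'.le hs'.le (by linarith) hc hζ hζp
    have h2 : t * nu p b / (4 * p * (p + 1)) ≤ t * (1 + C) := by linarith
    have h3 : t * nu p b / (4 * p * (p + 1)) = 2 * (t * nu p b / C1) := by
      rw [hC1]; field_simp; norm_num
    have h4 : t * (C1 * (1 + C)) / C1 ≤ t * nu p b / C1 := by gcongr
    have h5 : t * (C1 * (1 + C)) / C1 = t * (1 + C) := by field_simp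
    have : 0 < t * (1 + C) := by positivity
    linarith
  have h1 := N4 hp hs'.le ht'.le e4 (by linarith) hζ hζp
  have h3 : s * nu p b / (4 * p * (p + 1)) = 2 * (s * nu p b / C1) := by
    rw [hC1]; field_simp; norm_num
  have h4 : s * (C1 * (1 + C)) / C1 ≤ s * nu p b / C1 := by gcongr
  have h5 : s * (C1 * (1 + C)) / C1 = s * (1 + C) := by field_simp
  have h6 : s * nu p b / C1 ≤ b := by linarith
  have hsC : s ≤ C1 * b / nu p b := by
    rw [div_le_iff₀ hC10] at h6
    rw [le_div_iff₀ hn0]; linarith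
  have hnus := N2a hp hs'.le hb0 hd0 hsC hN2
  have hnut := N2b hp ht'.le hs'.le hb0 e4 hsC
  have h7 := N3 hp ht'.le hb0.le
  have hbt : b - t = s := by linarith
  rw [hbt] at h7
  rw [div_le_iff₀ hd0] at hN3 hN4
  set n := nu p b with hn
  have hKs : Kf p s ≤ s * (d * n) / p := by
    unfold Kf
    have : 0 ≤ nu p s := nu_nonneg hs'.le
    gcongr
    linarith
  set Q := s * n / p with hQ
  have hQ0 : 0 ≤ Q := by positivity
  have g1 : (1 - d) * Q ≤ s * nu p t / p := by
    rw [hQ, mul_div_assoc', ]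
    apply div_le_div_of_nonneg_right _ (by linarith)
    have : (1 - d) * n ≤ nu p t := by linarith
    have := mul_le_mul_of_nonneg_left this hs'.le
    linarith
  have g2 : C * s ≤ d * Q := by
    rw [hQ, mul_div_assoc', le_div_iff₀ (by linarith)]
    have := mul_le_mul_of_nonneg_left hN4 hs'.le
    linarith
  have g3 : Kf p s ≤ d * Q := by
    refine hKs.trans_eq ?_
    rw [hQ]; ring
  have g4 : (1 - ζ) * ((1 - d) * Q) ≤ (1 - ζ) * (Kf p b - Kf p t) := by
    apply mul_le_mul_of_nonneg_left (g1.trans h7); linarith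
  have g5 : (1 + ζ) * Kf p s ≤ 2 * (d * Q) := by
    have := Kf_nonneg (p := p) hs'.le
    apply mul_le_mul (by linarith) g3 this (by norm_num)
  have g6 : ζ * Q ≤ d * Q := by
    apply mul_le_mul_of_nonneg_right _ hQ0; linarith
  have g7 : 0 ≤ ζ * (d * Q) := by positivity
  have hdδ : δ = 8 * d := by rw [hd]; ring
  rw [hdδ]
  have : 0 ≤ d * Q := by positivity
  linarith


lemma cleaning {p : ℕ} (hp : 1 ≤ p) {ζ C : ℝ} (hζ : 0 < ζ) (hC : 0 ≤ C)
    (hU : UB p (ζ ^ 2) C) {r : ℕ} {𝒜 ℬ : Finset (Finset ℕ)} (hV : VP r p 𝒜 ℬ) (hb : 0 < ℬ.card)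
    (hn : C * (p + 1) / ζ ^ 2 ≤ nu p ℬ.card) (ha : (1 - ζ ^ 2) * Kf p ℬ.card ≤ 𝒜.card) :
    ∃ 𝒜0 ⊆ 𝒜, ∃ ℬ0 ⊆ ℬ, VP r p 𝒜0 ℬ0 ∧ Clean p ζ 𝒜0 ℬ0 ∧ (1 - 3 * ζ) * ℬ.card ≤ ℬ0.card := by
  obtain ⟨ℬ0, h0, hmax⟩ := exists_max_image ℬ.powerset
    (fun ℬ' => ((rst p 𝒜 ℬ').card : ℝ) - (1 - ζ) * Kf p ℬ'.card) ⟨ℬ, mem_powerset_self _⟩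
  rw [mem_powerset] at h0
  refine ⟨rst p 𝒜 ℬ0, filter_subset _ _, ℬ0, h0, hV.rst h0, ?_, ?_⟩
  · intro ℬ' h'
    rw [rst_rst h']
    have := hmax ℬ' (mem_powerset.2 (h'.trans h0))
    linarith
  · have h1 := hmax ℬ (mem_powerset_self _)
    rw [hV.rst_self] at h1
    have h2 := hU _ _ _ (hV.rst h0)
    have hle : (ℬ0.card : ℝ) ≤ ℬ.card := by exact_mod_cast card_le_card h0
    have hb' : (0 : ℝ) < ℬ.card := by exact_mod_cast hb
    have hb0 : (0 : ℝ) ≤ ℬ0.card := Nat.cast_nonneg _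
    generalize (ℬ.card : ℝ) = b at *
    generalize (ℬ0.card : ℝ) = b0 at *
    have hn0 := nu_pos (p := p) hb'
    have h3 : C * b0 ≤ ζ ^ 2 * Kf p b := by
      unfold Kf
      rw [div_le_iff₀ (by positivity)] at hn
      have h4 : C * b ≤ ζ ^ 2 * (b * nu p b / (p + 1)) := by
        rw [mul_div_assoc', le_div_iff₀ (by positivity)]
        have := mul_le_mul_of_nonneg_left hn hb'.le
        linarith
      have : C * b0 ≤ C * b := by gcongr
      linarith
    have h5 : ζ * ((1 - 2 * ζ) * Kf p b) ≤ ζ * ((1 + ζ) * Kf p b0) := by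
      linarith
    have h6 := le_of_mul_le_mul_left h5 hζ
    have hK0 := Kf_nonneg (p := p) hb'.le
    have h7 : (1 + ζ) * ((1 - 3 * ζ) * Kf p b) ≤ (1 + ζ) * Kf p b0 := by
      have : 0 ≤ ζ ^ 2 * Kf p b := by positivity
      linarith
    have h8 := le_of_mul_le_mul_left h7 (by linarith)
    have h9 : Kf p b0 ≤ b0 * nu p b / (p + 1) := by
      unfold Kf
      have := nu_mono hp hb0 hle
      gcongr
    have h10 : (1 - 3 * ζ) * b * (nu p b / (p + 1)) ≤ b0 * (nu p b / (p + 1)) := by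
      unfold Kf at h8 h9
      calc _ = (1 - 3 * ζ) * (b * nu p b / (p + 1)) := by ring
        _ ≤ _ := h8.trans h9
        _ = _ := by ring
    exact le_of_mul_le_mul_right h10 (by positivity)

lemma UB.mono {p : ℕ} {η η' C : ℝ} (h : UB p η C) (h' : η ≤ η') : UB p η' C := by
  intro r 𝒜 ℬ hV
  have := h r 𝒜 ℬ hV
  have h2 : 0 ≤ Kf p ℬ.card := Kf_nonneg (Nat.cast_nonneg _)
  have : (1 + η) * Kf p ℬ.card ≤ (1 + η') * Kf p ℬ.card := by gcongr
  linarith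

lemma XC {p : ℕ} (hp : 1 ≤ p) {δ : ℝ} (hδ : 0 < δ) (hδ1 : δ ≤ 1 / 2) : ∃ η > (0 : ℝ), ∀ N : ℝ,
    ∃ b1 : ℕ, ∀ (r : ℕ) (𝒜 ℬ : Finset (Finset ℕ)), VP r p 𝒜 ℬ → b1 ≤ ℬ.card →
      (1 - η) * Kf p ℬ.card ≤ 𝒜.card → ∃ 𝒜0 ⊆ 𝒜, ∃ ℬ0 ⊆ ℬ, ∃ x, VP r p 𝒜0 ℬ0 ∧
        (1 - δ) * ℬ.card ≤ ℬ0.card ∧ N ≤ nu p ℬ0.card ∧ 0 < (sta x ℬ0).card ∧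
        (1 - δ) * ((sta x ℬ0).card * nu p ℬ0.card / p) ≤ (dwn x 𝒜0 ℬ0).card := by
  have hp' : (1 : ℝ) ≤ p := by exact_mod_cast hp
  set ζ : ℝ := min (1 / (32 * p)) (δ / 8) with hζ
  have hζ0 : 0 < ζ := lt_min (by positivity) (by positivity)
  have hζ1 : 32 * p * ζ ≤ 1 := by
    have := (le_div_iff₀ (by positivity)).1 (min_le_left (1 / (32 * (p : ℝ))) (δ / 8))
    linarith
  have hζ2 : ζ ≤ δ / 8 := min_le_right _ _
  obtain ⟨C, hC, hU⟩ := exists_UB hp (η := ζ ^ 2) (by positivity)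
  obtain ⟨N1, hN1⟩ := X_lemma hp hδ (by linarith) hζ0.le hζ1 (by linarith) hC
    (hU.mono (show ζ ^ 2 ≤ ζ by nlinarith))
  refine ⟨ζ ^ 2, by positivity, fun N => ?_⟩
  obtain ⟨b2, hb2⟩ := nu_large hp (max N N1)
  obtain ⟨b3, hb3⟩ := nu_large hp (C * (p + 1) / ζ ^ 2)
  refine ⟨b3 + 2 * b2 + 4, fun r 𝒜 ℬ hV hb ha => ?_⟩
  have hbR : (b3 : ℝ) + 2 * b2 + 4 ≤ ℬ.card := by exact_mod_cast hb
  have g2 : (0 : ℝ) ≤ b2 := Nat.cast_nonneg _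
  have g3 : (0 : ℝ) ≤ b3 := Nat.cast_nonneg _
  obtain ⟨𝒜0, h1, ℬ0, h2, h3, h4, h5⟩ := cleaning hp hζ0 hC hU hV (by omega)
    (hb3 _ (by linarith)) ha
  have h6 : (1 - δ) * ℬ.card ≤ ℬ0.card := by
    refine le_trans ?_ h5
    gcongr; linarith
  have h7 : (b2 : ℝ) + 2 ≤ ℬ0.card := by nlinarith
  have h8 := hb2 ℬ0.card (by linarith)
  obtain ⟨x, hx1, hx2⟩ := hN1 r 𝒜0 ℬ0 h3 h4 (by exact_mod_cast (by linarith : (2 : ℝ) ≤ ℬ0.card))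
    ((le_max_right _ _).trans h8)
  exact ⟨𝒜0, h1, ℬ0, h2, x, h3, h6, (le_max_left _ _).trans h8, hx1, hx2⟩

def Stab (p : ℕ) : Prop := ∀ ε > (0 : ℝ), ∃ η > (0 : ℝ), ∃ b1 : ℕ,
  ∀ (r : ℕ) (𝒜 ℬ : Finset (Finset ℕ)), VP r p 𝒜 ℬ → b1 ≤ ℬ.card →
    (1 - η) * Kf p ℬ.card ≤ 𝒜.card →
    ∃ S : Finset ℕ, S.card + p = r ∧ ((ℬ.filter (fun B => ¬ S ⊆ B)).card : ℝ) ≤ ε * ℬ.card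

/-- counting the good members -/
lemma bad_le {x : ℕ} {S : Finset ℕ} {ℬ : Finset (Finset ℕ)} {G : Finset (Finset ℕ)}
    (hG : ∀ A ∈ G, x ∈ A ∧ A.erase x ∈ ℬ ∧ S ⊆ A.erase x) :
    (ℬ.filter (fun B => ¬ S ⊆ B)).card + G.card ≤ ℬ.card := by
  have h1 := card_filter_add_card_filter_not (s := ℬ) (fun B => S ⊆ B)
  have h2 : G.card ≤ (ℬ.filter (fun B => S ⊆ B)).card := by
    rw [← card_image_of_injOn (erase_injOn x G (fun A hA => (hG A hA).1))]
    apply card_le_card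
    intro B hB
    obtain ⟨A, hA, rfl⟩ := mem_image.1 hB
    exact mem_filter.2 (hG A hA).2
  omega

lemma Stab_one : Stab 1 := by
  intro ε hε
  set δ : ℝ := min (1 / 4) (ε / 4) with hδ
  have hδ0 : 0 < δ := lt_min (by norm_num) (by positivity)
  have hδ1 : δ ≤ 1 / 4 := min_le_left _ _
  have hδ2 : δ ≤ ε / 4 := min_le_right _ _
  obtain ⟨η, hη, hX⟩ := XC le_rfl hδ0 (by linarith)
  obtain ⟨b1, hb1⟩ := hX 1
  refine ⟨η, hη, b1, fun r 𝒜 ℬ hV hb ha => ?_⟩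
  obtain ⟨𝒜0, h1, ℬ0, h2, x, hV0, h3, h4, h5, h6⟩ := hb1 r 𝒜 ℬ hV hb ha
  rw [nu_one] at h4 h6
  have hst := star_add_del x ℬ0
  have hd := dwn_card_le x 𝒜0 ℬ0
  have hs1 : (sta x ℬ0).card = 1 := by
    by_contra hne
    have hs2 : (2 : ℝ) ≤ (sta x ℬ0).card := by exact_mod_cast (by omega : 2 ≤ (sta x ℬ0).card)
    have hd' : ((dwn x 𝒜0 ℬ0).card : ℝ) + 1 ≤ ℬ0.card := by exact_mod_cast (by omega)
    have : (1 - δ) * (2 * (ℬ0.card : ℝ)) ≤ (1 - δ) * ((sta x ℬ0).card * ℬ0.card / (1 : ℕ)) := by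
      push_cast
      rw [div_one]
      have : 0 ≤ 1 - δ := by linarith
      gcongr
    nlinarith
  obtain ⟨B1, hB1⟩ := card_eq_one.1 hs1
  have hB1m : B1 ∈ sta x ℬ0 := by rw [hB1]; simp
  have hB1' := mem_filter.1 hB1m
  refine ⟨B1.erase x, ?_, ?_⟩
  · rw [card_erase_add_one hB1'.2, hV0.2.1 _ hB1'.1]
  · have hG : ∀ A ∈ dwn x 𝒜0 ℬ0, x ∈ A ∧ A.erase x ∈ ℬ ∧ B1.erase x ⊆ A.erase x := by
      intro A hA
      have hA' := mem_filter.1 hA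
      refine ⟨hA'.2.1, h2 hA'.2.2, erase_subset_erase _ ?_⟩
      have hc := hV0.2.2 A hA'.1
      obtain ⟨y, hy, hyx⟩ := exists_mem_ne hc x
      have hy' := mem_filter.1 hy
      have : A.erase y ∈ sta x ℬ0 := mem_filter.2 ⟨hy'.2, mem_erase.2 ⟨hyx.symm, hA'.2.1⟩⟩
      rw [hB1, mem_singleton] at this
      rw [← this]; exact erase_subset _ _
    have hbad := bad_le hG
    have hbad' : ((ℬ.filter (fun B => ¬ B1.erase x ⊆ B)).card : ℝ) + (dwn x 𝒜0 ℬ0).card ≤ ℬ.card := by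
      exact_mod_cast hbad
    rw [hs1] at h6
    push_cast at h6
    have hb0 : (0 : ℝ) ≤ ℬ.card := Nat.cast_nonneg _
    have h7 : (1 - δ) * ((1 - δ) * ℬ.card) ≤ (1 - δ) * ℬ0.card := by
      apply mul_le_mul_of_nonneg_left h3; linarith
    have h8 : δ * ℬ.card ≤ ε / 4 * ℬ.card := by gcongr
    have h9 : 0 ≤ δ * δ * ℬ.card := by positivity
    linarith

lemma St_num {p : ℕ} (hp : 1 ≤ p) {δ C s b D : ℝ} (hδ : 0 < δ) (hδ1 : δ ≤ 1 / 6) (hC : 0 ≤ C)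
    (hs : 0 < s) (hb : 0 < b) (h1 : (1 - δ) * (s * nu (p + 1) b / (p + 1)) ≤ D) (h2 : D ≤ b)
    (h3 : D ≤ (1 + δ) * Kf p s + C * s) (h4 : (p + 1) * C ≤ δ * nu (p + 1) b) :
    (1 - 3 * δ) * nu (p + 1) b ≤ nu p s ∧ (1 - 2 * δ) * Kf p s ≤ D ∧ Kf p s ≤ 4 * b ∧
      C * s ≤ 2 * b ∧ (1 - 4 * p * δ) * b ≤ D := by
  have hp' : (1 : ℝ) ≤ p := by exact_mod_cast hp
  have hn0 := nu_pos (p := p + 1) hb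
  have hm0 := nu_pos (p := p) hs
  have e1 := nu_pow hp hs.le
  have e2 := nu_pow (p := p + 1) (by omega) hb.le
  rw [Nat.factorial_succ] at e2
  push_cast at e2
  unfold Kf at *
  set n := nu (p + 1) b
  set m := nu p s
  have hF : (0 : ℝ) < p.factorial := by positivity
  have hq : (0 : ℝ) < p + 1 := by positivity
  have a1 : (1 - 3 * δ) * n ≤ m := by
    have g1 : (1 - δ) * (s * n / (p + 1)) ≤ (1 + δ) * (s * m / (p + 1)) + C * s := h1.trans h3
    have g2 : s / (p + 1) * ((1 - δ) * n) ≤ s / (p + 1) * ((1 + δ) * m + (p + 1) * C) := by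
      calc _ = (1 - δ) * (s * n / (p + 1)) := by ring
        _ ≤ _ := g1
        _ = _ := by field_simp
    have g3 := le_of_mul_le_mul_left g2 (by positivity)
    have g4 : (1 + δ) * ((1 - 3 * δ) * n) ≤ (1 + δ) * m := by
      have : 0 ≤ δ * δ * n := by positivity
      linarith
    exact le_of_mul_le_mul_left g4 (by linarith)
  -- b in terms of n
  have hbn : b = n ^ p / p.factorial * n / (p + 1) := by
    rw [pow_succ] at e2
    field_simp
    linarith
  have hsm : s = m ^ p / p.factorial := by rw [e1]; field_simp
  have a2 : (1 - δ) * m ≤ n := by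
    have g1 : (1 - δ) * (s * n / (p + 1)) ≤ b := h1.trans h2
    have g2 : (n / (p.factorial * (p + 1))) * ((1 - δ) * m ^ p) ≤ (n / (p.factorial * (p + 1))) * n ^ p := by
      calc _ = (1 - δ) * (s * n / (p + 1)) := by rw [hsm]; field_simp
        _ ≤ b := g1
        _ = _ := by rw [hbn]; field_simp
    have g3 := le_of_mul_le_mul_left g2 (by positivity)
    have g4 : ((1 - δ) * m) ^ p ≤ n ^ p := by
      refine le_trans ?_ g3
      rw [mul_pow]
      have : (1 - δ) ^ p ≤ 1 - δ := pow_le_of_le_one (by linarith) (by linarith) (by omega)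
      gcongr
    exact (pow_le_pow_iff_left₀ (mul_nonneg (by linarith) hm0.le) hn0.le (by omega)).1 g4
  have hQ0 : 0 < s * n / (p + 1) := by positivity
  have hQb : s * n / (p + 1) ≤ 2 * b := by nlinarith
  have hm2 : m ≤ 2 * n := by nlinarith
  refine ⟨a1, ?_, ?_, ?_, ?_⟩
  · refine le_trans ?_ h1
    have : (1 - δ) * (s * ((1 - δ) * m) / (p + 1)) ≤ (1 - δ) * (s * n / (p + 1)) := by
      have : 0 ≤ 1 - δ := by linarith
      gcongr
    refine le_trans ?_ this
    have : 0 ≤ δ * δ * (s * m / (p + 1)) := by positivity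
    have e : (1 - δ) * (s * ((1 - δ) * m) / (p + 1)) = (1 - 2 * δ) * (s * m / (p + 1)) + δ * δ * (s * m / (p + 1)) := by ring
    rw [e]; linarith
  · have : s * m / (p + 1) ≤ s * (2 * n) / (p + 1) := by gcongr
    have e : s * (2 * n) / (p + 1) = 2 * (s * n / (p + 1)) := by ring
    linarith
  · have : s / (p + 1) * ((p + 1) * C) ≤ s / (p + 1) * (δ * n) := by gcongr
    have e1 : s / (p + 1) * ((p + 1) * C) = C * s := by field_simp
    have e2 : s / (p + 1) * (δ * n) = δ * (s * n / (p + 1)) := by ring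
    have e3 : δ * (s * n / (p + 1)) ≤ 1 * (s * n / (p + 1)) := by gcongr; linarith
    linarith
  · have g1 : (1 - 3 * δ) ^ p * b ≤ s * n / (p + 1) := by
      have : ((1 - 3 * δ) * n) ^ p ≤ m ^ p := pow_le_pow_left₀ (mul_nonneg (by linarith) hn0.le) a1 p
      rw [mul_pow] at this
      calc _ = ((1 - 3 * δ) ^ p * n ^ p) * (n / (p.factorial * (p + 1))) := by rw [hbn]; field_simp
        _ ≤ m ^ p * (n / (p.factorial * (p + 1))) := by gcongr
        _ = _ := by rw [hsm]; field_simp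
    have hbern := one_add_mul_le_pow (a := -(3 * δ)) (by linarith) p
    rw [← sub_eq_add_neg] at hbern
    have g2 : (1 - 3 * p * δ) * b ≤ s * n / (p + 1) := by
      refine le_trans ?_ g1
      gcongr
      linarith
    refine le_trans ?_ h1
    have g3 : (1 - δ) * ((1 - 3 * p * δ) * b) ≤ (1 - δ) * (s * n / (p + 1)) := by
      apply mul_le_mul_of_nonneg_left g2; linarith
    refine le_trans ?_ g3
    have : (1 - 4 * p * δ) ≤ (1 - δ) * (1 - 3 * p * δ) := by
      have g4 : δ ≤ p * δ := by nlinarith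
      have : 0 ≤ 3 * p * δ * δ := by positivity
      linarith
    calc _ ≤ (1 - δ) * (1 - 3 * p * δ) * b := by gcongr
      _ = _ := by ring


/-- members not containing S form a valid pair with members of ℬ not containing S -/
lemma VP.bad {r p : ℕ} {𝒜 ℬ : Finset (Finset ℕ)} (h : VP r p 𝒜 ℬ) (S : Finset ℕ) :
    VP r p (𝒜.filter (fun A => ¬ S ⊆ A)) (ℬ.filter (fun B => ¬ S ⊆ B)) := by
  apply h.mono (filter_subset _ _) (filter_subset _ _)
  intro A hA y hy hB
  exact mem_filter.2 ⟨hB, fun hs => (mem_filter.1 hA).2 (hs.trans (erase_subset _ _))⟩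

set_option maxHeartbeats 1000000 in
lemma Stab_step {p : ℕ} (hp : 1 ≤ p) (ih : Stab p) : Stab (p + 1) := by
  have hp' : (1 : ℝ) ≤ p := by exact_mod_cast hp
  intro ε hε
  set ε1 : ℝ := min 1 ε / 20 with hε1
  have hε10 : 0 < ε1 := by have : 0 < min 1 ε := lt_min one_pos hε; positivity
  have hε11 : 20 * ε1 ≤ 1 := by have := min_le_left 1 ε; rw [hε1]; linarith
  have hε12 : 20 * ε1 ≤ ε := by have := min_le_right 1 ε; rw [hε1]; linarith
  obtain ⟨η1, hη1, b1, hst⟩ := ih ε1 hε10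
  set δ : ℝ := min (min (1 / 6) (η1 / 2)) (ε / (10 * p)) with hδ
  have hδ0 : 0 < δ := lt_min (lt_min (by norm_num) (by positivity)) (by positivity)
  have hδ1 : δ ≤ 1 / 6 := (min_le_left _ _).trans (min_le_left _ _)
  have hδ2 : δ ≤ η1 / 2 := (min_le_left _ _).trans (min_le_right _ _)
  have hδ3 : 10 * p * δ ≤ ε := by
    have : δ ≤ ε / (10 * p) := min_le_right _ _
    rw [le_div_iff₀ (by positivity)] at this; linarith
  obtain ⟨C, hC, hU⟩ := exists_UB hp hδ0
  obtain ⟨η, hη, hX⟩ := XC (p := p + 1) (by omega) hδ0 (by linarith)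
  obtain ⟨b2, hb2⟩ := hX (max ((p + 1) * C / δ) (2 * nu p b1 + 1))
  refine ⟨η, hη, b2, fun r 𝒜 ℬ hV hb ha => ?_⟩
  obtain ⟨𝒜0, h1, ℬ0, h2, x, hV0, h3, h4, h5, h6⟩ := hb2 r 𝒜 ℬ hV hb ha
  have hn1 : (p + 1) * C ≤ δ * nu (p + 1) ℬ0.card := by
    have := (le_max_left _ _).trans h4
    rw [div_le_iff₀ hδ0] at this; linarith
  have hn2 : 2 * nu p b1 + 1 ≤ nu (p + 1) ℬ0.card := (le_max_right _ _).trans h4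
  have hstar := star_add_del x ℬ0
  have hdw := dwn_card_le x 𝒜0 ℬ0
  have hs : (0 : ℝ) < (sta x ℬ0).card := by exact_mod_cast h5
  have hb0 : (0 : ℝ) < ℬ0.card := by exact_mod_cast (by omega : 0 < ℬ0.card)
  have hDb : ((dwn x 𝒜0 ℬ0).card : ℝ) ≤ ℬ0.card := by exact_mod_cast (by omega)
  have hDs : ((dwn x 𝒜0 ℬ0).card : ℝ) ≤ (sta x 𝒜0).card := by
    exact_mod_cast card_le_card (dwn_sub x 𝒜0 ℬ0)
  have hL := hV0.lnk (x := x)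
  have hUL := hU _ _ _ hL
  rw [card_lnk, card_lnk] at hUL
  push_cast at h6
  obtain ⟨k1, k2, k3, k4, k5⟩ := St_num hp hδ0 hδ1 hC hs hb0 h6 hDb (hDs.trans hUL) hn1
  have hDpos : (0 : ℝ) < (dwn x 𝒜0 ℬ0).card := by
    refine lt_of_lt_of_le ?_ h6
    have := nu_pos (p := p + 1) hb0
    have : 0 < 1 - δ := by linarith
    positivity
  have hDpos' : 0 < (dwn x 𝒜0 ℬ0).card := by exact_mod_cast hDpos
  have hr : p + 1 ≤ r := by
    obtain ⟨A, hA⟩ := card_pos.1 hDpos'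
    exact hV0.lt ⟨A, (mem_filter.1 hA).1⟩
  have hb1s : b1 ≤ (sta x ℬ0).card := by
    by_contra hc
    push Not at hc
    have hle : nu p (sta x ℬ0).card ≤ nu p b1 := nu_mono hp hs.le (by exact_mod_cast hc.le)
    have hnb : 0 ≤ nu p b1 := nu_nonneg (Nat.cast_nonneg _)
    nlinarith
  obtain ⟨S, hS1, hS2⟩ := hst (r - 1) _ _ hL (by rw [card_lnk]; exact hb1s) (by
    rw [card_lnk, card_lnk]
    refine le_trans ?_ (k2.trans hDs)
    have := Kf_nonneg (p := p) hs.le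
    gcongr; linarith)
  rw [card_lnk] at hS2
  refine ⟨S, by omega, ?_⟩
  -- bad members of the link
  have hbadU := hU _ _ _ (hL.bad S)
  set Q : ℝ := ((filter (fun B => ¬ S ⊆ B) (lnk x ℬ0)).card : ℝ) with hQ
  have hQ0 : 0 ≤ Q := Nat.cast_nonneg _
  have hQs : Q ≤ (sta x ℬ0).card := by nlinarith
  have hKQ : Kf p Q ≤ ε1 * Kf p (sta x ℬ0).card := by
    unfold Kf
    have := nu_mono hp hQ0 hQs
    have h0 := nu_nonneg (p := p) hQ0
    calc Q * nu p Q / (p + 1) ≤ (ε1 * (sta x ℬ0).card) * nu p (sta x ℬ0).card / (p + 1) := by gcongr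
      _ = _ := by ring
  have hbadA : ((filter (fun A => ¬ S ⊆ A) (lnk x 𝒜0)).card : ℝ) ≤ 10 * ε1 * ℬ0.card := by
    have g1 : (1 + δ) * Kf p Q ≤ 2 * (ε1 * (4 * ℬ0.card)) := by
      have h0 := Kf_nonneg (p := p) hQ0
      have : ε1 * Kf p (sta x ℬ0).card ≤ ε1 * (4 * ℬ0.card) := by gcongr
      apply mul_le_mul (by linarith) (by linarith) h0 (by norm_num)
    have g2 : C * Q ≤ ε1 * (2 * ℬ0.card) := by
      calc C * Q ≤ C * (ε1 * (sta x ℬ0).card) := by gcongr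
        _ = ε1 * (C * (sta x ℬ0).card) := by ring
        _ ≤ _ := by gcongr
    linarith
  -- good members
  set G := (dwn x 𝒜0 ℬ0).filter (fun A => S ⊆ A.erase x) with hG
  have hGc : (dwn x 𝒜0 ℬ0).card ≤ G.card + (filter (fun A => ¬ S ⊆ A) (lnk x 𝒜0)).card := by
    rw [← card_filter_add_card_filter_not (s := dwn x 𝒜0 ℬ0) (fun A => S ⊆ A.erase x)]
    apply Nat.add_le_add_left
    rw [← card_image_of_injOn (erase_injOn x ((dwn x 𝒜0 ℬ0).filter (fun A => ¬ S ⊆ A.erase x))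
      (fun A hA => (mem_filter.1 (mem_filter.1 hA).1).2.1))]
    apply card_le_card
    intro B hB
    obtain ⟨A, hA, rfl⟩ := mem_image.1 hB
    have hA' := mem_filter.1 hA
    exact mem_filter.2 ⟨mem_image.2 ⟨A, dwn_sub _ _ _ hA'.1, rfl⟩, hA'.2⟩
  have hbl : (ℬ.filter (fun B => ¬ S ⊆ B)).card + G.card ≤ ℬ.card := by
    apply bad_le (x := x)
    intro A hA
    have hA' := mem_filter.1 hA
    have hA'' := mem_filter.1 hA'.1
    exact ⟨hA''.2.1, h2 hA''.2.2, hA'.2⟩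
  have hGc' : ((dwn x 𝒜0 ℬ0).card : ℝ) ≤ G.card + (filter (fun A => ¬ S ⊆ A) (lnk x 𝒜0)).card := by
    exact_mod_cast hGc
  have hbl' : ((ℬ.filter (fun B => ¬ S ⊆ B)).card : ℝ) + G.card ≤ ℬ.card := by exact_mod_cast hbl
  have hlast : (1 - 4 * p * δ - 10 * ε1) * ℬ0.card ≤ G.card := by linarith
  have hB0 : (0 : ℝ) ≤ ℬ.card := Nat.cast_nonneg _
  have hble : (ℬ0.card : ℝ) ≤ ℬ.card := by exact_mod_cast card_le_card h2
  have g1 : (4 * p * δ + 10 * ε1) * ℬ0.card ≤ (4 * p * δ + 10 * ε1) * ℬ.card := by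
    apply mul_le_mul_of_nonneg_left hble; positivity
  have g2 : δ * ℬ.card ≤ p * δ * ℬ.card := by
    apply mul_le_mul_of_nonneg_right _ hB0; exact le_mul_of_one_le_left hδ0.le hp'
  have g3 : (10 * p * δ) * ℬ.card ≤ ε * ℬ.card := by gcongr
  have g4 : (20 * ε1) * ℬ.card ≤ ε * ℬ.card := by gcongr
  linarith

theorem stab {p : ℕ} (hp : 1 ≤ p) : Stab p := by
  induction p, hp using Nat.le_induction with
  | base => exact Stab_one
  | succ p hp ih => exact Stab_step hp ih


def casc (c : ℕ → ℕ) (X0 : Finset (Finset ℕ)) (e : ℕ) : ℕ → Finset (Finset ℕ)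
  | 0 => X0
  | j + 1 => powersetCard (j + 1 + e) (range (c (j + 1))) ∪
      (casc c X0 e j).image (fun s => insert (c (j + 1)) s)

lemma casc_sub {c : ℕ → ℕ} {X0 : Finset (Finset ℕ)} {e p : ℕ} (hc : StrictMonoOn c (Set.Icc 1 p))
    (hX : ∀ s ∈ X0, s ⊆ range (c 1)) : ∀ j, j < p → ∀ s ∈ casc c X0 e j, s ⊆ range (c (j + 1)) := by
  intro j
  induction j with
  | zero => intro _ s hs; exact hX s hs
  | succ j ih =>
    intro hj s hs
    have hlt : c (j + 1) < c (j + 1 + 1) :=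
      hc (Set.mem_Icc.2 ⟨by omega, by omega⟩) (Set.mem_Icc.2 ⟨by omega, by omega⟩) (by omega)
    have hr : range (c (j + 1)) ⊆ range (c (j + 1 + 1)) := range_subset_range.2 hlt.le
    rw [casc, mem_union] at hs
    rcases hs with hs | hs
    · exact (mem_powersetCard.1 hs).1.trans hr
    · obtain ⟨s0, hs0, rfl⟩ := mem_image.1 hs
      apply insert_subset (mem_range.2 hlt)
      exact (ih (by omega) s0 hs0).trans hr

lemma casc_card {c : ℕ → ℕ} {X0 : Finset (Finset ℕ)} {e p : ℕ} (hc : StrictMonoOn c (Set.Icc 1 p))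
    (hX : ∀ s ∈ X0, s ⊆ range (c 1)) : ∀ j, j ≤ p →
    (casc c X0 e j).card = X0.card + ∑ i ∈ Icc 1 j, (c i).choose (i + e) := by
  intro j
  induction j with
  | zero => intro _; simp [casc]
  | succ j ih =>
    intro hj
    have hsub := casc_sub (e := e) hc hX j (by omega)
    rw [casc, card_union_of_disjoint, card_powersetCard, card_range, card_image_of_injOn,
      ih (by omega), sum_Icc_succ_top (by omega)]
    · ring
    · intro s hs t ht hst
      have h1 : c (j + 1) ∉ s := fun h => by simpa using hsub s hs h
      have h2 : c (j + 1) ∉ t := fun h => by simpa using hsub t ht h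
      simp only at hst
      rw [← erase_insert h1, ← erase_insert h2, hst]
    · rw [disjoint_left]
      intro s hs hs'
      obtain ⟨s0, hs0, rfl⟩ := mem_image.1 hs'
      have := (mem_powersetCard.1 hs).1 (mem_insert_self _ _)
      simp at this

lemma casc_sized {c : ℕ → ℕ} {X0 : Finset (Finset ℕ)} {e p : ℕ} (hc : StrictMonoOn c (Set.Icc 1 p))
    (hX : ∀ s ∈ X0, s ⊆ range (c 1)) (hXe : ∀ s ∈ X0, s.card = e) : ∀ j, j ≤ p →
    ∀ s ∈ casc c X0 e j, s.card = j + e := by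
  intro j
  induction j with
  | zero => intro _ s hs; rw [hXe s hs]; omega
  | succ j ih =>
    intro hj s hs
    have hsub := casc_sub (e := e) hc hX j (by omega)
    rw [casc, mem_union] at hs
    rcases hs with hs | hs
    · exact (mem_powersetCard.1 hs).2
    · obtain ⟨s0, hs0, rfl⟩ := mem_image.1 hs
      have h1 : c (j + 1) ∉ s0 := fun h => by simpa using hsub s0 hs0 h
      rw [card_insert_of_notMem h1, ih (by omega) s0 hs0]; omega

lemma casc_erase {c : ℕ → ℕ} {p : ℕ} (hc : StrictMonoOn c (Set.Icc 1 p)) : ∀ j, j ≤ p →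
    ∀ A ∈ casc c ∅ 1 j, ∀ x ∈ A, A.erase x ∈ casc c ∅ 0 j := by
  intro j
  induction j with
  | zero => intro _ A hA; simp [casc] at hA
  | succ j ih =>
    intro hj A hA x hx
    have hsub := casc_sub (X0 := ∅) (e := 1) hc (by simp) j (by omega)
    rw [casc, mem_union] at hA ⊢
    rcases hA with hA | hA
    · left
      rw [mem_powersetCard] at hA ⊢
      refine ⟨(erase_subset _ _).trans hA.1, ?_⟩
      rw [card_erase_of_mem hx, hA.2]; omega
    · obtain ⟨s0, hs0, rfl⟩ := mem_image.1 hA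
      have h1 : c (j + 1) ∉ s0 := fun h => by simpa using hsub s0 hs0 h
      by_cases hxc : x = c (j + 1)
      · left
        rw [hxc, erase_insert h1, mem_powersetCard]
        exact ⟨hsub s0 hs0, casc_sized (X0 := ∅) hc (by simp) (by simp) j (by omega) s0 hs0⟩
      · right
        have hx0 : x ∈ s0 := (mem_insert.1 hx).resolve_left hxc
        rw [erase_insert_of_ne (Ne.symm hxc)]
        exact mem_image.2 ⟨_, ih (by omega) s0 hs0 x hx0, rfl⟩

lemma casc_VP {c : ℕ → ℕ} {p : ℕ} (hc : StrictMonoOn c (Set.Icc 1 p)) :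
    VP p p (casc c ∅ 1 p) (casc c ∅ 0 p) := by
  have h1 := casc_sized (X0 := ∅) (e := 1) hc (by simp) (by simp) p le_rfl
  refine ⟨h1, casc_sized (X0 := ∅) (e := 0) hc (by simp) (by simp) p le_rfl, fun A hA => ?_⟩
  rw [filter_true_of_mem (casc_erase hc p le_rfl A hA), h1 A hA]; omega

lemma exists_VP_casc {c : ℕ → ℕ} {p : ℕ} (hc : StrictMonoOn c (Set.Icc 1 p)) :
    ∃ 𝒜 ℬ, VP p p 𝒜 ℬ ∧ ℬ.card = ∑ i ∈ Icc 1 p, (c i).choose i ∧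
      𝒜.card = ∑ i ∈ Icc 1 p, (c i).choose (i + 1) :=
  ⟨_, _, casc_VP hc, by simpa using casc_card (X0 := ∅) (e := 0) hc (by simp) p le_rfl,
    by simpa using casc_card (X0 := ∅) (e := 1) hc (by simp) p le_rfl⟩

/-- Kruskal and Katona over ℕ -/
lemma lift_fam {n : ℕ} {X : Finset (Finset ℕ)} (hX : ∀ s ∈ X, s ⊆ range n) :
    ∃ X' : Finset (Finset (Fin n)), X'.image (fun s => s.map Fin.valEmbedding) = X ∧
      X'.card = X.card ∧ ∀ s : Finset (Fin n), s ∈ X' ↔ s.map Fin.valEmbedding ∈ X := by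
  set X' : Finset (Finset (Fin n)) := univ.filter (fun s => s.map Fin.valEmbedding ∈ X) with hX'
  have him : X'.image (fun s => s.map Fin.valEmbedding) = X := by
    ext s
    simp only [hX', mem_image, mem_filter, mem_univ, true_and]
    constructor
    · rintro ⟨t, ht, rfl⟩; exact ht
    · intro hs
      have : (univ.filter (fun i : Fin n => (i : ℕ) ∈ s)).map Fin.valEmbedding = s := by
        ext a
        simp only [mem_map, mem_filter, mem_univ, true_and, Fin.valEmbedding_apply]
        constructor
        · rintro ⟨i, hi, rfl⟩; exact hi
        · intro ha; exact ⟨⟨a, mem_range.1 (hX s hs ha)⟩, ha, rfl⟩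
      exact ⟨_, by rw [this]; exact hs, this⟩
  refine ⟨X', him, ?_, fun s => by simp [hX']⟩
  rw [← him, card_image_of_injective _ (map_injective _)]

lemma shadow_lift {n : ℕ} (X' : Finset (Finset (Fin n))) :
    (X'.shadow).image (fun s => s.map Fin.valEmbedding)
      = (X'.image (fun s => s.map Fin.valEmbedding)).shadow := by
  ext s
  simp only [mem_image, mem_shadow_iff]
  constructor
  · rintro ⟨_, ⟨t, ht, a, ha, rfl⟩, rfl⟩
    refine ⟨_, ⟨t, ht, rfl⟩, (a : ℕ), mem_map.2 ⟨a, ha, rfl⟩, ?_⟩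
    rw [map_erase]; rfl
  · rintro ⟨_, ⟨t, ht, rfl⟩, a, ha, rfl⟩
    obtain ⟨i, hi, rfl⟩ := mem_map.1 ha
    refine ⟨_, ⟨t, ht, i, hi, rfl⟩, ?_⟩
    rw [map_erase]

lemma kk_nat {r : ℕ} {𝒜 𝒞 : Finset (Finset ℕ)} (h𝒜 : (𝒜 : Set (Finset ℕ)).Sized r)
    (hc : 𝒞.card ≤ 𝒜.card) (hi : Finset.Colex.IsInitSeg 𝒞 r) : 𝒞.shadow.card ≤ 𝒜.shadow.card := by
  obtain ⟨n, hn⟩ : ∃ n, ∀ s ∈ 𝒜 ∪ 𝒞, s ⊆ range n := by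
    refine ⟨((𝒜 ∪ 𝒞).sup id).sup id + 1, fun s hs a ha => mem_range.2 (Nat.lt_succ_of_le ?_)⟩
    exact le_sup (f := id) (mem_sup.2 ⟨s, hs, ha⟩)
  obtain ⟨A', hA1, hA2, hA3⟩ := lift_fam (fun s hs => hn s (mem_union_left _ hs))
  obtain ⟨C', hC1, hC2, hC3⟩ := lift_fam (fun s hs => hn s (mem_union_right _ hs))
  have := Finset.kruskal_katona (𝒜 := A') (𝒞 := C') (r := r) ?_ (by omega) ?_
  · rw [← hA1, ← hC1, ← shadow_lift, ← shadow_lift, card_image_of_injective _ (map_injective _),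
      card_image_of_injective _ (map_injective _)]
    exact this
  · intro s hs
    have := h𝒜 ((hA3 s).1 hs)
    rwa [card_map] at this
  · refine ⟨fun s hs => ?_, fun s t hs ht => ?_⟩
    · have := hi.1 ((hC3 s).1 hs)
      rwa [card_map] at this
    · rw [hC3]
      apply hi.2 ((hC3 s).1 hs)
      refine ⟨?_, by rw [card_map]; exact ht.2⟩
      rw [map_eq_image, map_eq_image]
      exact (Finset.Colex.toColex_image_lt_toColex_image Fin.val_strictMono).2 ht.1


lemma casc_initSeg {c : ℕ → ℕ} {p : ℕ} (hc : StrictMonoOn c (Set.Icc 1 p)) (hc1 : 1 ≤ c 1) :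
    ∀ j, j ≤ p → Finset.Colex.IsInitSeg (casc c {{0}} 1 j) (j + 1) := by
  have hX : ∀ s ∈ ({{0}} : Finset (Finset ℕ)), s ⊆ range (c 1) := by
    intro s hs; rw [mem_singleton] at hs; subst hs; simpa using Nat.pos_of_ne_zero (by omega : c 1 ≠ 0)
  intro j hj
  refine ⟨fun s hs => casc_sized hc hX (by simp) j hj s hs, ?_⟩
  induction j with
  | zero =>
    rintro s t hs ⟨ht, ht1⟩
    simp only [casc, mem_singleton] at hs
    subst hs
    rw [Finset.Colex.toColex_lt_singleton] at ht
    obtain ⟨a, rfl⟩ := card_eq_one.1 ht1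
    simpa using ht a (mem_singleton_self a)
  | succ j ih =>
    rintro s t hs ⟨ht, ht1⟩
    have hsub := casc_sub (e := 1) hc hX j (by omega)
    rw [casc, mem_union] at hs ⊢
    rcases hs with hs | hs
    · left
      rw [mem_powersetCard] at hs ⊢
      refine ⟨fun a ha => mem_range.2 ?_, ht1⟩
      exact Finset.Colex.forall_lt_mono ht.le (fun b hb => mem_range.1 (hs.1 hb)) a ha
    · obtain ⟨s0, hs0, rfl⟩ := mem_image.1 hs
      have h1 : c (j + 1) ∉ s0 := fun h => by simpa using hsub s0 hs0 h
      have hle : ∀ a ∈ t, a ≤ c (j + 1) := by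
        apply Finset.Colex.forall_le_mono ht.le
        intro b hb
        rcases mem_insert.1 hb with rfl | hb
        · exact le_rfl
        · exact (mem_range.1 (hsub s0 hs0 hb)).le
      by_cases hct : c (j + 1) ∈ t
      · right
        refine mem_image.2 ⟨t.erase (c (j + 1)), ?_, insert_erase hct⟩
        apply ih (by omega) hs0
        refine ⟨?_, by rw [card_erase_of_mem hct, ht1]; omega⟩
        have := (Finset.Colex.toColex_sdiff_lt_toColex_sdiff (u := {c (j + 1)})
          (singleton_subset_iff.2 hct) (singleton_subset_iff.2 (mem_insert_self _ s0))).2 ht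
        rwa [sdiff_singleton_eq_erase, sdiff_singleton_eq_erase, erase_insert h1] at this
      · left
        rw [mem_powersetCard]
        refine ⟨fun a ha => mem_range.2 (lt_of_le_of_ne (hle a ha) ?_), ht1⟩
        rintro rfl; exact hct ha

lemma casc_shadow {c : ℕ → ℕ} {p : ℕ} (hc : StrictMonoOn c (Set.Icc 1 p)) (hc1 : 1 ≤ c 1) :
    ∀ j, j ≤ p → casc c {∅} 0 j ⊆ (casc c {{0}} 1 j).shadow := by
  have hX : ∀ s ∈ ({{0}} : Finset (Finset ℕ)), s ⊆ range (c 1) := by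
    intro s hs; rw [mem_singleton] at hs; subst hs; simpa using Nat.pos_of_ne_zero (by omega : c 1 ≠ 0)
  intro j
  induction j with
  | zero => intro _; simp [casc]
  | succ j ih =>
    intro hj B hB
    have hsub := casc_sub (e := 1) hc hX j (by omega)
    rw [casc, mem_union] at hB
    rw [mem_shadow_iff]
    simp only [casc, mem_union]
    rcases hB with hB | hB
    · rw [mem_powersetCard] at hB
      by_cases hy : ∃ y ∈ range (c (j + 1)), y ∉ B
      · obtain ⟨y, hy1, hy2⟩ := hy
        refine ⟨insert y B, Or.inl ?_, y, mem_insert_self _ _, erase_insert hy2⟩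
        rw [mem_powersetCard]
        exact ⟨insert_subset hy1 hB.1, by rw [card_insert_of_notMem hy2, hB.2]⟩
      · push Not at hy
        have hBe : B = range (c (j + 1)) := Subset.antisymm hB.1 hy
        have hne : (casc c {{0}} 1 j).Nonempty := by
          rw [← card_pos, casc_card hc hX j (by omega)]; simp
        obtain ⟨s0, hs0⟩ := hne
        have h1 : c (j + 1) ∉ s0 := fun h => by simpa using hsub s0 hs0 h
        have hs : s0 = B := by
          rw [hBe]
          apply eq_of_subset_of_card_le (hsub s0 hs0)
          rw [← hBe, hB.2, casc_sized hc hX (by simp) j (by omega) s0 hs0]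
        refine ⟨insert (c (j + 1)) s0, Or.inr (mem_image_of_mem _ hs0), c (j + 1), mem_insert_self _ _, ?_⟩
        rw [erase_insert h1, hs]
    · obtain ⟨g, hg, rfl⟩ := mem_image.1 hB
      obtain ⟨A, hA, x, hx, rfl⟩ := mem_shadow_iff.1 (ih (by omega) hg)
      have h1 : c (j + 1) ∉ A := fun h => by simpa using hsub A hA h
      refine ⟨insert (c (j + 1)) A, Or.inr (mem_image_of_mem _ hA), x, mem_insert_of_mem hx, ?_⟩
      rw [erase_insert_of_ne]
      rintro rfl; exact h1 hx

lemma kk_casc_aux {c : ℕ → ℕ} {p : ℕ} (hp : 1 ≤ p) (hc : StrictMonoOn c (Set.Icc 1 p)) (hc1 : 1 ≤ c 1)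
    {𝒜 ℬ : Finset (Finset ℕ)} (hV : VP p p 𝒜 ℬ) (hb : ℬ.card ≤ ∑ i ∈ Icc 1 p, (c i).choose i) :
    𝒜.card ≤ ∑ i ∈ Icc 1 p, (c i).choose (i + 1) := by
  by_contra hlt
  push Not at hlt
  have hX : ∀ s ∈ ({{0}} : Finset (Finset ℕ)), s ⊆ range (c 1) := by
    intro s hs; rw [mem_singleton] at hs; subst hs; simpa using Nat.pos_of_ne_zero (by omega : c 1 ≠ 0)
  have hF := casc_card (e := 1) hc hX p le_rfl
  have hG := casc_card (X0 := {∅}) (e := 0) hc (by simp) p le_rfl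
  rw [card_singleton] at hF hG
  have h1 := kk_nat (𝒜 := 𝒜) (r := p + 1) (fun s hs => hV.1 s hs) (by omega) (casc_initSeg hc hc1 p le_rfl)
  have h2 := card_le_card (casc_shadow hc hc1 p le_rfl)
  have h3 : 𝒜.shadow ⊆ ℬ := by
    intro B hB
    obtain ⟨A, hA, x, hx, rfl⟩ := mem_shadow_iff.1 hB
    have h4 := hV.2.2 A hA
    have h5 : A.filter (fun x => A.erase x ∈ ℬ) = A := by
      apply eq_of_subset_of_card_le (filter_subset _ _)
      rw [hV.1 A hA]; exact h4
    rw [← h5] at hx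
    exact (mem_filter.1 hx).2
  have h4 := card_le_card h3
  simp only [add_zero] at hG
  omega

lemma kk_casc {c : ℕ → ℕ} {p : ℕ} (hp : 1 ≤ p) (hc : StrictMonoOn c (Set.Icc 1 p))
    {𝒜 ℬ : Finset (Finset ℕ)} (hV : VP p p 𝒜 ℬ) (hb : ℬ.card ≤ ∑ i ∈ Icc 1 p, (c i).choose i) :
    𝒜.card ≤ ∑ i ∈ Icc 1 p, (c i).choose (i + 1) := by
  have hm : StrictMonoOn (fun i => max (c i) i) (Set.Icc 1 p) := by
    intro i hi j hj hij
    have := hc hi hj hij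
    simp only
    omega
  have h := kk_casc_aux hp hm (by simp) hV (hb.trans (sum_le_sum (fun i _ =>
    Nat.choose_le_choose i (le_max_left _ _))))
  refine h.trans_eq (sum_congr rfl fun i _ => ?_)
  rcases le_total (c i) i with h | h
  · rw [max_eq_right h, Nat.choose_eq_zero_of_lt (by omega), Nat.choose_eq_zero_of_lt (by omega)]
  · rw [max_eq_left h]

lemma VP.map {r p : ℕ} {𝒜 ℬ : Finset (Finset ℕ)} (h : VP r p 𝒜 ℬ) (φ : ℕ ↪ ℕ) :
    VP r p (𝒜.image (fun s => s.map φ)) (ℬ.image (fun s => s.map φ)) := by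
  refine ⟨?_, ?_, ?_⟩
  · intro A1 hA1
    obtain ⟨A, hA, rfl⟩ := mem_image.1 hA1
    rw [card_map]; exact h.1 A hA
  · intro A1 hA1
    obtain ⟨A, hA, rfl⟩ := mem_image.1 hA1
    rw [card_map]; exact h.2.1 A hA
  · intro A1 hA1
    obtain ⟨A, hA, rfl⟩ := mem_image.1 hA1
    refine lt_of_lt_of_le (h.2.2 A hA) ?_
    rw [← card_map φ]
    apply card_le_card
    intro y hy
    obtain ⟨x, hx, rfl⟩ := mem_map.1 hy
    have hx' := mem_filter.1 hx
    refine mem_filter.2 ⟨mem_map_of_mem _ hx'.1, mem_image.2 ⟨_, hx'.2, ?_⟩⟩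
    rw [map_erase]

lemma VP.union {r p : ℕ} {𝒜 ℬ 𝒜' ℬ' : Finset (Finset ℕ)} (h : VP r p 𝒜 ℬ) (h' : VP r p 𝒜' ℬ') :
    VP r p (𝒜 ∪ 𝒜') (ℬ ∪ ℬ') := by
  refine ⟨?_, ?_, ?_⟩
  · intro A hA
    rcases mem_union.1 hA with hA | hA
    · exact h.1 A hA
    · exact h'.1 A hA
  · intro A hA
    rcases mem_union.1 hA with hA | hA
    · exact h.2.1 A hA
    · exact h'.2.1 A hA
  · intro A hA
    rcases mem_union.1 hA with hA | hA
    · exact lt_of_lt_of_le (h.2.2 A hA) (card_le_card (monotone_filter_right _ fun x _ hx => mem_union_left _ hx))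
    · exact lt_of_lt_of_le (h'.2.2 A hA) (card_le_card (monotone_filter_right _ fun x _ hx => mem_union_right _ hx))

noncomputable def gg (p b : ℕ) : ℕ :=
  sSup {a : ℕ | ∃ 𝒜 ℬ : Finset (Finset ℕ), VP p p 𝒜 ℬ ∧ ℬ.card ≤ b ∧ 𝒜.card = a}

lemma gg_bdd {p : ℕ} (hp : 1 ≤ p) (b : ℕ) :
    BddAbove {a : ℕ | ∃ 𝒜 ℬ : Finset (Finset ℕ), VP p p 𝒜 ℬ ∧ ℬ.card ≤ b ∧ 𝒜.card = a} := by
  refine ⟨b.choose 2, ?_⟩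
  rintro a ⟨𝒜, ℬ, h1, h2, rfl⟩
  exact (h1.card_le hp).trans (Nat.choose_le_choose 2 h2)

lemma le_gg {p b : ℕ} (hp : 1 ≤ p) {𝒜 ℬ : Finset (Finset ℕ)} (h : VP p p 𝒜 ℬ) (hb : ℬ.card ≤ b) :
    𝒜.card ≤ gg p b := le_csSup (gg_bdd hp b) ⟨𝒜, ℬ, h, hb, rfl⟩

lemma gg_att {p : ℕ} (hp : 1 ≤ p) (b : ℕ) :
    ∃ 𝒜 ℬ : Finset (Finset ℕ), VP p p 𝒜 ℬ ∧ ℬ.card ≤ b ∧ 𝒜.card = gg p b :=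
  Nat.sSup_mem (s := {a : ℕ | ∃ 𝒜 ℬ : Finset (Finset ℕ), VP p p 𝒜 ℬ ∧ ℬ.card ≤ b ∧ 𝒜.card = a})
    ⟨0, ∅, ∅, ⟨by simp, by simp, by simp⟩, by simp, by simp⟩ (gg_bdd hp b)

lemma gg_mono {p a b : ℕ} (hp : 1 ≤ p) (h : a ≤ b) : gg p a ≤ gg p b := by
  obtain ⟨𝒜, ℬ, h1, h2, h3⟩ := gg_att hp a
  rw [← h3]; exact le_gg hp h1 (h2.trans h)

lemma gg_superadd {p : ℕ} (hp : 1 ≤ p) (a b : ℕ) : gg p a + gg p b ≤ gg p (a + b) := by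
  obtain ⟨𝒜, ℬ, h1, h2, h3⟩ := gg_att hp a
  obtain ⟨𝒜', ℬ', h1', h2', h3'⟩ := gg_att hp b
  set φ : ℕ ↪ ℕ := ⟨fun n => 2 * n, fun a b h => by simp only at h; omega⟩ with hφ
  set ψ : ℕ ↪ ℕ := ⟨fun n => 2 * n + 1, fun a b h => by simp only at h; omega⟩ with hψ
  have hV := (h1.map φ).union (h1'.map ψ)
  have hle := le_gg (b := a + b) hp hV (by
    refine (card_union_le _ _).trans (add_le_add (card_image_le.trans h2) (card_image_le.trans h2')))
  rw [card_union_of_disjoint, card_image_of_injective _ (map_injective _),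
    card_image_of_injective _ (map_injective _), h3, h3'] at hle
  · exact hle
  · rw [disjoint_left]
    intro s hs hs'
    obtain ⟨A, hA, rfl⟩ := mem_image.1 hs
    obtain ⟨A', hA', he⟩ := mem_image.1 hs'
    have : A.Nonempty := by rw [← card_pos, h1.1 A hA]; omega
    obtain ⟨x, hx⟩ := this
    have : φ x ∈ A'.map ψ := by rw [he]; exact mem_map_of_mem _ hx
    obtain ⟨y, hy, hxy⟩ := mem_map.1 this
    change 2 * y + 1 = 2 * x at hxy
    omega

theorem gg_casc {c : ℕ → ℕ} {p : ℕ} (hp : 1 ≤ p) (hc : StrictMonoOn c (Set.Icc 1 p)) :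
    gg p (∑ i ∈ Icc 1 p, (c i).choose i) = ∑ i ∈ Icc 1 p, (c i).choose (i + 1) := by
  apply le_antisymm
  · obtain ⟨𝒜, ℬ, h1, h2, h3⟩ := gg_att hp (∑ i ∈ Icc 1 p, (c i).choose i)
    rw [← h3]
    exact kk_casc hp hc h1 h2
  · obtain ⟨𝒜, ℬ, h1, h2, h3⟩ := exists_VP_casc hc
    rw [← h3]
    exact le_gg hp h1 h2.le


lemma lt_choose_add (p b : ℕ) : b < (b + (p + 1)).choose (p + 1) := by
  induction b with
  | zero => simp
  | succ b ih =>
    rw [show b + 1 + (p + 1) = (b + (p + 1)) + 1 by ring, Nat.choose_succ_succ]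
    have : 0 < (b + (p + 1)).choose p := Nat.choose_pos (by omega)
    simp only [Nat.succ_eq_add_one]
    omega

lemma exists_lvl {p : ℕ} (hp : 1 ≤ p) (b : ℕ) : ∃ c : ℕ, c.choose p ≤ b ∧ b < (c + 1).choose p := by
  obtain ⟨p, rfl⟩ : ∃ p', p = p' + 1 := ⟨p - 1, by omega⟩
  have hex : ∃ c : ℕ, b < c.choose (p + 1) := ⟨_, lt_choose_add p b⟩
  classical
  have h1 := Nat.find_spec hex
  have h0 : Nat.find hex ≠ 0 := by intro h; rw [h] at h1; simp at h1
  obtain ⟨c, hc⟩ := Nat.exists_eq_succ_of_ne_zero h0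
  refine ⟨c, ?_, by rw [hc] at h1; exact h1⟩
  have := Nat.find_min hex (m := c) (by omega)
  omega

lemma casc_ext {c' : ℕ → ℕ} {p c : ℕ} (hc : StrictMonoOn c' (Set.Icc 1 p)) (hlt : c' p < c) (hp : 1 ≤ p) :
    ∃ c'' : ℕ → ℕ, StrictMonoOn c'' (Set.Icc 1 (p + 1)) ∧ c'' (p + 1) = c ∧
      ∀ e, ∑ i ∈ Icc 1 (p + 1), (c'' i).choose (i + e)
        = (c).choose (p + 1 + e) + ∑ i ∈ Icc 1 p, (c' i).choose (i + e) := by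
  refine ⟨fun i => if i ≤ p then c' i else c, ?_, by simp, ?_⟩
  · intro i hi j hj hij
    rw [Set.mem_Icc] at hi hj
    simp only
    rw [if_pos (by omega)]
    split_ifs with h
    · exact hc ⟨hi.1, by omega⟩ ⟨hj.1, h⟩ hij
    · refine lt_of_le_of_lt ?_ hlt
      rcases (show i ≤ p by omega).lt_or_eq with h' | h'
      · exact (hc ⟨hi.1, by omega⟩ ⟨hp, le_rfl⟩ h').le
      · rw [h']
  · intro e
    rw [sum_Icc_succ_top (by omega), add_comm]
    congr 1
    · simp
    · apply sum_congr rfl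
      intro i hi
      simp only
      rw [if_pos (mem_Icc.1 hi).2]

lemma lt_of_choose_lt {a b k : ℕ} (h : a.choose k < b.choose k) : a < b := by
  by_contra hc
  push Not at hc
  exact absurd (Nat.choose_le_choose k hc) (by omega)

lemma exists_casc {p : ℕ} (hp : 1 ≤ p) : ∀ b : ℕ, ∃ c : ℕ → ℕ, StrictMonoOn c (Set.Icc 1 p) ∧
    b = ∑ i ∈ Icc 1 p, (c i).choose i := by
  induction p, hp using Nat.le_induction with
  | base =>
    intro b
    refine ⟨fun _ => b, ?_, by simp⟩
    intro i hi j hj hij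
    rw [Set.mem_Icc] at hi hj
    omega
  | succ p hp ih =>
    intro b
    obtain ⟨c, h1, h2⟩ := exists_lvl (p := p + 1) (by omega) b
    rw [Nat.choose_succ_succ] at h2
    obtain ⟨c', hc', hb⟩ := ih (b - c.choose (p + 1))
    have hle : (c' p).choose p ≤ ∑ i ∈ Icc 1 p, (c' i).choose i :=
      single_le_sum (f := fun i => (c' i).choose i) (fun _ _ => Nat.zero_le _) (mem_Icc.2 ⟨hp, le_rfl⟩)
    have hlt : c' p < c := lt_of_choose_lt (k := p) (by simp only [Nat.succ_eq_add_one] at h2; omega)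
    obtain ⟨c'', g1, g2, g3⟩ := casc_ext hc' hlt hp
    refine ⟨c'', g1, ?_⟩
    have := g3 0
    simp only [add_zero] at this
    omega

lemma gg_zero {p : ℕ} (hp : 1 ≤ p) : gg p 0 = 0 := by
  obtain ⟨𝒜, ℬ, h1, h2, h3⟩ := gg_att hp 0
  have := h1.card_le hp
  have h4 : ℬ.card = 0 := by omega
  rw [h4] at this
  simp at this
  rw [← h3, this]; simp

lemma gg_choose {p : ℕ} (hp : 1 ≤ p) (c : ℕ) : gg p (c.choose p) = c.choose (p + 1) := by
  by_cases h : c < p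
  · rw [Nat.choose_eq_zero_of_lt h, Nat.choose_eq_zero_of_lt (by omega), gg_zero hp]
  push Not at h
  have hm : StrictMonoOn (fun i => if i < p then i - 1 else c) (Set.Icc 1 p) := by
    intro i hi j hj hij
    rw [Set.mem_Icc] at hi hj
    simp only
    split_ifs <;> omega
  have := gg_casc hp hm
  have key : ∀ e, ∑ i ∈ Icc 1 p, (if i < p then i - 1 else c).choose (i + e) = c.choose (p + e) := by
    intro e
    rw [sum_eq_single p]
    · simp
    · intro i hi hne
      rw [mem_Icc] at hi
      rw [if_pos (by omega), Nat.choose_eq_zero_of_lt (by omega)]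
    · intro hne; exact absurd (mem_Icc.2 ⟨hp, le_rfl⟩) hne
  have k0 := key 0
  simp only [add_zero] at k0
  rw [k0, key 1] at this
  exact this

lemma gg_step {p : ℕ} (hp : 1 ≤ p) {c s : ℕ} (hs : s ≤ c.choose p) :
    gg (p + 1) (c.choose (p + 1) + s) = c.choose (p + 2) + gg p s := by
  rcases hs.lt_or_eq with hs | hs
  · obtain ⟨c', hc', hb⟩ := exists_casc hp s
    have hle : (c' p).choose p ≤ ∑ i ∈ Icc 1 p, (c' i).choose i :=
      single_le_sum (f := fun i => (c' i).choose i) (fun _ _ => Nat.zero_le _) (mem_Icc.2 ⟨hp, le_rfl⟩)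
    have hlt : c' p < c := lt_of_choose_lt (k := p) (by omega)
    obtain ⟨c'', g1, g2, g3⟩ := casc_ext hc' hlt hp
    have h0 := g3 0
    simp only [add_zero] at h0
    rw [hb, ← h0, gg_casc (by omega) g1, g3 1, gg_casc hp hc']
  · rw [hs, gg_choose hp]
    have := gg_choose (p := p + 1) (by omega) (c + 1)
    rw [Nat.choose_succ_succ, Nat.choose_succ_succ] at this
    simp only [Nat.succ_eq_add_one] at this
    rw [add_comm (c.choose (p + 1)), this, add_comm]

/-- gain lemma -/
lemma gg_gain {p : ℕ} (hp : 1 ≤ p) {c b u : ℕ} (h1 : c.choose (p + 1) ≤ b)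
    (h2 : b < (c + 1).choose (p + 1)) (hu : u ≤ c.choose p) :
    gg (p + 1) b + gg p (u / 2) ≤ gg (p + 1) (b + u) := by
  rw [Nat.choose_succ_succ] at h2
  simp only [Nat.succ_eq_add_one] at h2
  obtain ⟨s, rfl⟩ : ∃ s, b = c.choose (p + 1) + s := ⟨b - c.choose (p + 1), by omega⟩
  have hs : s < c.choose p := by omega
  rw [gg_step hp hs.le]
  by_cases hov : s + u ≤ c.choose p
  · rw [add_assoc (c.choose (p + 1)) s u, gg_step hp hov]
    have := gg_superadd hp s u
    have := gg_mono hp (show u / 2 ≤ u by omega)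
    omega
  · push Not at hov
    -- overflow
    obtain ⟨w, hw⟩ : ∃ w, s + u = c.choose p + w := ⟨s + u - c.choose p, by omega⟩
    have e1 : c.choose (p + 1) + s + u = (c + 1).choose (p + 1) + w := by
      rw [Nat.choose_succ_succ]; simp only [Nat.succ_eq_add_one]; omega
    have hw2 : w ≤ (c + 1).choose p := by
      have : c.choose p ≤ (c + 1).choose p := Nat.choose_le_choose p (by omega)
      omega
    rw [e1, gg_step hp hw2]
    have e2 : (c + 1).choose (p + 2) = c.choose (p + 1) + c.choose (p + 2) := by
      rw [Nat.choose_succ_succ]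
    have e3 : gg p (c.choose p) = c.choose (p + 1) := gg_choose hp c
    have e4 := gg_superadd hp s (c.choose p - s)
    rw [show s + (c.choose p - s) = c.choose p by omega, e3] at e4
    rcases le_total (u / 2) (c.choose p - s) with hh | hh
    · have := gg_mono hp hh; omega
    · have := gg_mono hp (show u / 2 ≤ w by omega)
      have := gg_mono hp (show s ≤ c.choose p by omega)
      omega


lemma lvl_large (p c0 : ℕ) {b c : ℕ} (hb : c0.choose p ≤ b) (h : b < (c + 1).choose p) : c0 ≤ c := by
  have := lt_of_choose_lt (lt_of_le_of_lt hb h)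
  omega

lemma fact_choose_le (p n : ℕ) : (p.factorial : ℝ) * (n.choose p) ≤ (n : ℝ) ^ p := by
  have h : p.factorial * n.choose p ≤ n ^ p := by
    rw [← Nat.descFactorial_eq_factorial_mul_choose]
    exact Nat.descFactorial_le_pow n p
  exact_mod_cast h

lemma le_fact_choose {p n : ℕ} (h : p ≤ n) : ((n : ℝ) + 1 - p) ^ p ≤ (p.factorial : ℝ) * (n.choose p) := by
  have h1 : (n + 1 - p) ^ p ≤ p.factorial * n.choose p := by
    rw [← Nat.descFactorial_eq_factorial_mul_choose]
    exact Nat.pow_sub_le_descFactorial n p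
  have h2 : ((n + 1 - p : ℕ) : ℝ) = (n : ℝ) + 1 - p := by
    rw [Nat.cast_sub (by omega)]; push_cast; ring
  rw [← h2]
  exact_mod_cast h1

lemma gg_lower {p : ℕ} (hp : 1 ≤ p) {η : ℝ} (hη : 0 < η) :
    ∃ b2 : ℕ, ∀ b : ℕ, b2 ≤ b → (1 - η) * Kf p b ≤ gg p b := by
  obtain ⟨c0, hc0⟩ := exists_nat_ge ((2 * p + 1) / η)
  refine ⟨(max c0 (p + 1)).choose p, fun b hb => ?_⟩
  obtain ⟨c, h1, h2⟩ := exists_lvl hp b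
  have hc := lvl_large p _ hb h2
  have hcp : p + 1 ≤ c := le_trans (le_max_right _ _) hc
  have hc0' : c0 ≤ c := le_trans (le_max_left _ _) hc
  have hg := gg_mono hp h1
  rw [gg_choose hp] at hg
  have hg' : ((c.choose (p + 1) : ℕ) : ℝ) ≤ gg p b := by exact_mod_cast hg
  refine le_trans ?_ hg'
  have hb0 : (0 : ℝ) ≤ b := Nat.cast_nonneg b
  have h2' : (b : ℝ) ≤ (c + 1).choose p := by exact_mod_cast h2.le
  have hnu : nu p b ≤ c + 1 := by
    apply nu_le hp hb0 (by positivity)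
    have := fact_choose_le p (c + 1)
    push_cast at this
    refine le_trans ?_ this
    gcongr
  have hn0 := nu_nonneg (p := p) hb0
  have e1 : (c.choose (p + 1) : ℝ) * (p + 1) = c.choose p * ((c : ℝ) - p) := by
    have := Nat.choose_succ_right_eq c p
    rw [← Nat.cast_sub (by omega)]
    exact_mod_cast this
  have e2 : (c.choose p : ℝ) * (c + 1) = (c + 1).choose p * ((c : ℝ) + 1 - p) := by
    have := Nat.choose_mul_succ_eq c p
    have e : ((c + 1 - p : ℕ) : ℝ) = (c : ℝ) + 1 - p := by
      rw [Nat.cast_sub (by omega)]; push_cast; ring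
    rw [← e]
    exact_mod_cast this
  have hcp' : (p : ℝ) + 1 ≤ c := by exact_mod_cast hcp
  have hp' : (1 : ℝ) ≤ p := by exact_mod_cast hp
  have hx : (2 * p + 1) ≤ η * ((c : ℝ) + 1) := by
    rw [div_le_iff₀ hη] at hc0
    have : (c0 : ℝ) ≤ c := by exact_mod_cast hc0'
    nlinarith
  have hK : Kf p b ≤ (c + 1).choose p * ((c : ℝ) + 1) / (p + 1) := by
    unfold Kf; gcongr
  have hK0 : 0 ≤ Kf p b := Kf_nonneg hb0
  set x : ℝ := (c : ℝ) + 1 with hxd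
  have hx0 : 0 < x := by positivity
  have hq : (1 - η) * x ^ 2 ≤ (x - p) * (c - p) := by
    have : (c : ℝ) = x - 1 := by rw [hxd]; ring
    rw [this]; nlinarith
  have hpos : 0 < x ^ 2 := by positivity
  have h3 : Kf p b * ((x - p) * (c - p)) ≤ c.choose (p + 1) * x ^ 2 := by
    have hnn : 0 ≤ (x - p) * (c - p) := mul_nonneg (by linarith) (by linarith)
    calc Kf p b * ((x - p) * (c - p)) ≤ ((c + 1).choose p * x / (p + 1)) * ((x - p) * (c - p)) := by gcongr
      _ = ((c + 1).choose p * (x - p)) * (x * (c - p)) / (p + 1) := by ring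
      _ = (c.choose p * (c - p)) * x ^ 2 / (p + 1) := by rw [← e2]; ring
      _ = _ := by rw [← e1]; field_simp
  have h4 : (1 - η) * Kf p b * x ^ 2 ≤ c.choose (p + 1) * x ^ 2 := by
    refine le_trans ?_ h3
    nlinarith
  exact le_of_mul_le_mul_right h4 hpos

lemma gg_half_lower {p : ℕ} (hp : 1 ≤ p) :
    ∃ y0 : ℕ, ∀ y : ℕ, y0 ≤ y → (y : ℝ) * nu p y / (18 * (p + 1)) ≤ gg p (y / 2) := by
  obtain ⟨b2, hb2⟩ := gg_lower hp (η := 1 / 2) (by norm_num)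
  refine ⟨2 * b2 + 3, fun y hy => ?_⟩
  have h1 := hb2 (y / 2) (by omega)
  refine le_trans ?_ h1
  have hy0 : (0 : ℝ) < y := by exact_mod_cast (show 0 < y by omega)
  have h3 : (y : ℝ) / 3 ≤ ((y / 2 : ℕ) : ℝ) := by
    have : y ≤ 3 * (y / 2) := by omega
    have : (y : ℝ) ≤ 3 * ((y / 2 : ℕ) : ℝ) := by exact_mod_cast this
    linarith
  have h4 : nu p y / 3 ≤ nu p ((y / 2 : ℕ) : ℝ) := by
    have a := nu_scale hp (t := (y : ℝ) / 3) (b := y) (by positivity) hy0 (by linarith)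
    have b := nu_mono hp (by positivity) h3
    refine le_trans (le_of_eq ?_) (a.trans b)
    field_simp
  have h5 := nu_nonneg (p := p) hy0.le
  unfold Kf
  calc (y : ℝ) * nu p y / (18 * (p + 1)) = (1 - 1 / 2) * ((y : ℝ) / 3 * (nu p y / 3) / (p + 1)) := by
        field_simp; ring
    _ ≤ _ := by gcongr

lemma gg_chunks {p : ℕ} (hp : 1 ≤ p) {c N : ℕ} (h1 : c.choose (p + 1) ≤ N) (m : ℕ) :
    gg (p + 1) N + m * gg p (c.choose p / 2) ≤ gg (p + 1) (N + m * c.choose p) := by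
  induction m with
  | zero => simp
  | succ m ih =>
    obtain ⟨c', g1, g2⟩ := exists_lvl (p := p + 1) (by omega) (N + m * c.choose p)
    have hc : c ≤ c' := lvl_large (p + 1) c (by omega) g2
    have := gg_gain hp g1 g2 (u := c.choose p) (Nat.choose_le_choose p hc)
    rw [show N + (m + 1) * c.choose p = N + m * c.choose p + c.choose p by ring]
    have e : (m + 1) * gg p (c.choose p / 2) = m * gg p (c.choose p / 2) + gg p (c.choose p / 2) := by ring
    omega

lemma nu_succ_le {p : ℕ} (hp : 1 ≤ p) {δ : ℝ} (hδ : 0 < δ) {y : ℝ} (hy : 0 ≤ y)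
    (h : (p + 1) / δ ^ (p + 1) ≤ nu p y) : nu (p + 1) y ≤ δ * nu p y := by
  have hn := nu_nonneg (p := p) hy
  apply nu_le (by omega) hy (by positivity)
  rw [← nu_pow (by omega) hy, nu_level hp hy, mul_pow]
  rw [div_le_iff₀ (by positivity)] at h
  calc (p + 1) * nu p y ^ p ≤ (nu p y * δ ^ (p + 1)) * nu p y ^ p := by gcongr
    _ = _ := by ring

set_option maxHeartbeats 800000 in
lemma gain_main {p : ℕ} (hp : 1 ≤ p) {C : ℝ} (hC : 0 ≤ C) :
    ∃ ε : ℝ, 0 < ε ∧ ε ≤ 1 / 2 ∧ ∃ b2 q0 : ℕ, ∀ b q : ℕ, b2 ≤ b → q0 ≤ q → (q : ℝ) ≤ ε * b →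
      C * q + 2 * Kf (p + 1) q + gg (p + 1) (b - q) ≤ gg (p + 1) b := by
  obtain ⟨y0, hy0⟩ := gg_half_lower hp
  have hp' : (1 : ℝ) ≤ p := by exact_mod_cast hp
  set κ : ℝ := 1 / (18 * (p + 1)) with hκ
  have hκ0 : 0 < κ := by positivity
  have hκ1 : κ ≤ 1 := by
    rw [hκ, div_le_one (by positivity)]; linarith
  set δ : ℝ := κ / 16 with hδ
  have hδ0 : 0 < δ := by positivity
  have hδ1 : δ ≤ 1 := by linarith
  obtain ⟨n0, hn0⟩ := nu_large hp (max (4 * C / κ) ((p + 1) / δ ^ (p + 1)))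
  obtain ⟨c0, hc0⟩ := exists_nat_ge (max ((n0 : ℝ) + p) (max ((y0 : ℝ) + p) (2 * p)))
  have hlow : ∀ y : ℕ, y0 ≤ y → (y : ℝ) * nu p y * κ ≤ gg p (y / 2) := by
    intro y hy
    refine le_trans (le_of_eq ?_) (hy0 y hy)
    rw [hκ]; ring
  refine ⟨δ ^ (p + 1) / 2, by positivity, ?_, 2 * c0.choose (p + 1), max n0 y0, ?_⟩
  · have : δ ^ (p + 1) ≤ 1 := pow_le_one₀ hδ0.le hδ1
    linarith
  intro b q hb hq hqb
  have hpow1 : δ ^ (p + 1) ≤ 1 := pow_le_one₀ hδ0.le hδ1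
  have hb0 : (0 : ℝ) ≤ b := Nat.cast_nonneg b
  have hq0 : (0 : ℝ) ≤ q := Nat.cast_nonneg q
  have hqb2 : 2 * (q : ℝ) ≤ b := by nlinarith
  have hqb3 : 2 * q ≤ b := by exact_mod_cast hqb2
  obtain ⟨N, rfl⟩ : ∃ N, b = N + q := ⟨b - q, by omega⟩
  rw [Nat.add_sub_cancel]
  obtain ⟨c, h1, h2⟩ := exists_lvl (p := p + 1) (by omega) N
  have hcc : c0 ≤ c := lvl_large (p + 1) c0 (by omega) h2
  have hcr : (c0 : ℝ) ≤ c := by exact_mod_cast hcc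
  have hcn : (n0 : ℝ) + p ≤ c := (le_max_left _ _).trans (hc0.trans hcr)
  have hcy : (y0 : ℝ) + p ≤ c := (le_max_left _ _).trans ((le_max_right _ _).trans (hc0.trans hcr))
  have hc2 : 2 * (p : ℝ) ≤ c := (le_max_right _ _).trans ((le_max_right _ _).trans (hc0.trans hcr))
  have hc2' : 2 * p ≤ c := by exact_mod_cast hc2
  -- M
  have hMc : c ≤ c.choose p + p := by
    obtain ⟨p', rfl⟩ : ∃ p', p = p' + 1 := ⟨p - 1, by omega⟩
    obtain ⟨d, rfl⟩ : ∃ d, c = d + (p' + 1) := ⟨c - (p' + 1), by omega⟩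
    have := lt_choose_add p' d
    omega
  have hMr : (c : ℝ) ≤ c.choose p + p := by exact_mod_cast hMc
  have key : ∀ n w : ℝ, 4 * C / κ ≤ n → w ≤ κ / 8 * n → 
      C * q + 2 * (q * w / ((p + 1 : ℕ) + 1)) ≤ q * (n * κ / 2) := by
    intro n w hn hw
    have a1 : 4 * C ≤ n * κ := by rwa [div_le_iff₀ hκ0] at hn
    have a2 : q * w / (((p + 1 : ℕ) : ℝ) + 1) ≤ q * (κ / 8 * n) := by
      have hh : 0 ≤ κ / 8 * n := by
        have : 0 ≤ 4 * C / κ := by positivity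
        have : 0 ≤ n := this.trans hn
        positivity
      rw [div_le_iff₀ (by positivity)]
      push_cast
      have : q * w ≤ q * (κ / 8 * n) := by gcongr
      have : 0 ≤ q * (κ / 8 * n) := by positivity
      nlinarith
    nlinarith
  rcases le_or_gt q (c.choose p) with hqM | hqM
  · have g := gg_gain hp h1 h2 hqM
    have g' : (gg (p + 1) N : ℝ) + gg p (q / 2) ≤ gg (p + 1) (N + q) := by exact_mod_cast g
    have l := hlow q ((le_max_right _ _).trans hq)
    have hqn : (n0 : ℝ) ≤ q := by exact_mod_cast (le_max_left _ _).trans hq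
    have hn := hn0 q hqn
    have hnn := nu_nonneg (p := p) hq0
    have w := nu_succ_le hp hδ0 hq0 ((le_max_right _ _).trans hn)
    have k := key (nu p q) (nu (p + 1) q) ((le_max_left _ _).trans hn) (w.trans (by rw [hδ]; nlinarith [mul_nonneg hκ0.le hnn]))
    have : q * (nu p q * κ / 2) ≤ (q : ℝ) * nu p q * κ := by
      have : 0 ≤ (q : ℝ) * nu p q * κ := by positivity
      linarith
    unfold Kf
    linarith
  · set M := c.choose p with hM
    have hMpos : 0 < M := by
      rw [hM]; exact Nat.choose_pos (by omega)
    have hM0 : (0 : ℝ) < M := by exact_mod_cast hMpos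
    have g := gg_chunks hp h1 (q / M)
    rw [← hM] at g
    have g2 := gg_mono (p := p + 1) (by omega) (show N + q / M * M ≤ N + q by
      have := Nat.div_mul_le_self q M; omega)
    have g' : (gg (p + 1) N : ℝ) + (q / M : ℕ) * gg p (M / 2) ≤ gg (p + 1) (N + q) := by
      exact_mod_cast g.trans g2
    have hm : (q : ℝ) ≤ 2 * M * ((q / M : ℕ) : ℝ) := by
      have h1 : 1 ≤ q / M := (Nat.one_le_div_iff hMpos).2 hqM.le
      have h2 := Nat.lt_div_mul_add (a := q) hMpos
      have : q ≤ 2 * M * (q / M) := by nlinarith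
      exact_mod_cast this
    have hyM : (y0 : ℝ) ≤ M := by linarith
    have l := hlow M (by exact_mod_cast hyM)
    have hn := hn0 M (by linarith)
    have hnn := nu_nonneg (p := p) hM0.le
    have hnuM : ((c : ℝ) + 1) / 2 ≤ nu p M := by
      apply le_nu hp hM0.le (by positivity)
      refine le_trans ?_ (le_fact_choose (by omega))
      gcongr
      linarith
    have w : nu (p + 1) q ≤ δ * (c + 1) := by
      apply nu_le (by omega) hq0 (by positivity)
      have f1 := fact_choose_le (p + 1) (c + 1)
      have f2 : (N : ℝ) ≤ (c + 1).choose (p + 1) := by exact_mod_cast h2.le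
      have f3 : (q : ℝ) ≤ δ ^ (p + 1) * N := by
        push_cast at hqb hqb2
        have : (N : ℝ) + q ≤ 2 * N := by linarith
        have h0 : 0 ≤ δ ^ (p + 1) := by positivity
        nlinarith
      rw [mul_pow]
      push_cast at f1
      calc ((p + 1).factorial : ℝ) * q ≤ (p + 1).factorial * (δ ^ (p + 1) * (c + 1).choose (p + 1)) := by
            gcongr
            refine f3.trans ?_
            gcongr
        _ = δ ^ (p + 1) * ((p + 1).factorial * (c + 1).choose (p + 1)) := by ring
        _ ≤ _ := by gcongr
    have hw2 : δ * ((c : ℝ) + 1) ≤ κ / 8 * nu p M := by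
      rw [hδ]
      have := mul_le_mul_of_nonneg_left hnuM (show 0 ≤ κ / 8 by positivity)
      linarith
    have k := key (nu p M) (nu (p + 1) q) ((le_max_left _ _).trans hn) (w.trans hw2)
    have : q * (nu p M * κ / 2) ≤ ((q / M : ℕ) : ℝ) * gg p (M / 2) := by
      calc q * (nu p M * κ / 2) ≤ (2 * M * ((q / M : ℕ) : ℝ)) * (nu p M * κ / 2) := by gcongr
        _ = ((q / M : ℕ) : ℝ) * (M * nu p M * κ) := by ring
        _ ≤ _ := by gcongr
    unfold Kf
    linarith


lemma sdiff_inj_of_sup {S A B : Finset ℕ} (hA : S ⊆ A) (hB : S ⊆ B) (h : A \ S = B \ S) : A = B := by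
  rw [← sdiff_union_of_subset hA, ← sdiff_union_of_subset hB, h]

lemma VP.split {r p : ℕ} {𝒜 ℬ : Finset (Finset ℕ)} (h : VP r p 𝒜 ℬ) (hp : 1 ≤ p) {S : Finset ℕ}
    (hS : S.card + p = r) :
    𝒜.card ≤ (𝒜.filter (fun A => ¬ S ⊆ A)).card + (ℬ.filter (fun B => ¬ S ⊆ B)).card
      + gg p (ℬ.card - (ℬ.filter (fun B => ¬ S ⊆ B)).card) := by
  classical
  obtain ⟨hA, hB, hV⟩ := h
  set 𝒢 := 𝒜.filter (fun A => S ⊆ A) with h𝒢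
  set 𝒢1 := 𝒢.filter (fun A => ∃ y ∈ S, A.erase y ∈ ℬ) with h𝒢1
  set 𝒢2 := 𝒢.filter (fun A => ¬ ∃ y ∈ S, A.erase y ∈ ℬ) with h𝒢2
  have c1 : 𝒢.card + (𝒜.filter (fun A => ¬ S ⊆ A)).card = 𝒜.card := card_filter_add_card_filter_not _
  have c2 : 𝒢1.card + 𝒢2.card = 𝒢.card := card_filter_add_card_filter_not _
  have c3 : (ℬ.filter (fun B => S ⊆ B)).card + (ℬ.filter (fun B => ¬ S ⊆ B)).card = ℬ.card :=
    card_filter_add_card_filter_not _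
  have b1 : 𝒢1.card ≤ (ℬ.filter (fun B => ¬ S ⊆ B)).card := by
    refine le_trans (card_le_card ?_) (card_image_le (f := fun B => B ∪ S))
    intro A hAm
    simp only [h𝒢1, h𝒢, mem_filter] at hAm
    obtain ⟨⟨-, hSA⟩, y, hy, hyB⟩ := hAm
    refine mem_image.2 ⟨A.erase y, mem_filter.2 ⟨hyB, fun hs => ?_⟩, ?_⟩
    · exact notMem_erase y A (hs hy)
    · ext z
      simp only [mem_union, mem_erase]
      constructor
      · rintro (hz | hz)
        · exact hz.2
        · exact hSA hz
      · intro hz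
        by_cases e : z = y
        · right; rw [e]; exact hy
        · exact Or.inl ⟨e, hz⟩
  have b2 : 𝒢2.card ≤ gg p (ℬ.filter (fun B => S ⊆ B)).card := by
    have hi : (𝒢2.image (fun A => A \ S)).card = 𝒢2.card := by
      apply card_image_of_injOn
      intro A hA1 B hB1 hAB
      simp only [h𝒢2, h𝒢, mem_coe, mem_filter] at hA1 hB1
      exact sdiff_inj_of_sup hA1.1.2 hB1.1.2 hAB
    rw [← hi]
    apply le_gg hp (ℬ := (ℬ.filter (fun B => S ⊆ B)).image (fun B => B \ S)) ?_ card_image_le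
    refine ⟨?_, ?_, ?_⟩
    · intro A' hA'
      obtain ⟨A, hAm, rfl⟩ := mem_image.1 hA'
      simp only [h𝒢2, h𝒢, mem_filter] at hAm
      rw [card_sdiff_of_subset hAm.1.2, hA A hAm.1.1]; omega
    · intro B' hB'
      obtain ⟨B, hBm, rfl⟩ := mem_image.1 hB'
      rw [mem_filter] at hBm
      rw [card_sdiff_of_subset hBm.2, hB B hBm.1]; omega
    · intro A' hA'
      obtain ⟨A, hAm, rfl⟩ := mem_image.1 hA'
      simp only [h𝒢2, h𝒢, mem_filter] at hAm
      refine lt_of_lt_of_le (hV A hAm.1.1) (card_le_card ?_)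
      intro x hx
      rw [mem_filter] at hx
      have hxS : x ∉ S := fun hxS => hAm.2 ⟨x, hxS, hx.2⟩
      refine mem_filter.2 ⟨mem_sdiff.2 ⟨hx.1, hxS⟩, mem_image.2 ⟨A.erase x, mem_filter.2 ⟨hx.2, ?_⟩, ?_⟩⟩
      · exact subset_erase.2 ⟨hAm.1.2, hxS⟩
      · ext z; simp only [mem_sdiff, mem_erase]; tauto
  have e : ℬ.card - (ℬ.filter (fun B => ¬ S ⊆ B)).card = (ℬ.filter (fun B => S ⊆ B)).card := by omega
  rw [e]
  omega

theorem TT {p : ℕ} (hp : 1 ≤ p) : ∃ τ : ℕ, ∀ r 𝒜 ℬ, VP r p 𝒜 ℬ → 𝒜.card ≤ gg p ℬ.card + τ := by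
  rcases hp.lt_or_eq with hp2 | rfl
  swap
  · refine ⟨0, fun r 𝒜 ℬ h => ?_⟩
    have := gg_choose (p := 1) le_rfl ℬ.card
    rw [Nat.choose_one_right] at this
    rw [this]
    exact h.card_le le_rfl
  obtain ⟨p, rfl⟩ : ∃ p', p = p' + 1 := ⟨p - 1, by omega⟩
  have hp1 : 1 ≤ p := by omega
  obtain ⟨C, hC, hUB⟩ := exists_UB (p := p + 1) hp (η := 1) one_pos
  obtain ⟨ε, hε, hε2, b2, q0, hgain⟩ := gain_main hp1 (C := C + 1) (by linarith)
  obtain ⟨η, hη, b1, hst⟩ := stab hp ε hε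
  obtain ⟨b3, hb3⟩ := gg_lower hp hη
  set b4 := max b1 (max b2 b3) with hb4
  refine ⟨max (b4.choose 2) (q0.choose 2 + q0), fun r 𝒜 ℬ h => ?_⟩
  by_cases hbig : b4 ≤ ℬ.card
  swap
  · have := h.card_le hp
    have h2 : ℬ.card.choose 2 ≤ b4.choose 2 := Nat.choose_le_choose 2 (by omega)
    have := le_max_left (b4.choose 2) (q0.choose 2 + q0)
    omega
  by_cases hle : 𝒜.card ≤ gg (p + 1) ℬ.card
  · omega
  push Not at hle
  have g1 := hb3 ℬ.card (by omega)
  have hle' : (gg (p + 1) ℬ.card : ℝ) ≤ 𝒜.card := by exact_mod_cast hle.le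
  obtain ⟨S, hS, hq⟩ := hst r 𝒜 ℬ h (by omega) (g1.trans hle')
  have hsp := h.split hp hS
  have hbad := h.bad S
  set q := (ℬ.filter (fun B => ¬ S ⊆ B)).card with hqd
  by_cases hqs : q0 ≤ q
  · have hg := hgain ℬ.card q (by omega) hqs hq
    have hu := hUB r _ _ hbad
    rw [← hqd] at hu
    have hsp' : (𝒜.card : ℝ) ≤ (𝒜.filter (fun A => ¬ S ⊆ A)).card + q + gg (p + 1) (ℬ.card - q) := by
      exact_mod_cast hsp
    have : (𝒜.card : ℝ) ≤ gg (p + 1) ℬ.card := by linarith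
    have : 𝒜.card ≤ gg (p + 1) ℬ.card := by exact_mod_cast this
    omega
  · have h1 := hbad.card_le hp
    rw [← hqd] at h1
    have h2 : q.choose 2 ≤ q0.choose 2 := Nat.choose_le_choose 2 (by omega)
    have h3 := gg_mono hp (show ℬ.card - q ≤ ℬ.card by omega)
    have := le_max_right (b4.choose 2) (q0.choose 2 + q0)
    omega

lemma VP.cone {r p : ℕ} {𝒜 ℬ : Finset (Finset ℕ)} (h : VP r p 𝒜 ℬ) (t : ℕ) :
    ∃ 𝒜' ℬ', VP (r + t) p 𝒜' ℬ' ∧ 𝒜'.card = 𝒜.card ∧ ℬ'.card = ℬ.card := by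
  classical
  obtain ⟨T, hTc, hTA, hTB⟩ : ∃ T : Finset ℕ, T.card = t ∧ (∀ A ∈ 𝒜, Disjoint A T) ∧ ∀ B ∈ ℬ, Disjoint B T := by
    obtain ⟨T, h1, h2⟩ := Infinite.exists_superset_card_eq
      (𝒜.biUnion id ∪ ℬ.biUnion id) ((𝒜.biUnion id ∪ ℬ.biUnion id).card + t) (by omega)
    refine ⟨T \ (𝒜.biUnion id ∪ ℬ.biUnion id), ?_, ?_, ?_⟩
    · rw [card_sdiff_of_subset h1]; omega
    · intro A hA
      refine disjoint_sdiff.mono_left ?_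
      exact (subset_biUnion_of_mem id hA).trans subset_union_left
    · intro B hB
      refine disjoint_sdiff.mono_left ?_
      exact (subset_biUnion_of_mem id hB).trans subset_union_right
  have inj : ∀ A B : Finset ℕ, Disjoint A T → Disjoint B T → A ∪ T = B ∪ T → A = B := by
    intro A B hA hB e
    have : (A ∪ T) \ T = (B ∪ T) \ T := by rw [e]
    rwa [union_sdiff_cancel_right hA, union_sdiff_cancel_right hB] at this
  refine ⟨𝒜.image (· ∪ T), ℬ.image (· ∪ T), ⟨?_, ?_, ?_⟩, ?_, ?_⟩
  · intro A' hA'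
    obtain ⟨A, hA, rfl⟩ := mem_image.1 hA'
    rw [card_union_of_disjoint (hTA A hA), h.1 A hA]; omega
  · intro B' hB'
    obtain ⟨B, hB, rfl⟩ := mem_image.1 hB'
    rw [card_union_of_disjoint (hTB B hB), h.2.1 B hB]; omega
  · intro A' hA'
    obtain ⟨A, hA, rfl⟩ := mem_image.1 hA'
    refine lt_of_lt_of_le (h.2.2 A hA) (card_le_card ?_)
    intro x hx
    rw [mem_filter] at hx
    refine mem_filter.2 ⟨mem_union_left _ hx.1, mem_image.2 ⟨A.erase x, hx.2, ?_⟩⟩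
    have hxT : x ∉ T := disjoint_left.1 (hTA A hA) hx.1
    ext z
    simp only [mem_union, mem_erase]
    constructor
    · rintro (hz | hz)
      · exact ⟨hz.1, Or.inl hz.2⟩
      · exact ⟨fun e => hxT (e ▸ hz), Or.inr hz⟩
    · tauto
  · exact card_image_of_injOn fun A hA B hB e => inj A B (hTA A hA) (hTA B hB) e
  · exact card_image_of_injOn fun A hA B hB e => inj A B (hTB A hA) (hTB B hB) e

theorem stmt_1 :
    ∀ k : ℕ, 2 ≤ k → ∃ τ : ℕ, ∀ r : ℕ, k ≤ r → ∀ c : ℕ → ℕ,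
      StrictMonoOn c (Set.Icc 1 (k - 1)) →
      (∑ i ∈ Finset.Icc 1 (k - 1), (c i).choose (i + 1)) ≤
          f r k (∑ i ∈ Finset.Icc 1 (k - 1), (c i).choose i) ∧
        f r k (∑ i ∈ Finset.Icc 1 (k - 1), (c i).choose i) ≤
          (∑ i ∈ Finset.Icc 1 (k - 1), (c i).choose (i + 1)) + τ := by
  intro k hk
  obtain ⟨p, rfl⟩ : ∃ p, k = p + 1 := ⟨k - 1, by omega⟩
  have hp : 1 ≤ p := by omega
  obtain ⟨τ, hτ⟩ := TT hp
  refine ⟨τ, fun r hr c hc => ?_⟩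
  rw [Nat.add_sub_cancel] at hc ⊢
  obtain ⟨r, rfl⟩ : ∃ r', r = r' + 1 := ⟨r - 1, by omega⟩
  have hub : ∀ a ∈ {a : ℕ | ∃ 𝒜 ℬ : Finset (Finset ℕ), ValidPair (r + 1) (p + 1) 𝒜 ℬ ∧
      ℬ.card = (∑ i ∈ Finset.Icc 1 p, (c i).choose i) ∧ 𝒜.card = a},
      a ≤ (∑ i ∈ Finset.Icc 1 p, (c i).choose (i + 1)) + τ := by
    rintro a ⟨𝒜, ℬ, h1, h2, h3⟩
    have := hτ r 𝒜 ℬ (validPair_iff.1 h1)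
    rwa [h2, gg_casc hp hc, h3] at this
  unfold f
  constructor
  · obtain ⟨𝒜, ℬ, h1, h2, h3⟩ := exists_VP_casc hc
    obtain ⟨𝒜', ℬ', g1, g2, g3⟩ := h1.cone (r - p)
    rw [show p + (r - p) = r by omega] at g1
    exact le_csSup ⟨_, hub⟩ ⟨𝒜', ℬ', validPair_iff.2 g1, by rw [g3, h2], by rw [g2, h3]⟩
  · exact csSup_le' hub
end

section
/- For all integers r ≥ 3 and c_2 > c_1 ≥ 0 with c_2 ≥ 29, one has f(r, 3, C(c_2,2) + c_1) = C(c_2,3) + C(c_1,2), where C(n,m) denotes the binomial coefficient. -/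
namespace S2
def allB (p : ℕ → Bool) (n : ℕ) : Bool := Nat.rec true (fun k ih => p k && ih) n
theorem allB_spec (p : ℕ → Bool) (n : ℕ) (H : allB p n = true) : ∀ k < n, p k = true := by
  induction n with
  | zero => intro k hk; omega
  | succ n ih =>
    have H' : (p n && allB p n) = true := H
    rw [Bool.and_eq_true] at H'
    intro k hk
    rcases Nat.lt_succ_iff_lt_or_eq.mp hk with h | h
    · exact ih H'.2 k h
    · rw [h]; exact H'.1
/-- forcing evaluation -/
def force {α : Type} (n : ℕ) (k : ℕ → α) : α := Nat.rec (k 0) (fun m _ => k (Nat.succ m)) n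
theorem force_eq {α : Type} (n : ℕ) (k : ℕ → α) : force n k = k n := by cases n <;> rfl
def step (n bit c : ℕ) : ℕ := cond (Nat.ble ((c + bit) * (c + bit - 1)) n) (c + bit) c
/-- binary search for the triangular root of `n`, `n < 8000` -/
def rt (n : ℕ) : ℕ :=
  force (2 * n) fun m => force (step m 64 0) fun c => force (step m 32 c) fun c => force (step m 16 c) fun c => force (step m 8 c) fun c =>
  force (step m 4 c) fun c => force (step m 2 c) fun c => step m 1 c
theorem rt_chk : allB (fun n => force (rt n) fun c => Nat.ble (c*(c-1)) (2*n) && Nat.blt (2*n) (c*(c+1)) && Nat.ble 1 c) 4096 = true := by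
  decide +kernel

/-- value of `h` at `n`, `c` the triangular root -/
def hv (c n : ℕ) : ℕ :=
  cond (Nat.blt n 300)
    (c*(c-1)*(c-2)/6 + (n - c*(c-1)/2)*(c-1)/2 -
      cond (Nat.beq n 4 || Nat.beq n 5 || Nat.beq n 8 || Nat.beq n 23 || Nat.beq n 34 || Nat.beq n 41) 1 0)
    (c*(c-1)*(c-2)/6 + (n - c*(c-1)/2)*(n - c*(c-1)/2-1)/2)
def hc (n : ℕ) : ℕ := force (rt n) fun c => hv c n
def wv (d s : ℕ) : ℕ := cond (Nat.ble (2*s) (d*d)) d (d+1)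
def chk1 (s : ℕ) : Bool :=
  force (hc s) fun hs => force (hc (s+1)) fun hs1 => force (wv (rt s) s) fun w =>
   force (s*(w-2)) fun e => force (min hs (hs1-1)) fun q =>
   allB (fun t => force (s+t) fun b => force (hc b) fun hb =>
     Nat.ble (b*(s-1)/4) hb || (force (hc t) fun ht => force (min t e) fun m => Nat.ble (ht + hs) hb && Nat.ble (ht + (q + m)) hb)) (406-s)
theorem main_chk : allB (fun s => chk1 (s+1)) 405 = true := by
  decide +kernel

def chkA (c s : ℕ) : Bool := force (wv (rt s) s) fun w => 
  Nat.ble (2*s*(w-1)+6*s*(w-2)) (3*(c-1)*(c-2)+3*(s+1-c)*(s-c))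
theorem A_chk : allB (fun c => Nat.blt c 29 || allB (fun s => Nat.blt (3*s+6) (4*c) || chkA c s) (2*c-2)) 80 = true := by
  decide +kernel
def chkB1 (c m : ℕ) : Bool := force (rt m) fun d => force (rt (c*(c-1)/2-m)) fun a =>
  Nat.ble (6*(c*c/4)+m*(4*d+14)) (6*m*a)
def chkB2 (c m : ℕ) : Bool := force (rt m) fun d => force (rt (c*(c-1)/2-m)) fun a =>
  Nat.ble (6*((c+2)*(c+2)/4)+12*(c*(c-1)/2-m)+m*(4*d+2)) (6*m*a)
theorem B1_chk : allB (fun c => Nat.blt c 29 || allB (fun m => Nat.blt m c || chkB1 c m) (c*(c+1)/4+1)) 80 = true := by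
  decide +kernel
theorem B2_chk : allB (fun c => Nat.blt c 29 || allB (fun m => Nat.blt (m+2) (2*c) || chkB2 c m) (c*(c+1)/4+1)) 80 = true := by
  decide +kernel
theorem gle_chk : allB (fun n => force (rt n) fun c => Nat.ble (c*(c-1)*(c-2)/6 + (n - c*(c-1)/2)*(n - c*(c-1)/2-1)/2) (hv c n)) 300 = true := by
  decide +kernel

theorem rt_spec {n : ℕ} (hn : n < 4096) : 1 ≤ rt n ∧ rt n * (rt n - 1) ≤ 2*n ∧ 2*n < rt n * (rt n + 1) := by
  have := allB_spec _ _ rt_chk n hn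
  simp only [force_eq, Bool.and_eq_true, Nat.ble_eq, Nat.blt_eq] at this
  exact ⟨this.2, this.1⟩

def cc (n : ℕ) : ℕ := Nat.findGreatest (fun c => c*(c-1) ≤ 2*n) (2*n+1)

theorem cc_spec (n : ℕ) : 1 ≤ cc n ∧ cc n * (cc n - 1) ≤ 2*n ∧ 2*n < cc n * (cc n + 1) := by
  have h1 : 1 ≤ cc n := Nat.le_findGreatest (by omega) (by simp)
  refine ⟨h1, Nat.findGreatest_spec (P := fun c => c*(c-1) ≤ 2*n) (m := 1) (by omega) (by simp), ?_⟩
  by_contra hcon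
  push Not at hcon
  have h2 : cc n + 1 ≤ 2*n+1 := by nlinarith
  have := Nat.le_findGreatest (P := fun c => c*(c-1) ≤ 2*n) h2 (by simpa [mul_comm] using hcon)
  unfold cc at this
  omega

theorem root_le {a b n m : ℕ} (ha : a * (a-1) ≤ 2*n) (hb : 2*m < b*(b+1)) (h : n ≤ m) : a ≤ b := by
  by_contra hc
  push Not at hc
  obtain ⟨k, rfl⟩ := Nat.exists_eq_add_of_lt hc
  have : (b + k + 1 - 1) = b + k := by omega
  rw [this] at ha
  nlinarith

theorem cc_eq {c n : ℕ} (h1 : c*(c-1) ≤ 2*n) (h2 : 2*n < c*(c+1)) : cc n = c := by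
  obtain ⟨_, h3, h4⟩ := cc_spec n
  exact le_antisymm (root_le h3 h2 le_rfl) (root_le h1 h4 le_rfl)

theorem cc_mono {n m : ℕ} (h : n ≤ m) : cc n ≤ cc m := root_le (cc_spec n).2.1 (cc_spec m).2.2 h

theorem rt_eq {n : ℕ} (hn : n < 4096) : rt n = cc n := (cc_eq (rt_spec hn).2.1 (rt_spec hn).2.2).symm

def g (n : ℕ) : ℕ := cc n*(cc n-1)*(cc n-2)/6 + (n - cc n*(cc n-1)/2)*(n - cc n*(cc n-1)/2-1)/2
def h (n : ℕ) : ℕ := hv (cc n) n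

theorem hc_eq {n : ℕ} (hn : n < 4096) : hc n = h n := by
  unfold hc h; rw [force_eq, rt_eq hn]

theorem six_choose (c : ℕ) : 6 * c.choose 3 = c*(c-1)*(c-2) := by
  induction c with
  | zero => rfl
  | succ n ih =>
    rw [Nat.choose_succ_succ, mul_add, ih]
    have h2 := Nat.choose_two_right n
    have h3 := Nat.two_mul_div_two_of_even (Nat.even_mul_pred_self n)
    show 6 * n.choose 2 + _ = _
    rcases n with _ | _ | n
    · rfl
    · rfl
    · simp only [Nat.add_sub_cancel] at *
      have e : n + 1 + 1 + 1 - 2 = n+1 := by omega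
      have e2 : n + 1 + 1 - 2 = n := by omega
      rw [e, e2]
      rw [h2]
      nlinarith

theorem choose3 (c : ℕ) : c.choose 3 = c*(c-1)*(c-2)/6 := by
  rw [← six_choose]; omega

/-- main facts -/
theorem facts (n : ℕ) : ∃ k : ℤ, 0 ≤ k ∧ k < cc n ∧ 2*(n:ℤ) = cc n * (cc n - 1) + 2*k ∧
    6 * (g n : ℤ) = cc n * (cc n - 1) * (cc n - 2) + 3*k*(k-1) ∧
    12 * (h n : ℤ) ≤ 2*cc n * (cc n - 1) * (cc n - 2) + 6*k*(cc n - 1) := by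
  obtain ⟨h1, h2, h3⟩ := cc_spec n
  have e2 := Nat.two_mul_div_two_of_even (Nat.even_mul_pred_self (cc n))
  have e3 := six_choose (cc n)
  have e4 := choose3 (cc n)
  have e5 := Nat.two_mul_div_two_of_even (Nat.even_mul_pred_self (n - cc n*(cc n-1)/2))
  obtain ⟨e, he⟩ : ∃ e, cc n = e + 1 := ⟨cc n - 1, by omega⟩
  have cast3 : ((cc n * (cc n - 1) * (cc n - 2) : ℕ) : ℤ) = cc n * (cc n - 1) * (cc n - 2) := by
    rw [he]
    rcases e with _ | e
    · simp
    · have : e + 1 + 1 - 2 = e := by omega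
      rw [Nat.add_sub_cancel, this]; push_cast; ring
  have cast2 : ((cc n * (cc n - 1) : ℕ) : ℤ) = cc n * (cc n - 1) := by
    rw [he]; simp
  set k := n - cc n*(cc n-1)/2 with hk
  have hk0 : n = cc n * (cc n - 1)/2 + k := by omega
  have hkc : k < cc n := by
    have : cc n * (cc n + 1) = cc n * (cc n - 1) + 2 * cc n := by rw [he]; simp; ring
    omega
  have castk : ((k * (k - 1) : ℕ) : ℤ) = k * (k - 1) := by
    rcases k with _ | k <;> simp
  have G : 6 * (g n : ℤ) = cc n * (cc n - 1) * (cc n - 2) + 3*k*(k-1) := by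
    have : 6 * g n = cc n * (cc n - 1) * (cc n - 2) + 3*(k*(k-1)) := by
      unfold g; rw [← hk]; omega
    rw [← cast3, mul_assoc (3:ℤ), ← castk]
    exact_mod_cast this
  refine ⟨k, by positivity, by exact_mod_cast hkc, ?_, G, ?_⟩
  · rw [← cast2]; exact_mod_cast (by omega : 2 * n = cc n * (cc n - 1) + 2 * k)
  · by_cases hn : n < 300
    · have : h n ≤ cc n*(cc n-1)*(cc n-2)/6 + k*(cc n-1)/2 := by
        unfold h hv
        rw [(Nat.blt_eq).mpr hn]
        exact Nat.sub_le _ _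
      have : 12 * h n ≤ 2*(cc n*(cc n-1)*(cc n-2)) + 6 * (k*(cc n-1)) := by omega
      have h5 : ((k * (cc n - 1) : ℕ) : ℤ) = k * (cc n - 1) := by rw [he]; simp
      have := (Nat.cast_le (α := ℤ)).mpr this
      push_cast [cast3, h5] at this
      linarith
    · have : h n = g n := by
        unfold h hv g
        have : Nat.blt n 300 = false := by
          rw [← Bool.not_eq_true, Nat.blt_eq]; exact hn
        rw [this]; rfl
      rw [this]
      have : (k:ℤ) < cc n := by exact_mod_cast hkc
      nlinarith [mul_nonneg (Int.natCast_nonneg k) (by linarith : (0:ℤ) ≤ cc n - k)]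

theorem h_eq_g {n : ℕ} (hn : 300 ≤ n) : h n = g n := by
  unfold h hv g
  have : Nat.blt n 300 = false := by
    rw [← Bool.not_eq_true, Nat.blt_eq]; omega
  rw [this]; rfl

theorem g_le_h (n : ℕ) : g n ≤ h n := by
  by_cases hn : n < 300
  · have := allB_spec _ _ gle_chk n hn
    simp only [force_eq, Nat.ble_eq, rt_eq (show n < 4096 by omega)] at this
    exact this
  · rw [h_eq_g (by omega)]
end S2

namespace S2
theorem three_h (n : ℕ) : 3*(h n:ℤ) ≤ n*(cc n - 1) := by
  obtain ⟨k, k0, kc, e, _, hh⟩ := facts n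
  have h1 : (1:ℤ) ≤ cc n := by exact_mod_cast (cc_spec n).1
  nlinarith [mul_nonneg (by linarith : (0:ℤ) ≤ cc n - 1) (by linarith : (0:ℤ) ≤ cc n - k)]

theorem cc_int (n : ℕ) : (1:ℤ) ≤ cc n ∧ (cc n:ℤ) * (cc n - 1) ≤ 2*n ∧ 2*(n:ℤ) + 2 ≤ cc n * (cc n + 1) := by
  obtain ⟨k, k0, kc, e, _, hh⟩ := facts n
  have h1 : (1:ℤ) ≤ cc n := by exact_mod_cast (cc_spec n).1
  refine ⟨h1, by linarith, ?_⟩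
  have : k + 1 ≤ cc n := by linarith
  nlinarith

theorem gap {b M m : ℕ} (hb : b = M + m) {k : ℤ} (hk : 0 ≤ k) (e : 2*(b:ℤ) = cc b * (cc b - 1) + 2*k)
    (eg : 6 * (g b : ℤ) = cc b * (cc b - 1) * (cc b - 2) + 3*k*(k-1)) :
    12 * (h M : ℤ) + 6*(cc M - 1)*m ≤ 12 * g b + 6*k*(cc b - k) := by
  obtain ⟨j, j0, jc, e', _, hh⟩ := facts M
  have h1 := (cc_int M).1
  have h2 : (cc M : ℤ) ≤ cc b := by exact_mod_cast cc_mono (by omega : M ≤ b)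
  generalize (cc M : ℤ) = a at *
  generalize (cc b : ℤ) = c at *
  have hb' : (b:ℤ) = M + m := by exact_mod_cast hb
  obtain ⟨x, hx⟩ : ∃ x, x = c - a := ⟨_, rfl⟩
  have key : 0 ≤ x * ((x-1)*(3*c - x - 1) + 6*k) := by
    rcases eq_or_lt_of_le (by linarith : 0 ≤ x) with h0 | h0
    · rw [← h0]; simp
    · apply mul_nonneg h0.le
      have : 0 ≤ (x-1)*(3*c-x-1) := mul_nonneg (by linarith) (by linarith)
      linarith
  have i1 : 12 * (h M : ℤ) ≤ 6*(a-1)*M - (a^3-a) := by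
    calc 12 * (h M : ℤ) ≤ 2*a*(a-1)*(a-2)+6*j*(a-1) := hh
      _ = 3*(a-1)*(a*(a-1)+2*j) - (a^3-a) := by ring
      _ = _ := by rw [← e']; ring
  have i2 : 12 * (g b:ℤ) + 6*k*(c-k) = 6*(c-1)*b - (c^3-c) := by
    calc 12 * (g b:ℤ) + 6*k*(c-k) = 2*(c*(c-1)*(c-2)+3*k*(k-1)) + 6*k*(c-k) := by rw [← eg]; ring
      _ = 3*(c-1)*(c*(c-1)+2*k) - (c^3-c) := by ring
      _ = _ := by rw [← e]; ring
  have i3 : 6*(c-1)*b - (c^3-c) - (6*(a-1)*b - (a^3-a)) = x * ((x-1)*(3*c - x - 1) + 6*k) := by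
    have : a = c - x := by linarith
    calc 6*(c-1)*b - (c^3-c) - (6*(a-1)*b - (a^3-a)) = 3*(c-a)*(2*b) - (c^3-c) + (a^3-a) := by ring
      _ = _ := by rw [e, this]; ring
  rw [i2]
  have : 6*(a-1)*(b:ℤ) = 6*(a-1)*M + 6*(a-1)*m := by rw [hb']; ring
  linarith

theorem quad4 {k c : ℤ} : 4*(k*(c-k)) ≤ c*c := by nlinarith [sq_nonneg (c-2*k)]

theorem low_gen {p q a c X : ℤ} (hq : 0 < q) (ha : 1 ≤ a) (h1 : X ≤ a*(a+1)) (h2 : (p*c)*(p*c+q) < q*q*X) : p*c ≤ q*a := by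
  by_contra hcon
  push Not at hcon
  have h0 : 0 ≤ q*a := mul_nonneg hq.le (by linarith)
  have h3 : (q*a)*(q*a+q) ≤ (p*c)*(p*c+q) := mul_le_mul hcon.le (by linarith) (by linarith) (by linarith)
  have h4 : q*q*X ≤ q*q*(a*(a+1)) := mul_le_mul_of_nonneg_left h1 (mul_nonneg hq.le hq.le)
  linarith

theorem up_gen {p q d c X : ℤ} (hq : 0 < q) (hp : q ≤ p*c) (h1 : d*(d-1) ≤ X) (h2 : q*q*X < (p*c)*(p*c-q)) : q*d ≤ p*c := by
  by_contra hcon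
  push Not at hcon
  have h3 : (p*c)*(p*c-q) ≤ (q*d)*(q*d-q) := mul_le_mul hcon.le (by linarith) (by linarith) (by linarith)
  have h4 : q*q*(d*(d-1)) ≤ q*q*X := mul_le_mul_of_nonneg_left h1 (mul_nonneg hq.le hq.le)
  linarith

theorem bigB1 {c d a m M b : ℤ} (a1 : 1 ≤ a) (b2 : c*(c-1) ≤ 2*b) (m2 : d*(d-1) ≤ 2*m) (M3 : 2*M+2 ≤ a*(a+1)) (hdA : d ≤ a)
    (hb : b = M + m) (h80 : 80 ≤ c) (hm : c ≤ m) (hmM : m ≤ M) : 3*(c*c) ≤ 2*(m*(6*a-4*d-14)) := by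
  have ha : 69*c ≤ 100*a := low_gen (X := 2*M) (by norm_num) a1 (by linarith) (by nlinarith)
  have m0 : 0 ≤ m := by linarith
  rcases le_or_gt (3*c) (2*m) with h | h
  · have h1 : c ≤ 6*a-4*d-14 := by linarith
    have h2 : m*c ≤ m*(6*a-4*d-14) := mul_le_mul_of_nonneg_left h1 m0
    have h3 : (3*c)*c ≤ (2*m)*c := mul_le_mul_of_nonneg_right h (by linarith)
    linarith
  · have hd : 5*d ≤ 1*c := up_gen (X := 3*c-1) (by norm_num) (by linarith) (by linarith) (by nlinarith)
    have h1 : 3*c ≤ 2*(6*a-4*d-14) := by linarith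
    have h2 : m*(3*c) ≤ m*(2*(6*a-4*d-14)) := mul_le_mul_of_nonneg_left h1 m0
    have h3 : c*c ≤ m*c := mul_le_mul_of_nonneg_right hm (by linarith)
    linarith

theorem bigB2 {c d a m M b : ℤ} (a1 : 1 ≤ a) (b2 : c*(c-1) ≤ 2*b) (m2 : d*(d-1) ≤ 2*m) (M3 : 2*M+2 ≤ a*(a+1)) (hdA : d ≤ a)
    (hb : b = M + m) (h80 : 80 ≤ c) (hm : 2*c ≤ m+2) (hmM : m ≤ M) : 15*(c*c) + 12 ≤ 2*(m*(6*a-4*d+10)) := by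
  have m0 : 0 ≤ m := by linarith
  rcases le_or_gt (57*c) (10*m) with h | h
  · have ha : 69*c ≤ 100*a := low_gen (X := 2*M) (by norm_num) a1 (by linarith) (by nlinarith)
    have h1 : 69*c+500 ≤ 50*(6*a-4*d+10) := by linarith
    have h2 : m*(69*c+500) ≤ m*(50*(6*a-4*d+10)) := mul_le_mul_of_nonneg_left h1 m0
    have h3 : (57*c)*(69*c+500) ≤ (10*m)*(69*c+500) := mul_le_mul_of_nonneg_right h (by linarith)
    nlinarith
  · have hd : 10*d ≤ 4*c := up_gen (X := 2*m) (by norm_num) (by linarith) (by linarith) (by nlinarith)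
    have ha : 9*c ≤ 10*a := low_gen (X := c*(c-1) - 2*m) (by norm_num) a1 (by linarith) (by nlinarith)
    have h1 : 38*c+100 ≤ 10*(6*a-4*d+10) := by linarith
    have h2 : m*(38*c+100) ≤ m*(10*(6*a-4*d+10)) := mul_le_mul_of_nonneg_left h1 m0
    have h3 : (2*c)*(38*c+100) ≤ (m+2)*(38*c+100) := mul_le_mul_of_nonneg_right hm (by linarith)
    nlinarith

theorem numB1 {b M m : ℕ} (hb : b = M + m) (hc : 29 ≤ cc b) (hm : cc b ≤ m) (hmM : m ≤ M) (k : ℤ) :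
    6*(k*(cc b - k)) + m*(4*cc m+14) ≤ 6*m*(cc M:ℤ) := by
  obtain ⟨c1, c2, c3⟩ := cc_spec b
  by_cases h80 : cc b < 80
  · have := allB_spec _ _ B1_chk _ h80
    simp only [Bool.or_eq_true, Nat.blt_eq] at this
    have := allB_spec _ _ (this.resolve_left (by omega)) m (by omega)
    simp only [Bool.or_eq_true, Nat.blt_eq] at this
    have := this.resolve_left (by omega)
    have hc80 : cc b * (cc b + 1) ≤ 80*80 := Nat.mul_le_mul (by omega) (by omega)
    have hx : cc b * (cc b - 1) ≤ 80*80 := Nat.mul_le_mul (by omega) (by omega)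
    unfold chkB1 at this
    simp only [force_eq, Nat.ble_eq] at this
    rw [rt_eq (by omega), rt_eq (by omega)] at this
    have hmono : cc (cc b * (cc b - 1)/2 - m) ≤ cc M := cc_mono (by omega)
    have q := @quad4 k (cc b)
    have q' : k*(cc b - k) ≤ ((cc b * cc b / 4 : ℕ):ℤ) := by
      push_cast
      omega
    have t1 : 6*(cc b*cc b/4) + m*(4*cc m+14) ≤ 6*m*cc M := this.trans (Nat.mul_le_mul le_rfl hmono)
    have t2 : 6*((cc b*cc b/4 : ℕ):ℤ) + m*(4*cc m+14) ≤ 6*m*cc M := by exact_mod_cast t1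
    linarith
  · obtain ⟨_, b2, b3⟩ := cc_int b
    obtain ⟨_, m2, m3⟩ := cc_int m
    obtain ⟨M1, M2, M3⟩ := cc_int M
    have hdA : (cc m : ℤ) ≤ cc M := by exact_mod_cast cc_mono hmM
    have hb' : (b:ℤ) = M + m := by exact_mod_cast hb
    have h80' : (80:ℤ) ≤ cc b := by exact_mod_cast (by omega : 80 ≤ cc b)
    have hm' : (cc b:ℤ) ≤ m := by exact_mod_cast hm
    have hmM' : (m:ℤ) ≤ M := by exact_mod_cast hmM
    have q := @quad4 k (cc b)
    have := bigB1 M1 b2 m2 M3 hdA hb' h80' hm' hmM'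
    linarith

theorem numB2 {b M m : ℕ} (hb : b = M + m) (hc : 29 ≤ cc b) (hm : 2*cc b ≤ m + 2) (hmM : m ≤ M) (k : ℤ) :
    6*(k*(cc b - k)) + 12*k + (6*(cc b*(cc b - 1)) - 12*m) + m*(4*cc m+2) ≤ 6*m*(cc M:ℤ) := by
  obtain ⟨c1, c2, c3⟩ := cc_spec b
  have q := @quad4 k (cc b+2)
  by_cases h80 : cc b < 80
  · have := allB_spec _ _ B2_chk _ h80
    simp only [Bool.or_eq_true, Nat.blt_eq] at this
    have := allB_spec _ _ (this.resolve_left (by omega)) m (by omega)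
    simp only [Bool.or_eq_true, Nat.blt_eq] at this
    have := this.resolve_left (by omega)
    have hc80 : cc b * (cc b + 1) ≤ 80*80 := Nat.mul_le_mul (by omega) (by omega)
    have hx : cc b * (cc b - 1) ≤ 80*80 := Nat.mul_le_mul (by omega) (by omega)
    unfold chkB2 at this
    simp only [force_eq, Nat.ble_eq] at this
    rw [rt_eq (by omega), rt_eq (by omega)] at this
    have hmono : cc (cc b * (cc b - 1)/2 - m) ≤ cc M := cc_mono (by omega)
    have q' : k*(cc b + 2 - k) ≤ (((cc b+2) * (cc b+2) / 4 : ℕ):ℤ) := by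
      push_cast
      omega
    have t1 := this.trans (Nat.mul_le_mul (le_refl (6*m)) hmono)
    have e2 := Nat.two_mul_div_two_of_even (Nat.even_mul_pred_self (cc b))
    have t3 : 6 * ((cc b + 2) * (cc b + 2) / 4) + 6 * (cc b * (cc b - 1)) + m * (4 * cc m + 2) ≤ 6 * m * cc M + 12*m := by omega
    have t2 : 6*(((cc b + 2) * (cc b + 2)/4 : ℕ):ℤ) + 6 * ((cc b * (cc b - 1) : ℕ):ℤ) + m*(4*cc m+2) ≤ 6*m*cc M + 12*m := by exact_mod_cast t3
    have cast2 : ((cc b * (cc b - 1) : ℕ) : ℤ) = cc b * (cc b - 1) := by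
      rw [Nat.cast_mul, Nat.cast_sub c1]; simp
    rw [cast2] at t2
    linarith
  · obtain ⟨_, b2, b3⟩ := cc_int b
    obtain ⟨_, m2, m3⟩ := cc_int m
    obtain ⟨M1, M2, M3⟩ := cc_int M
    have hdA : (cc m : ℤ) ≤ cc M := by exact_mod_cast cc_mono hmM
    have hb' : (b:ℤ) = M + m := by exact_mod_cast hb
    have h80' : (80:ℤ) ≤ cc b := by exact_mod_cast (by omega : 80 ≤ cc b)
    have hm' : 2*(cc b:ℤ) ≤ m + 2 := by exact_mod_cast hm
    have hmM' : (m:ℤ) ≤ M := by exact_mod_cast hmM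
    have := bigB2 M1 b2 m2 M3 hdA hb' h80' hm' hmM'
    linarith

/-- exact differences in a window -/
theorem win {b m : ℕ} (hm : m + 1 ≤ cc b) {k : ℤ} (hk : 0 ≤ k) (hkc : k < cc b) (e : 2*(b:ℤ) = cc b * (cc b - 1) + 2*k)
    (eg : 6 * (g b : ℤ) = cc b * (cc b - 1) * (cc b - 2) + 3*k*(k-1)) :
    m ≤ b ∧ (((m:ℤ) ≤ k ∧ 2*((g b:ℤ) - g (b-m)) = k*(k-1) - (k-m)*(k-m-1)) ∨
     (k < m ∧ 2*((g b:ℤ) - g (b-m)) = m*(m-1) + 2*(m-k)*(cc b - 1 - m))) := by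
  have hm' : (m:ℤ) + 1 ≤ cc b := by exact_mod_cast hm
  have hmb : m ≤ b := by
    have : (m:ℤ) ≤ b := by
      rcases Nat.eq_zero_or_pos m with h0 | h0
      · subst h0; simp
      · have : (1:ℤ) ≤ m := by exact_mod_cast h0
        nlinarith
    exact_mod_cast this
  have hsub : ((b-m : ℕ):ℤ) = b - m := by push_cast [hmb]; ring
  obtain ⟨j, j0, jc, e', eg', _⟩ := facts (b-m)
  refine ⟨hmb, ?_⟩
  rcases le_or_gt (m:ℤ) k with h | h
  · left
    refine ⟨h, ?_⟩
    have hcc : cc (b-m) = cc b := by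
      apply cc_eq
      · zify [(cc_spec b).1]; rw [hsub]; linarith
      · zify; rw [hsub]; nlinarith
    rw [hcc] at e' eg'
    have : j = k - m := by rw [hsub] at e'; linarith
    subst this
    linarith
  · right
    refine ⟨h, ?_⟩
    have hc2 : (2:ℤ) ≤ cc b := by linarith
    have hc2' : 2 ≤ cc b := by exact_mod_cast hc2
    have hcast : ((cc b - 1 : ℕ):ℤ) = cc b - 1 := by push_cast [(cc_spec b).1]; ring
    have hcast2 : ((cc b - 1 - 1 : ℕ):ℤ) = cc b - 2 := by omega
    have hcc : cc (b-m) = cc b - 1 := by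
      apply cc_eq
      · zify; rw [hcast2, hcast, hsub]; nlinarith
      · zify; rw [hcast, hsub]; nlinarith
    rw [hcc, hcast] at e' eg'
    generalize (cc b : ℤ) = c at *
    have : j = c - 1 + k - m := by rw [hsub] at e'; linarith
    subst this
    linarith

theorem win_le {b m : ℕ} (hm : m + 1 ≤ cc b) : m ≤ b ∧ (m:ℤ)*(m-1) ≤ 2*((g b:ℤ) - g (b-m)) := by
  obtain ⟨k, k0, kc, e, eg, _⟩ := facts b
  obtain ⟨h1, h2⟩ := win hm k0 kc e eg
  refine ⟨h1, ?_⟩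
  have hm' : (m:ℤ) + 1 ≤ cc b := by exact_mod_cast hm
  have m0 : (0:ℤ) ≤ m := by positivity
  rcases h2 with ⟨h2, h3⟩ | ⟨h2, h3⟩
  · rw [h3]; nlinarith
  · rw [h3]; nlinarith

theorem wv_spec {s : ℕ} (hs : 1 ≤ s) : 2 ≤ wv (cc s) s ∧ 2*s ≤ wv (cc s) s * wv (cc s) s ∧ cc s ≤ wv (cc s) s ∧
    ((wv (cc s) s:ℤ) - 1) * ((wv (cc s) s:ℤ) - 1) < 2*s := by
  obtain ⟨h1, h2, h3⟩ := cc_spec s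
  obtain ⟨i1, i2, i3⟩ := cc_int s
  have h4 : 2 ≤ cc s := by
    by_contra hcon
    have : cc s = 1 := by omega
    rw [this] at h3; omega
  have h4' : (2:ℤ) ≤ cc s := by exact_mod_cast h4
  by_cases hh : 2*s ≤ cc s * cc s
  · have : wv (cc s) s = cc s := by unfold wv; rw [Nat.ble_eq.mpr hh]; rfl
    rw [this]
    exact ⟨h4, hh, le_rfl, by nlinarith⟩
  · have : wv (cc s) s = cc s + 1 := by
      unfold wv
      have : Nat.ble (2*s) (cc s * cc s) = false := by rw [← Bool.not_eq_true, Nat.ble_eq]; exact hh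
      rw [this]; rfl
    rw [this]
    push Not at hh
    refine ⟨by omega, by nlinarith, by omega, ?_⟩
    push_cast
    have : (cc s:ℤ) * cc s < 2*s := by exact_mod_cast hh
    linarith

theorem numA {c s : ℕ} (hc : 29 ≤ c) (hs : 4*c ≤ 3*s+6) (hs2 : s + 3 ≤ 2*c) :
    2*(s:ℤ)*(wv (cc s) s-1)+6*s*(wv (cc s) s-2) ≤ 3*(c-1)*(c-2)+3*(s+1-c)*(s-c) := by
  obtain ⟨w1, w2, w3, w4⟩ := wv_spec (show 1 ≤ s by omega)
  by_cases h80 : c < 80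
  · have := allB_spec _ _ A_chk _ h80
    simp only [Bool.or_eq_true, Nat.blt_eq] at this
    have := allB_spec _ _ (this.resolve_left (by omega)) s (by omega)
    simp only [Bool.or_eq_true, Nat.blt_eq] at this
    have := this.resolve_left (by omega)
    unfold chkA at this
    simp only [force_eq, Nat.ble_eq] at this
    rw [rt_eq (by omega)] at this
    have := (Nat.cast_le (α := ℤ)).mpr this
    push_cast [show 1 ≤ wv (cc s) s by omega, w1, show 1 ≤ c by omega, show 2 ≤ c by omega, show c ≤ s + 1 by omega, show c ≤ s by omega] at this
    exact this
  · have h80' : (80:ℤ) ≤ c := by exact_mod_cast (by omega : 80 ≤ c)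
    have hs' : 4*(c:ℤ) ≤ 3*s+6 := by exact_mod_cast hs
    have hs2' : (s:ℤ) + 3 ≤ 2*c := by exact_mod_cast hs2
    generalize (wv (cc s) s : ℤ) = w at *
    generalize (c:ℤ) = c at *
    generalize (s:ℤ) = s at *
    have hw : 40*(w-1) ≤ 9*c := by
      by_contra hcon
      push Not at hcon
      nlinarith
    obtain ⟨x, rfl⟩ : ∃ x, s = c + x := ⟨s - c, by ring⟩
    have : (c+x)*(40*(w-1)) ≤ (c+x)*(9*c) := mul_le_mul_of_nonneg_left hw (by linarith)
    nlinarith [sq_nonneg (3*c - 10*x)]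
end S2

namespace S2

theorem small_case {b s t A X p E : ℕ} (hb : b = s + t) (hs : 1 ≤ s) (hb4 : b < 406) (h1 : 4*A ≤ b*(s-1)) (h2 : A ≤ X+p+E)
   (hX : X ≤ h t) (hp : p ≤ h s) (hE1 : E ≤ t) (hE2 : E = 0 ∨ p+1 ≤ h (s+1))
   (hE3 : ∀ w, 2 ≤ w → 2*s ≤ w*w → E ≤ s*(w-2)) : A ≤ h b := by
  obtain ⟨u, rfl⟩ : ∃ u, s = u + 1 := ⟨s-1, by omega⟩
  have := allB_spec _ _ main_chk u (by omega)
  simp only [chk1, force_eq] at this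
  have := allB_spec _ _ this t (by omega)
  simp only [Bool.or_eq_true, Bool.and_eq_true, Nat.ble_eq] at this
  rw [hc_eq (by omega), hc_eq (by omega), hc_eq (by omega), hc_eq (by omega), rt_eq (by omega), ← hb] at this
  obtain ⟨w1, w2, _⟩ := wv_spec hs
  have hE := hE3 _ w1 w2
  generalize (u+1)*(wv (cc (u+1)) (u+1) - 2) = e at *
  omega

set_option maxHeartbeats 2000000 in
theorem big_case {b s t A X p E : ℕ} (hb : b = s + t) (hs : 1 ≤ s) (hb4 : 406 ≤ b) (h1 : 4*A ≤ b*(s-1)) (h2 : A ≤ X+p+E)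
   (hX : X ≤ h t) (hp : p ≤ h s) (hE1 : E ≤ t) (hE2 : E = 0 ∨ p+1 ≤ h (s+1))
   (hE3 : ∀ w, 2 ≤ w → 2*s ≤ w*w → E ≤ s*(w-2)) : A ≤ h b := by
  rw [h_eq_g (by omega)]
  obtain ⟨k, k0, kc, e, eg, _⟩ := facts b
  obtain ⟨c1, c2, c3⟩ := cc_int b
  have hc : 29 ≤ cc b := by
    by_contra hcon
    have : (cc b:ℤ) ≤ 28 := by omega
    have : (406:ℤ) ≤ b := by exact_mod_cast hb4
    nlinarith
  have hc' : (29:ℤ) ≤ cc b := by exact_mod_cast hc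
  have hcsq : 29 * (cc b:ℤ) ≤ cc b * cc b := mul_le_mul_of_nonneg_right hc' (by linarith)
  have hbz : (b:ℤ) = s + t := by exact_mod_cast hb
  have h2z : (A:ℤ) ≤ X+p+E := by exact_mod_cast h2
  have hXz : (X:ℤ) ≤ h t := by exact_mod_cast hX
  have hpz : (p:ℤ) ≤ h s := by exact_mod_cast hp
  have hEz : (E:ℤ) ≤ t := by exact_mod_cast hE1
  suffices (A:ℤ) ≤ g b by exact_mod_cast this
  -- R1
  by_cases r1 : 3*s + 7 ≤ 4 * cc b
  · have r1' : 3*(s:ℤ) + 7 ≤ 4 * cc b := by exact_mod_cast r1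
    have h1' : 4*(A:ℤ) ≤ b*(s-1) := by
      have := (Nat.cast_le (α := ℤ)).mpr h1
      push_cast [hs] at this
      exact this
    have b0 : (0:ℤ) ≤ b := by positivity
    have i1 : (b:ℤ)*(3*(s-1)) ≤ b*(4*cc b - 10) := mul_le_mul_of_nonneg_left (by linarith) b0
    have i2 : 12 * (g b:ℤ) - 2*b*(2*cc b - 5) = cc b * cc b - cc b - 4*(cc b-1)*k + 6*k*k := by
      calc 12 * (g b:ℤ) - 2*b*(2*cc b - 5) = 2*(6*g b) - (2*b)*(2*cc b - 5) := by ring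
        _ = _ := by rw [eg, e]; ring
    have i3 : 0 ≤ (cc b * cc b - cc b - 4*(cc b-1)*k + 6*k*k : ℤ) := by
      nlinarith [sq_nonneg (3*k - (cc b - 1))]
    linarith
  push Not at r1
  by_cases rA : s + 3 ≤ 2 * cc b
  · -- region A
    have hsc : cc b ≤ s := by omega
    obtain ⟨q1, q2⟩ := win_le (b := b) (m := cc b - 1) (by omega)
    have hcc : cc b - 1 ≤ cc (b - (cc b - 1)) := by
      obtain ⟨y1, y2, y3⟩ := cc_spec b
      refine root_le (n := b - (cc b - 1)) ?_ (cc_spec _).2.2 le_rfl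
      obtain ⟨v, hv⟩ : ∃ v, cc b = v + 2 := ⟨cc b - 2, by omega⟩
      rw [hv] at y2 ⊢
      simp only [Nat.add_sub_cancel, show v + 2 - 1 = v + 1 by omega] at *
      zify [show v + 1 ≤ b by omega] at *
      nlinarith
    obtain ⟨q3, q4⟩ := win_le (b := b - (cc b - 1)) (m := s - (cc b - 1)) (by omega)
    have et : b - (cc b - 1) - (s - (cc b - 1)) = t := by omega
    rw [et] at q4
    push_cast [show 1 ≤ cc b by omega, show cc b - 1 ≤ s by omega] at q2 q4
    have ht : 300 ≤ t := by
      have rA' : (s:ℤ) + 3 ≤ 2*cc b := by exact_mod_cast rA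
      have : (300:ℤ) ≤ t := by linarith
      exact_mod_cast this
    rw [h_eq_g ht] at hXz
    obtain ⟨w1, w2, w3, w4⟩ := wv_spec hs
    have nA := numA hc (by omega) rA
    have th := three_h s
    have hE := hE3 _ w1 w2
    have hE' : (E:ℤ) ≤ s*(wv (cc s) s - 2) := by
      have := (Nat.cast_le (α := ℤ)).mpr hE
      push_cast [w1] at this
      exact this
    have w3' : (s:ℤ)*(cc s - 1) ≤ s * (wv (cc s) s - 1) :=
      mul_le_mul_of_nonneg_left (by have : (cc s:ℤ) ≤ wv (cc s) s := by exact_mod_cast w3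
                                    linarith) (by positivity)
    linarith
  push Not at rA
  by_cases rt : t + 1 ≤ cc b
  · -- small t
    have hs300 : 300 ≤ s := by
      have rt' : (t:ℤ) + 1 ≤ cc b := by exact_mod_cast rt
      have : (300:ℤ) ≤ s := by linarith
      exact_mod_cast this
    rw [h_eq_g hs300] at hpz
    rw [h_eq_g (by omega : 300 ≤ s+1)] at hE2
    have W := fun m hm => (win (b := b) (m := m) hm k0 kc e eg).2
    have V := (win_le rt).2
    have est : b - t = s := by omega
    rw [est] at V
    by_cases ht5 : 5 ≤ t
    · have th := three_h t
      obtain ⟨d1, d2, d3⟩ := cc_int t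
      have ht5' : (5:ℤ) ≤ t := by exact_mod_cast ht5
      have hd : (cc t:ℤ) ≤ t - 1 := by
        by_contra hcon
        push Not at hcon
        nlinarith
      nlinarith
    · have h0 : h 0 = 0 := by rw [← hc_eq (by norm_num)]; decide
      have h1 : h 1 = 0 := by rw [← hc_eq (by norm_num)]; decide
      have h2 : h 2 = 0 := by rw [← hc_eq (by norm_num)]; decide
      have h3 : h 3 = 1 := by rw [← hc_eq (by norm_num)]; decide
      have h4 : h 4 = 1 := by rw [← hc_eq (by norm_num)]; decide
      have ht : t = 0 ∨ t = 1 ∨ t = 2 ∨ t = 3 ∨ t = 4 := by omega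
      rcases ht with rfl | rfl | rfl | rfl | rfl
      · have : b = s := by omega
        rw [this]
        omega
      · have : b = s + 1 := by omega
        rw [this] at V ⊢
        omega
      · rcases hE2 with hE2 | hE2
        · omega
        · have e1 : b - 1 = s + 1 := by omega
          have W1 := W 1 (by omega)
          have W2 := W 2 (by omega)
          rw [est] at W2
          rw [e1] at W1
          push_cast at W1 W2
          have hE2' : (p:ℤ) + 1 ≤ g (s+1) := by exact_mod_cast hE2
          rcases W1 with ⟨a1, a2⟩ | ⟨a1, a2⟩
          · rcases W2 with ⟨b1, b2⟩ | ⟨b1, b2⟩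
            · have : k*(k-1) - (k-1)*(k-1-1) = 2*(k-1) := by ring
              omega
            · have : k = 1 := by omega
              rw [this] at b2
              omega
          · have : k = 0 := by omega
            rw [this] at a2
            omega
      · rcases hE2 with hE2 | hE2
        · omega
        · have e1 : b - 2 = s + 1 := by omega
          have W1 := W 2 (by omega)
          have W2 := W 3 (by omega)
          rw [est] at W2
          rw [e1] at W1
          push_cast at W1 W2
          have hE2' : (p:ℤ) + 1 ≤ g (s+1) := by exact_mod_cast hE2
          rcases W2 with ⟨b1, b2⟩ | ⟨b1, b2⟩
          · rcases W1 with ⟨a1, a2⟩ | ⟨a1, a2⟩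
            · have : k*(k-1) - (k-2)*(k-2-1) = 2*(2*k-3) := by ring
              omega
            · omega
          · have : k = 0 ∨ k = 1 ∨ k = 2 := by omega
            rcases this with hk | hk | hk <;> rw [hk] at b2 <;> omega
      · omega
  push Not at rt
  rcases le_or_gt t s with hts | hts
  · have G := gap (b := b) (M := s) (m := t) hb k0 e eg
    have N := numB1 (b := b) (M := s) (m := t) hb hc (by omega) hts k
    have th := three_h t
    linarith
  · have hb' : b = t + s := by omega
    have G := gap (b := b) (M := t) (m := s) hb' k0 e eg
    have N := numB2 (b := b) (M := t) (m := s) hb' hc (by omega) hts.le k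
    have th := three_h s
    linarith

theorem numeric {b s t A X p E : ℕ} (hb : b = s + t) (hs : 1 ≤ s) (h1 : 4*A ≤ b*(s-1)) (h2 : A ≤ X+p+E)
   (hX : X ≤ h t) (hp : p ≤ h s) (hE1 : E ≤ t) (hE2 : E = 0 ∨ p+1 ≤ h (s+1))
   (hE3 : ∀ w, 2 ≤ w → 2*s ≤ w*w → E ≤ s*(w-2)) : A ≤ h b := by
  rcases lt_or_ge b 406 with h0 | h0
  · exact small_case hb hs h0 h1 h2 hX hp hE1 hE2 hE3
  · exact big_case hb hs h0 h1 h2 hX hp hE1 hE2 hE3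
end S2

namespace S2
open Finset

theorem union_eq {r : ℕ} {A B B' : Finset ℕ} (hA : A.card = r) (hB : B.card = r - 1) (hB' : B'.card = r - 1)
    (h1 : B ⊆ A) (h2 : B' ⊆ A) (hne : B ≠ B') : B ∪ B' = A := by
  apply eq_of_subset_of_card_le (union_subset h1 h2)
  by_contra hcon
  have e1 : B = B ∪ B' := eq_of_subset_of_card_le subset_union_left (by omega)
  have e2 : B' = B ∪ B' := eq_of_subset_of_card_le subset_union_right (by omega)
  exact hne (e1.trans e2.symm)

theorem inter_card {r : ℕ} {A B B' : Finset ℕ} (hA : A.card = r) (hB : B.card = r - 1) (hB' : B'.card = r - 1)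
    (h1 : B ⊆ A) (h2 : B' ⊆ A) (hne : B ≠ B') : r - 2 ≤ (B ∩ B').card := by
  have := card_union_add_card_inter B B'
  rw [union_eq hA hB hB' h1 h2 hne] at this
  omega

/-- pairs of members of `𝒯` below different sets of `𝒜` are different -/
theorem wt {r : ℕ} {𝒜 𝒯 : Finset (Finset ℕ)} (hA : ∀ A ∈ 𝒜, A.card = r) (hT : ∀ B ∈ 𝒯, B.card = r - 1)
    (φ : Finset ℕ × Finset ℕ → ℕ) :
    ∑ A ∈ 𝒜, ∑ p ∈ (𝒯.filter (· ⊆ A)).offDiag, φ p ≤ ∑ p ∈ 𝒯.offDiag, φ p := by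
  rw [← sum_biUnion]
  · apply sum_le_sum_of_subset
    intro p hp
    simp only [mem_biUnion, mem_offDiag, mem_filter] at hp ⊢
    obtain ⟨A, _, h1, h2, h3⟩ := hp
    exact ⟨h1.1, h2.1, h3⟩
  · intro A hA1 A' hA2 hne
    rw [Function.onFun, disjoint_left]
    intro p hp hp'
    simp only [mem_offDiag, mem_filter] at hp hp'
    apply hne
    rw [← union_eq (hA A hA1) (hT _ hp.1.1) (hT _ hp.2.1.1) hp.1.2 hp.2.1.2 hp.2.2,
      ← union_eq (hA A' hA2) (hT _ hp.1.1) (hT _ hp.2.1.1) hp'.1.2 hp'.2.1.2 hp.2.2]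

theorem swap_sum (S : Finset (Finset ℕ × Finset ℕ)) (Y : Finset ℕ) (hS : ∀ p ∈ S, p.1 ∩ p.2 ⊆ Y) :
    ∑ p ∈ S, (p.1 ∩ p.2).card = ∑ y ∈ Y, (S.filter (fun p => y ∈ p.1 ∧ y ∈ p.2)).card := by
  have := sum_card_bipartiteAbove_eq_sum_card_bipartiteBelow (s := S) (t := Y) (fun p y => y ∈ p.1 ∧ y ∈ p.2)
  rw [show (∑ y ∈ Y, (S.filter (fun p => y ∈ p.1 ∧ y ∈ p.2)).card) =
    ∑ y ∈ Y, (S.bipartiteBelow (fun p y => y ∈ p.1 ∧ y ∈ p.2) y).card from rfl, ← this]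
  apply sum_congr rfl
  intro p hp
  congr 1
  ext y
  simp only [mem_inter, mem_bipartiteAbove]
  constructor
  · intro hy; exact ⟨hS p hp (mem_inter.mpr hy), hy⟩
  · intro hy; exact hy.2

theorem deg_sum {𝒯 : Finset (Finset ℕ)} {Y : Finset ℕ} {k : ℕ} (hT : ∀ B ∈ 𝒯, B.card = k) (hY : ∀ B ∈ 𝒯, B ⊆ Y) :
    ∑ y ∈ Y, (𝒯.filter (fun B => y ∈ B)).card = k * 𝒯.card := by
  have := sum_card_bipartiteAbove_eq_sum_card_bipartiteBelow (s := 𝒯) (t := Y) (fun p y => y ∈ p)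
  rw [show (∑ y ∈ Y, (𝒯.filter (fun B => y ∈ B)).card) =
    ∑ y ∈ Y, (𝒯.bipartiteBelow (fun p y => y ∈ p) y).card from rfl, ← this]
  rw [mul_comm, ← smul_eq_mul, ← sum_const]
  apply sum_congr rfl
  intro B hB
  rw [← hT B hB]
  congr 1
  ext y
  simp only [mem_bipartiteAbove]
  exact ⟨fun h => h.2, fun h => ⟨hY B hB h, h⟩⟩

theorem filt_off (𝒯 : Finset (Finset ℕ)) (y : ℕ) :
    𝒯.offDiag.filter (fun p => y ∈ p.1 ∧ y ∈ p.2) = (𝒯.filter (fun B => y ∈ B)).offDiag := by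
  ext p
  simp only [mem_filter, mem_offDiag]
  tauto

/-- estimate (i) -/
theorem est1 {r s : ℕ} (hr : 4 ≤ r) {𝒜 ℬ : Finset (Finset ℕ)} (hv : ValidPair r 3 𝒜 ℬ)
    (hs : ∀ y, (ℬ.filter (fun B => y ∈ B)).card ≤ s) : 4 * 𝒜.card ≤ ℬ.card * (s - 1) := by
  obtain ⟨hA, hB, hAB⟩ := hv
  set Y := ℬ.biUnion id with hY
  have hYB : ∀ B ∈ ℬ, B ⊆ Y := fun B hB => subset_biUnion_of_mem id hB
  have h1 := wt hA hB (fun p => (p.1 ∩ p.2).card)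
  have h2 : 6 * (r - 2) * 𝒜.card ≤ ∑ A ∈ 𝒜, ∑ p ∈ (ℬ.filter (· ⊆ A)).offDiag, (p.1 ∩ p.2).card := by
    rw [mul_comm, ← smul_eq_mul]
    apply card_nsmul_le_sum
    intro A hA1
    have h3 : (ℬ.filter (· ⊆ A)).offDiag.card • (r - 2) ≤ ∑ p ∈ (ℬ.filter (· ⊆ A)).offDiag, (p.1 ∩ p.2).card := by
      apply card_nsmul_le_sum
      intro p hp
      simp only [mem_offDiag, mem_filter] at hp
      exact inter_card (hA A hA1) (hB _ hp.1.1) (hB _ hp.2.1.1) hp.1.2 hp.2.1.2 hp.2.2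
    refine le_trans ?_ h3
    rw [smul_eq_mul]
    apply Nat.mul_le_mul_right
    rw [offDiag_card]
    have := hAB A hA1
    generalize (ℬ.filter (· ⊆ A)).card = n at *
    rw [← Nat.mul_sub_one]
    exact Nat.mul_le_mul this (show 2 ≤ n - 1 by omega)
  rw [swap_sum ℬ.offDiag Y] at h1
  swap
  · intro p hp
    exact inter_subset_left.trans (hYB _ (mem_offDiag.mp hp).1)
  have h4 : ∑ y ∈ Y, (ℬ.offDiag.filter (fun p => y ∈ p.1 ∧ y ∈ p.2)).card ≤
      ∑ y ∈ Y, (ℬ.filter (fun B => y ∈ B)).card * (s - 1) := by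
    apply sum_le_sum
    intro y _
    rw [filt_off, offDiag_card, ← Nat.mul_sub_one]
    exact Nat.mul_le_mul_left _ (Nat.sub_le_sub_right (hs y) 1)
  rw [← sum_mul, deg_sum hB hYB] at h4
  have h5 : 6 * (r-2) * 𝒜.card ≤ (r-1) * ℬ.card * (s-1) := h2.trans (h1.trans h4)
  obtain ⟨q, rfl⟩ : ∃ q, r = q + 4 := ⟨r - 4, by omega⟩
  simp only [show q + 4 - 2 = q + 2 by omega, show q + 4 - 1 = q + 3 by omega] at h5
  have h6 : (q+3) * (4 * 𝒜.card) ≤ (q+3) * (ℬ.card * (s-1)) := by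
    calc (q+3) * (4 * 𝒜.card) ≤ 6 * (q+2) * 𝒜.card := by nlinarith
      _ ≤ _ := h5
      _ = _ := by ring
  exact Nat.le_of_mul_le_mul_left h6 (by omega)

/-- members of `ℬ` below `A` not containing `x ∈ A` -/
theorem below_split {r x : ℕ} {A : Finset ℕ} {ℬ : Finset (Finset ℕ)} (hA : A.card = r) (hB : ∀ B ∈ ℬ, B.card = r - 1)
    (hx : x ∈ A) : (ℬ.filter (fun B => B ⊆ A)).card ≤
      ((ℬ.filter (fun B => x ∈ B)).filter (fun B => B ⊆ A)).card + (if A.erase x ∈ ℬ then 1 else 0) := by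
  have : ℬ.filter (fun B => B ⊆ A) ⊆ (ℬ.filter (fun B => x ∈ B)).filter (fun B => B ⊆ A) ∪
      (if A.erase x ∈ ℬ then {A.erase x} else ∅) := by
    intro B hB1
    simp only [mem_filter, mem_union] at hB1 ⊢
    by_cases hxB : x ∈ B
    · left; exact ⟨⟨hB1.1, hxB⟩, hB1.2⟩
    · right
      have : B = A.erase x := by
        apply eq_of_subset_of_card_le
        · exact subset_erase.mpr ⟨hB1.2, hxB⟩
        · rw [card_erase_of_mem hx, hA, hB B hB1.1]
      rw [if_pos (this ▸ hB1.1)]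
      simp [this]
  refine (card_le_card this).trans ((card_union_le _ _).trans ?_)
  split_ifs <;> simp

theorem valid_avoid {r x : ℕ} {𝒜 ℬ : Finset (Finset ℕ)} (hv : ValidPair r 3 𝒜 ℬ) :
    ValidPair r 3 (𝒜.filter (fun A => x ∉ A)) (ℬ.filter (fun B => x ∉ B)) := by
  obtain ⟨hA, hB, hAB⟩ := hv
  refine ⟨fun A h => hA A (mem_filter.mp h).1, fun B h => hB B (mem_filter.mp h).1, ?_⟩
  intro A h
  rw [mem_filter] at h
  refine (hAB A h.1).trans (card_le_card ?_)
  intro B hB1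
  simp only [mem_filter] at hB1 ⊢
  exact ⟨⟨hB1.1, fun hx => h.2 (hB1.2 hx)⟩, hB1.2⟩

theorem base_bound : ∀ (n : ℕ) (𝒜 ℬ : Finset (Finset ℕ)), ValidPair 3 3 𝒜 ℬ → ℬ.card = n → 𝒜.card ≤ g n := by
  intro n
  induction n using Nat.strong_induction_on with
  | _ n ih =>
  intro 𝒜 ℬ hv hn
  rcases Nat.eq_zero_or_pos n with h0 | h0
  · have hB0 : ℬ = ∅ := card_eq_zero.mp (hn.trans h0)
    have : 𝒜 = ∅ := by
      apply eq_empty_of_forall_notMem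
      intro A hA
      have := hv.2.2 A hA
      rw [hB0] at this
      simp at this
    rw [this]; simp
  have hv' := hv
  obtain ⟨hA, hB, hAB⟩ := hv
  set Y := ℬ.biUnion id with hY
  have hYB : ∀ B ∈ ℬ, B ⊆ Y := fun B hB => subset_biUnion_of_mem id hB
  obtain ⟨c1, c2, c3⟩ := cc_spec n
  have hex : ∃ x ∈ Y, (ℬ.filter (fun B => x ∈ B)).card + 1 ≤ cc n := by
    by_contra hcon
    push Not at hcon
    have hds := deg_sum hB hYB
    have h1 : Y.card • cc n ≤ ∑ y ∈ Y, (ℬ.filter (fun B => y ∈ B)).card :=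
      card_nsmul_le_sum _ _ _ (fun y hy => Nat.lt_succ_iff.mp (hcon y hy))
    rw [hds, smul_eq_mul, hn] at h1
    have hYle : Y.card ≤ cc n := by
      by_contra hc
      push Not at hc
      have : (cc n + 1) * cc n ≤ Y.card * cc n := Nat.mul_le_mul_right _ hc
      simp at h1
      nlinarith
    obtain ⟨B, hB1⟩ : ℬ.Nonempty := card_pos.mp (by omega)
    have hBc := hB B hB1
    obtain ⟨x, hx⟩ : B.Nonempty := card_pos.mp (by omega)
    have hxY := hYB B hB1 hx
    have h2 : (ℬ.filter (fun B => x ∈ B)).card ≤ (Y.erase x).card := by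
      have : ℬ.filter (fun B => x ∈ B) ⊆ (Y.erase x).image (fun y => {x, y}) := by
        intro B' hB'
        rw [mem_filter] at hB'
        have hc' := hB B' hB'.1
        have : (B'.erase x).card = 1 := by rw [card_erase_of_mem hB'.2, hc']
        obtain ⟨y, hy⟩ := card_eq_one.mp this
        have hy' : y ∈ B'.erase x := by rw [hy]; simp
        rw [mem_image]
        refine ⟨y, ?_, ?_⟩
        · exact erase_subset_erase _ (hYB B' hB'.1) hy'
        · rw [← insert_erase hB'.2, hy]
      exact (card_le_card this).trans card_image_le
    rw [card_erase_of_mem hxY] at h2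
    have := hcon x hxY
    have := card_pos.mpr ⟨x, hxY⟩
    omega
  obtain ⟨x, hxY, hxs⟩ := hex
  set s := (ℬ.filter (fun B => x ∈ B)).card with hs
  have hs1 : 1 ≤ s := by
    rw [hY, mem_biUnion] at hxY
    obtain ⟨B, hB1, hB2⟩ := hxY
    exact card_pos.mpr ⟨B, mem_filter.mpr ⟨hB1, hB2⟩⟩
  have hst : s + (ℬ.filter (fun B => x ∉ B)).card = n := by
    rw [hs, ← hn]; exact card_filter_add_card_filter_not _
  have i1 := ih _ (by omega) _ _ (valid_avoid (x := x) hv') rfl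
  rw [show (ℬ.filter (fun B => x ∉ B)).card = n - s by omega] at i1
  have i2 : 2 * (𝒜.filter (fun A => x ∈ A)).card ≤ s * (s - 1) := by
    have := wt (r := 3) (𝒜 := 𝒜.filter (fun A => x ∈ A)) (𝒯 := ℬ.filter (fun B => x ∈ B))
      (fun A h => hA A (mem_filter.mp h).1) (fun B h => hB B (mem_filter.mp h).1) (fun _ => 1)
    rw [sum_const, offDiag_card, ← hs, ← Nat.mul_sub_one, smul_eq_mul, mul_one] at this
    refine le_trans ?_ this
    rw [mul_comm, ← smul_eq_mul]
    apply card_nsmul_le_sum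
    intro A hA1
    rw [mem_filter] at hA1
    rw [sum_const, offDiag_card, smul_eq_mul, mul_one, ← Nat.mul_sub_one]
    have b1 := below_split (hA A hA1.1) hB hA1.2
    have b2 := hAB A hA1.1
    have b3 : 2 ≤ ((ℬ.filter (fun B => x ∈ B)).filter (fun B => B ⊆ A)).card := by
      split_ifs at b1 <;> omega
    generalize ((ℬ.filter (fun B => x ∈ B)).filter (fun B => B ⊆ A)).card = m at *
    exact Nat.mul_le_mul b3 (show 1 ≤ m - 1 by omega)
  have i3 : (𝒜.filter (fun A => x ∈ A)).card + (𝒜.filter (fun A => x ∉ A)).card = 𝒜.card :=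
    card_filter_add_card_filter_not _
  have i4 := (win_le hxs).2
  have i5 : 2 * ((𝒜.filter (fun A => x ∈ A)).card : ℤ) ≤ s * (s - 1) := by
    have := (Nat.cast_le (α := ℤ)).mpr i2
    push_cast [hs1] at this
    exact this
  zify at *
  linarith
end S2

namespace S2
open Finset

/-- estimate (iii) -/
theorem est3 {q s x : ℕ} (hq : 3 ≤ q) {ℬ L Q : Finset (Finset ℕ)}
    (hL : L = (ℬ.filter (fun B => x ∈ B)).image (fun B => B.erase x)) (hLs : L.card = s)
    (hLc : ∀ l ∈ L, l.card = q - 1)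
    (hs : ∀ y, (ℬ.filter (fun B => y ∈ B)).card ≤ s)
    (hQc : ∀ A ∈ Q, A.card = q) (hQB : Q ⊆ ℬ.filter (fun B => x ∉ B))
    (hQ2 : ∀ A ∈ Q, (L.filter (· ⊆ A)).card = 2) (w : ℕ) (hw : 2 ≤ w) (hw2 : 2 * s ≤ w * w) :
    Q.card ≤ s * (w - 2) := by
  set Y := L.biUnion id with hY
  have hYL : ∀ l ∈ L, l ⊆ Y := fun B hB => subset_biUnion_of_mem id hB
  have hxY : ∀ y ∈ Y, y ≠ x := by
    intro y hy hyx
    rw [hY, mem_biUnion] at hy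
    obtain ⟨l, hl, hyl⟩ := hy
    rw [hL, mem_image] at hl
    obtain ⟨B, _, rfl⟩ := hl
    simp [hyx] at hyl
  have hoff : ∀ A ∈ Q, (L.filter (· ⊆ A)).offDiag.card = 2 := by
    intro A hA; rw [offDiag_card, hQ2 A hA]
  set D : ℕ → ℕ := fun y => ∑ A ∈ Q, ((L.filter (· ⊆ A)).offDiag.filter (fun p => y ∈ p.1 ∧ y ∈ p.2)).card with hD
  have h1 : 2 * (q - 2) * Q.card ≤ ∑ y ∈ Y, D y := by
    rw [hD, sum_comm]
    rw [mul_comm, ← smul_eq_mul]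
    apply card_nsmul_le_sum
    intro A hA
    rw [← swap_sum]
    · have h7 : (L.filter (· ⊆ A)).offDiag.card • (q - 2) ≤ ∑ p ∈ (L.filter (· ⊆ A)).offDiag, (p.1 ∩ p.2).card := by
        apply card_nsmul_le_sum
        intro p hp
        simp only [mem_offDiag, mem_filter] at hp
        exact inter_card (hQc A hA) (hLc _ hp.1.1) (hLc _ hp.2.1.1) hp.1.2 hp.2.1.2 hp.2.2
      rwa [hoff A hA, smul_eq_mul] at h7
    · intro p hp
      simp only [mem_offDiag, mem_filter] at hp
      exact inter_subset_left.trans (hYL _ hp.1.1)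
  have h2 : ∀ y ∈ Y, D y ≤ (L.filter (fun l => y ∈ l)).card * (w - 2) := by
    intro y hy
    have a1 : D y ≤ (L.filter (fun l => y ∈ l)).card * ((L.filter (fun l => y ∈ l)).card - 1) := by
      have := wt hQc hLc (fun p => if y ∈ p.1 ∧ y ∈ p.2 then 1 else 0)
      simp only [← card_filter] at this
      rw [filt_off L, offDiag_card, ← Nat.mul_sub_one] at this
      exact this
    have a2 : D y ≤ 2 * (Q.filter (fun A => y ∈ A)).card := by
      rw [card_filter, mul_sum]
      apply sum_le_sum
      intro A hA
      split_ifs with hyA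
      · rw [mul_one, ← hoff A hA]; exact card_filter_le _ _
      · rw [mul_zero, Nat.le_zero, card_eq_zero, filter_eq_empty_iff]
        intro p hp hyp
        simp only [mem_offDiag, mem_filter] at hp
        exact hyA (hp.1.2 hyp.1)
    have a3 : (Q.filter (fun A => y ∈ A)).card + (L.filter (fun l => y ∈ l)).card ≤ s := by
      refine le_trans ?_ (hs y)
      have e1 : (Q.filter (fun A => y ∈ A)).card ≤ ((ℬ.filter (fun B => y ∈ B)).filter (fun B => x ∉ B)).card := by
        apply card_le_card
        intro A hA
        rw [mem_filter] at hA
        have := mem_filter.mp (hQB hA.1)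
        simp only [mem_filter]
        exact ⟨⟨this.1, hA.2⟩, this.2⟩
      have e2 : (L.filter (fun l => y ∈ l)).card ≤ ((ℬ.filter (fun B => y ∈ B)).filter (fun B => x ∈ B)).card := by
        have : L.filter (fun l => y ∈ l) ⊆ ((ℬ.filter (fun B => y ∈ B)).filter (fun B => x ∈ B)).image (fun B => B.erase x) := by
          intro l hl
          rw [mem_filter, hL, mem_image] at hl
          obtain ⟨⟨B, hB, rfl⟩, hyl⟩ := hl
          rw [mem_filter] at hB
          rw [mem_image]
          refine ⟨B, ?_, rfl⟩
          simp only [mem_filter]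
          exact ⟨⟨hB.1, mem_of_mem_erase hyl⟩, hB.2⟩
        exact (card_le_card this).trans card_image_le
      have e3 := card_filter_add_card_filter_not (s := ℬ.filter (fun B => y ∈ B)) (fun B => x ∈ B)
      omega
    generalize (L.filter (fun l => y ∈ l)).card = u at *
    generalize (Q.filter (fun A => y ∈ A)).card = v at *
    rcases Nat.lt_or_ge u w with hu | hu
    · exact a1.trans (Nat.mul_le_mul_left _ (by omega))
    · obtain ⟨z, rfl⟩ : ∃ z, w = z + 2 := ⟨w - 2, by omega⟩
      rw [Nat.add_sub_cancel]
      nlinarith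
  have h3 := h1.trans (sum_le_sum h2)
  rw [← sum_mul, deg_sum hLc hYL, hLs] at h3
  obtain ⟨z, rfl⟩ : ∃ z, q = z + 3 := ⟨q - 3, by omega⟩
  simp only [show z + 3 - 2 = z + 1 by omega, show z + 3 - 1 = z + 2 by omega] at h3
  have h6 : (2 * (z+1)) * Q.card ≤ (2 * (z+1)) * (s * (w-2)) := by
    refine h3.trans ?_
    rw [mul_assoc]
    exact Nat.mul_le_mul_right _ (by omega)
  exact Nat.le_of_mul_le_mul_left h6 (by omega)

theorem step_bound {q : ℕ} (hq : 3 ≤ q)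
    (IHr : ∀ 𝒜 ℬ : Finset (Finset ℕ), ValidPair q 3 𝒜 ℬ → 𝒜.card ≤ h ℬ.card) :
    ∀ (n : ℕ) (𝒜 ℬ : Finset (Finset ℕ)), ValidPair (q+1) 3 𝒜 ℬ → ℬ.card = n → 𝒜.card ≤ h n := by
  intro n
  induction n using Nat.strong_induction_on with
  | _ n ih =>
  intro 𝒜 ℬ hv hn
  rcases Nat.eq_zero_or_pos n with h0 | h0
  · have hB0 : ℬ = ∅ := card_eq_zero.mp (hn.trans h0)
    have : 𝒜 = ∅ := by
      apply eq_empty_of_forall_notMem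
      intro A hA
      have := hv.2.2 A hA
      rw [hB0] at this
      simp at this
    rw [this]; simp
  have hv' := hv
  obtain ⟨hA, hB, hAB⟩ := hv
  rw [Nat.add_sub_cancel] at hB
  set Y := ℬ.biUnion id with hY
  have hYne : Y.Nonempty := by
    obtain ⟨B, hB1⟩ : ℬ.Nonempty := card_pos.mp (by omega)
    have hBc := hB B hB1
    obtain ⟨x, hx⟩ : B.Nonempty := card_pos.mp (by omega)
    exact ⟨x, mem_biUnion.mpr ⟨B, hB1, hx⟩⟩
  obtain ⟨x, hxY, hmax⟩ := exists_max_image Y (fun y => (ℬ.filter (fun B => y ∈ B)).card) hYne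
  set s := (ℬ.filter (fun B => x ∈ B)).card with hs
  have hmax' : ∀ y, (ℬ.filter (fun B => y ∈ B)).card ≤ s := by
    intro y
    by_cases hy : y ∈ Y
    · exact hmax y hy
    · have : ℬ.filter (fun B => y ∈ B) = ∅ := by
        rw [filter_eq_empty_iff]
        intro B hB1 hyB
        exact hy (mem_biUnion.mpr ⟨B, hB1, hyB⟩)
      rw [this]; simp
  have hs1 : 1 ≤ s := by
    rw [hY, mem_biUnion] at hxY
    obtain ⟨B, hB1, hB2⟩ := hxY
    exact card_pos.mpr ⟨B, mem_filter.mpr ⟨hB1, hB2⟩⟩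
  set t := (ℬ.filter (fun B => x ∉ B)).card with ht
  have hst : n = s + t := by
    rw [hs, ← hn]; exact (card_filter_add_card_filter_not _).symm
  have hX := ih _ (by omega) _ _ (valid_avoid (x := x) hv') rfl
  have i1 := est1 (by omega) hv' hmax'
  rw [hn] at i1
  -- the link
  obtain ⟨L, hL⟩ : ∃ L, L = (ℬ.filter (fun B => x ∈ B)).image (fun B => B.erase x) := ⟨_, rfl⟩
  have einj : ∀ S : Finset (Finset ℕ), Set.InjOn (fun B : Finset ℕ => B.erase x) (S.filter (fun B => x ∈ B) : Finset (Finset ℕ)) := by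
    intro S B1 h1 B2 h2 he
    simp only [coe_filter, Set.mem_ofPred_eq] at h1 h2
    rw [← insert_erase h1.2, ← insert_erase h2.2]
    exact congrArg _ he
  have hLs : L.card = s := by rw [hL, card_image_of_injOn (einj ℬ)]
  have hLc : ∀ l ∈ L, l.card = q - 1 := by
    intro l hl
    rw [hL, mem_image] at hl
    obtain ⟨B, hB1, rfl⟩ := hl
    rw [mem_filter] at hB1
    rw [card_erase_of_mem hB1.2, hB B hB1.1]
  obtain ⟨R, hR⟩ : ∃ R, R = (𝒜.filter (fun A => x ∈ A)).image (fun A => A.erase x) := ⟨_, rfl⟩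
  have hRs : R.card = (𝒜.filter (fun A => x ∈ A)).card := by rw [hR, card_image_of_injOn (einj 𝒜)]
  have hRc : ∀ A ∈ R, A.card = q := by
    intro l hl
    rw [hR, mem_image] at hl
    obtain ⟨B, hB1, rfl⟩ := hl
    rw [mem_filter] at hB1
    rw [card_erase_of_mem hB1.2, hA B hB1.1]; rfl
  have hR2 : ∀ A ∈ R, 2 ≤ (L.filter (· ⊆ A)).card ∧ ((L.filter (· ⊆ A)).card < 3 → A ∈ ℬ.filter (fun B => x ∉ B)) := by
    intro A' hA'
    rw [hR, mem_image] at hA'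
    obtain ⟨A, hA1, rfl⟩ := hA'
    rw [mem_filter] at hA1
    have b1 := below_split (hA A hA1.1) hB hA1.2
    have b2 := hAB A hA1.1
    have b3 : ((ℬ.filter (fun B => x ∈ B)).filter (fun B => B ⊆ A)).card ≤ (L.filter (· ⊆ A.erase x)).card := by
      apply card_le_card_of_injOn (fun B => B.erase x)
      · intro B hB1
        simp only [coe_filter, mem_filter, Set.mem_ofPred_eq] at hB1
        simp only [coe_filter, Set.mem_ofPred_eq]
        refine ⟨?_, erase_subset_erase _ hB1.2⟩
        rw [hL, mem_image]
        exact ⟨B, mem_filter.mpr hB1.1, rfl⟩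
      · exact (einj ℬ).mono (by intro B hB1; exact (mem_filter.mp hB1).1)
    split_ifs at b1 with hh
    · refine ⟨by omega, fun _ => ?_⟩
      rw [mem_filter]
      exact ⟨hh, by simp⟩
    · refine ⟨by omega, fun _ => ?_⟩
      omega
  obtain ⟨P, hP⟩ : ∃ P, P = R.filter (fun A => 3 ≤ (L.filter (· ⊆ A)).card) := ⟨_, rfl⟩
  obtain ⟨Q, hQ⟩ : ∃ Q, Q = R.filter (fun A => ¬ 3 ≤ (L.filter (· ⊆ A)).card) := ⟨_, rfl⟩
  have hPQ : P.card + Q.card = R.card := by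
    rw [hP, hQ]; exact card_filter_add_card_filter_not _
  have hAcard : (𝒜.filter (fun A => x ∈ A)).card + (𝒜.filter (fun A => x ∉ A)).card = 𝒜.card :=
    card_filter_add_card_filter_not _
  have hQB : Q ⊆ ℬ.filter (fun B => x ∉ B) := by
    intro A hA1
    rw [hQ, mem_filter] at hA1
    exact (hR2 A hA1.1).2 (by omega)
  have hPv : ValidPair q 3 P L := by
    refine ⟨fun A h1 => hRc A ?_, hLc, fun A h1 => ?_⟩
    · rw [hP] at h1; exact (mem_filter.mp h1).1
    · rw [hP] at h1; exact (mem_filter.mp h1).2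
  have hp := IHr P L hPv
  rw [hLs] at hp
  refine numeric (s := s) (t := t) (X := (𝒜.filter (fun A => x ∉ A)).card) (p := P.card) (E := Q.card)
    hst hs1 i1 (by omega) hX hp (card_le_card hQB) ?_ ?_
  · rcases Q.eq_empty_or_nonempty with hQe | ⟨A0, hA0⟩
    · left; rw [hQe]; rfl
    · right
      have hA0' := hA0
      rw [hQ, mem_filter] at hA0'
      have hc0 := hRc A0 hA0'.1
      have hM : ∃ M ∈ powersetCard (q-1) A0, M ∉ L := by
        by_contra hcon
        push Not at hcon
        have : powersetCard (q-1) A0 ⊆ L.filter (· ⊆ A0) := by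
          intro M hM
          rw [mem_filter]
          exact ⟨hcon M hM, (mem_powersetCard.mp hM).1⟩
        have := card_le_card this
        rw [card_powersetCard, hc0, Nat.choose_symm_of_eq_add (show q = (q-1) + 1 by omega), Nat.choose_one_right] at this
        omega
      obtain ⟨M, hM1, hM2⟩ := hM
      rw [mem_powersetCard] at hM1
      have hnP : A0 ∉ P := by
        rw [hP, mem_filter]
        exact fun hh => hA0'.2 hh.2
      have hval : ValidPair q 3 (insert A0 P) (insert M L) := by
        refine ⟨?_, ?_, ?_⟩
        · intro A hA1
          rcases mem_insert.mp hA1 with rfl | hA1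
          · exact hc0
          · exact hPv.1 A hA1
        · intro l hl
          rcases mem_insert.mp hl with rfl | hl
          · exact hM1.2
          · exact hLc l hl
        · intro A hA1
          rcases mem_insert.mp hA1 with rfl | hA1
          · rw [filter_insert, if_pos hM1.1, card_insert_of_notMem (fun hh => hM2 (mem_filter.mp hh).1)]
            have := (hR2 A hA0'.1).1
            omega
          · exact (hPv.2.2 A hA1).trans (card_le_card (filter_subset_filter _ (subset_insert _ _)))
      have := IHr _ _ hval
      rw [card_insert_of_notMem hnP, card_insert_of_notMem hM2, hLs] at this
      exact this
  · intro w hw hw2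
    refine est3 hq hL hLs hLc hmax' ?_ hQB ?_ w hw hw2
    · intro A hA1
      rw [hQ, mem_filter] at hA1
      exact hRc A hA1.1
    · intro A hA1
      rw [hQ, mem_filter] at hA1
      have := (hR2 A hA1.1).1
      omega

theorem bound (r : ℕ) (hr : 3 ≤ r) : ∀ 𝒜 ℬ : Finset (Finset ℕ), ValidPair r 3 𝒜 ℬ → 𝒜.card ≤ h ℬ.card := by
  induction r, hr using Nat.le_induction with
  | base => intro 𝒜 ℬ hv; exact (base_bound _ 𝒜 ℬ hv rfl).trans (g_le_h _)
  | succ q hq ih => intro 𝒜 ℬ hv; exact step_bound hq ih _ 𝒜 ℬ hv rfl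

theorem h_val {c k : ℕ} (hc : 29 ≤ c) (hk : k < c) : h (c.choose 2 + k) = c.choose 3 + k.choose 2 := by
  have e2 := Nat.two_mul_div_two_of_even (Nat.even_mul_pred_self c)
  have hm : 29 * 28 ≤ c * (c-1) := Nat.mul_le_mul hc (by omega)
  have h2 := Nat.choose_two_right c
  rw [h_eq_g (by omega)]
  have hcc : cc (c.choose 2 + k) = c := by
    apply cc_eq
    · omega
    · have : c * (c+1) = c*(c-1) + 2*c := by
        obtain ⟨v, rfl⟩ : ∃ v, c = v + 1 := ⟨c-1, by omega⟩
        rw [Nat.add_sub_cancel]; ring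
      omega
  unfold g
  rw [hcc, ← choose3, ← h2, Nat.add_sub_cancel_left, ← Nat.choose_two_right]

/-- the construction -/
theorem construct (r c k : ℕ) (hr : 3 ≤ r) (hk : k < c) : ∃ 𝒜 ℬ : Finset (Finset ℕ),
    ValidPair r 3 𝒜 ℬ ∧ ℬ.card = c.choose 2 + k ∧ 𝒜.card = c.choose 3 + k.choose 2 := by
  set C := Ico (c+1) (c+1+(r-3)) with hC
  have hCc : C.card = r - 3 := by simp [hC]
  have hCm : ∀ i ∈ C, c < i := by intro i hi; rw [hC, mem_Ico] at hi; omega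
  -- sets of the form C ∪ S with S in range (c+1)
  have hdis : ∀ S : Finset ℕ, S ⊆ range (c+1) → Disjoint C S := by
    intro S hS
    rw [disjoint_left]
    intro i hi hi'
    have := mem_range.mp (hS hi')
    have := hCm i hi
    omega
  have hinj : Set.InjOn (fun S => C ∪ S) {S : Finset ℕ | S ⊆ range (c+1)} := by
    intro S hS S' hS' he
    have e1 : (C ∪ S) \ C = S := union_sdiff_cancel_left (hdis S hS)
    have e2 : (C ∪ S') \ C = S' := union_sdiff_cancel_left (hdis S' hS')
    rw [← e1, ← e2]
    exact congrArg (· \ C) he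
  -- the graph case
  set G := powersetCard 2 (range c) ∪ (powersetCard 1 (range k)).image (insert c) with hG
  set H := powersetCard 3 (range c) ∪ (powersetCard 2 (range k)).image (insert c) with hH
  have hsub : ∀ (j : ℕ) (S : Finset ℕ), S ∈ powersetCard j (range k) → S ⊆ range c ∧ c ∉ S := by
    intro j S hS
    rw [mem_powersetCard] at hS
    refine ⟨hS.1.trans (range_subset_range.mpr hk.le), fun hc => ?_⟩
    have := mem_range.mp (hS.1 hc)
    omega
  have hgen : ∀ j, ∀ S ∈ powersetCard (j+1) (range c) ∪ (powersetCard j (range k)).image (insert c),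
      S ⊆ range (c+1) ∧ S.card = j+1 := by
    intro j S hS
    rw [mem_union] at hS
    rcases hS with hS | hS
    · rw [mem_powersetCard] at hS
      exact ⟨hS.1.trans (range_subset_range.mpr (by omega)), hS.2⟩
    · rw [mem_image] at hS
      obtain ⟨S', hS', rfl⟩ := hS
      obtain ⟨u1, u2⟩ := hsub j S' hS'
      refine ⟨?_, ?_⟩
      · apply insert_subset (by simp)
        exact u1.trans (range_subset_range.mpr (by omega))
      · rw [card_insert_of_notMem u2, (mem_powersetCard.mp hS').2]
  have hcard : ∀ j, (powersetCard (j+1) (range c) ∪ (powersetCard j (range k)).image (insert c)).card = c.choose (j+1) + k.choose j := by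
    intro j
    rw [card_union_of_disjoint, card_image_of_injOn]
    · simp
    · intro S hS S' hS' he
      have := congrArg (fun X => X.erase c) he
      simpa [erase_insert (hsub j S hS).2, erase_insert (hsub j S' hS').2] using this
    · rw [disjoint_left]
      intro S hS hS'
      rw [mem_image] at hS'
      obtain ⟨S', _, rfl⟩ := hS'
      have := mem_range.mp ((mem_powersetCard.mp hS).1 (mem_insert_self _ _))
      omega
  have hGs : ∀ S ∈ G, S ⊆ range (c+1) ∧ S.card = 2 := hgen 1
  have hHs : ∀ S ∈ H, S ⊆ range (c+1) ∧ S.card = 3 := hgen 2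
  have hdown : ∀ S ∈ H, powersetCard 2 S ⊆ G := by
    intro S hS U hU
    rw [mem_powersetCard] at hU
    rw [hG, mem_union]
    rw [hH, mem_union] at hS
    rcases hS with hS | hS
    · left
      rw [mem_powersetCard] at hS ⊢
      exact ⟨hU.1.trans hS.1, hU.2⟩
    · rw [mem_image] at hS
      obtain ⟨S', hS', rfl⟩ := hS
      by_cases hcU : c ∈ U
      · right
        rw [mem_image]
        refine ⟨U.erase c, ?_, insert_erase hcU⟩
        rw [mem_powersetCard, card_erase_of_mem hcU, hU.2]
        refine ⟨?_, rfl⟩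
        intro i hi
        have hi1 := mem_of_mem_erase hi
        have hi2 := ne_of_mem_erase hi
        have := mem_insert.mp (hU.1 hi1)
        exact (mem_powersetCard.mp hS').1 (this.resolve_left hi2)
      · left
        rw [mem_powersetCard]
        refine ⟨?_, hU.2⟩
        intro i hi
        have := mem_insert.mp (hU.1 hi)
        have hic : i ≠ c := fun hh => hcU (hh ▸ hi)
        exact (hsub 2 S' hS').1 (this.resolve_left hic)
  refine ⟨H.image (C ∪ ·), G.image (C ∪ ·), ⟨?_, ?_, ?_⟩, ?_, ?_⟩
  · intro A hA
    rw [mem_image] at hA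
    obtain ⟨S, hS, rfl⟩ := hA
    rw [card_union_of_disjoint (hdis S (hHs S hS).1), hCc, (hHs S hS).2]
    omega
  · intro A hA
    rw [mem_image] at hA
    obtain ⟨S, hS, rfl⟩ := hA
    rw [card_union_of_disjoint (hdis S (hGs S hS).1), hCc, (hGs S hS).2]
    omega
  · intro A hA
    rw [mem_image] at hA
    obtain ⟨S, hS, rfl⟩ := hA
    have : ((powersetCard 2 S).image (C ∪ ·)).card = 3 := by
      rw [card_image_of_injOn, card_powersetCard, (hHs S hS).2]
      · rfl
      · apply hinj.mono
        intro U hU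
        exact (mem_powersetCard.mp hU).1.trans (hHs S hS).1
    rw [← this]
    apply card_le_card
    intro B hB
    rw [mem_image] at hB
    obtain ⟨U, hU, rfl⟩ := hB
    rw [mem_filter, mem_image]
    exact ⟨⟨U, hdown S hS hU, rfl⟩, union_subset_union_right (mem_powersetCard.mp hU).1⟩
  · rw [card_image_of_injOn (hinj.mono (fun S hS => (hGs S hS).1)), hG, hcard 1, Nat.choose_one_right]
  · rw [card_image_of_injOn (hinj.mono (fun S hS => (hHs S hS).1)), hH, hcard 2]
end S2

theorem stmt_2 (r c₂ c₁ : ℕ) (hr : 3 ≤ r) (hc : c₁ < c₂) (hc₂ : 29 ≤ c₂) :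
    f r 3 (c₂.choose 2 + c₁) = c₂.choose 3 + c₁.choose 2 := by
  have H : IsGreatest {a : ℕ | ∃ 𝒜 ℬ : Finset (Finset ℕ), ValidPair r 3 𝒜 ℬ ∧ ℬ.card = c₂.choose 2 + c₁ ∧ 𝒜.card = a}
      (c₂.choose 3 + c₁.choose 2) := by
    refine ⟨S2.construct r c₂ c₁ hr hc, ?_⟩
    rintro a ⟨𝒜, ℬ, hv, hb, rfl⟩
    have := S2.bound r hr 𝒜 ℬ hv
    rwa [hb, S2.h_val hc₂ hc] at this
  exact H.csSup_eq
end

section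
/- For all integers r ≥ 2 and b ≥ 0, one has f(r, 2, b) = C(b, 2); that is, every 2-valid pair (𝒜, ℬ) with |ℬ| = b satisfies |𝒜| ≤ C(b,2), and there is a 2-valid pair with |ℬ| = b and |𝒜| = C(b,2). -/
theorem stmt_3_upper (r b : ℕ) (hr : 2 ≤ r) (𝒜 ℬ : Finset (Finset ℕ)) (h : ValidPair r 2 𝒜 ℬ)
    (hb : ℬ.card = b) : 𝒜.card ≤ b.choose 2 := by
  obtain ⟨hA, hB, hk⟩ := h
  have key : ∀ A ∈ 𝒜, ∃ P ∈ Finset.powersetCard 2 ℬ, P.sup id = A := by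
    intro A hAA
    obtain ⟨P, hP, hPc⟩ := Finset.exists_subset_card_eq (hk A hAA)
    refine ⟨P, ?_, ?_⟩
    · rw [Finset.mem_powersetCard]
      exact ⟨hP.trans (Finset.filter_subset _ _), hPc⟩
    · obtain ⟨X, Y, hXY, rfl⟩ := Finset.card_eq_two.1 hPc
      have hX := Finset.mem_filter.1 (hP (by simp : X ∈ _))
      have hY := Finset.mem_filter.1 (hP (by simp : Y ∈ ({X, Y} : Finset (Finset ℕ))))
      have hXc := hB X hX.1
      have hYc := hB Y hY.1
      have hAc := hA A hAA
      have hs : X ∪ Y ⊆ A := Finset.union_subset hX.2 hY.2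
      have hgoal : X ∪ Y = A := by
        apply Finset.eq_of_subset_of_card_le hs
        by_contra hlt
        have h1 : X = X ∪ Y :=
          Finset.eq_of_subset_of_card_le Finset.subset_union_left (by omega)
        have h2 : Y = X ∪ Y :=
          Finset.eq_of_subset_of_card_le Finset.subset_union_right (by omega)
        exact hXY (h1.trans h2.symm)
      simpa using hgoal
  have hsub : 𝒜 ⊆ (Finset.powersetCard 2 ℬ).image (fun P => P.sup id) := by
    intro A hAA
    obtain ⟨P, hP, h⟩ := key A hAA
    exact Finset.mem_image.2 ⟨P, hP, h⟩
  calc 𝒜.card ≤ _ := Finset.card_le_card hsub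
    _ ≤ _ := Finset.card_image_le
    _ = b.choose 2 := by rw [Finset.card_powersetCard, hb]

theorem stmt_3_lower (r b : ℕ) (hr : 2 ≤ r) :
    ∃ 𝒜 ℬ : Finset (Finset ℕ), ValidPair r 2 𝒜 ℬ ∧ ℬ.card = b ∧ 𝒜.card = b.choose 2 := by
  set C := Finset.Ico b (b + (r - 2)) with hC
  have hCc : C.card = r - 2 := by simp [hC]
  have hCn : ∀ i < b, i ∉ C := by
    intro i hi h
    simp [hC] at h
    omega
  have hinj : ∀ i < b, ∀ j < b, insert i C = insert j C → i = j := by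
    intro i hi j hj h
    have : i ∈ insert j C := h ▸ Finset.mem_insert_self i C
    exact (Finset.mem_insert.1 this).resolve_right (hCn i hi)
  have hdis : ∀ P ⊆ Finset.range b, Disjoint P C := by
    intro P hP
    rw [Finset.disjoint_left]
    intro i hi
    exact hCn i (Finset.mem_range.1 (hP hi))
  refine ⟨(Finset.powersetCard 2 (Finset.range b)).image (fun P => P ∪ C),
    (Finset.range b).image (fun i => insert i C), ⟨?_, ?_, ?_⟩, ?_, ?_⟩
  · intro A hA
    obtain ⟨P, hP, rfl⟩ := Finset.mem_image.1 hA
    rw [Finset.mem_powersetCard] at hP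
    rw [Finset.card_union_of_disjoint (hdis P hP.1)]
    omega
  · intro B hB
    obtain ⟨i, hi, rfl⟩ := Finset.mem_image.1 hB
    rw [Finset.card_insert_of_notMem (hCn i (Finset.mem_range.1 hi))]
    omega
  · intro A hA
    obtain ⟨P, hP, rfl⟩ := Finset.mem_image.1 hA
    rw [Finset.mem_powersetCard] at hP
    have hc : (P.image (fun i => insert i C)).card = 2 := by
      rw [Finset.card_image_of_injOn, hP.2]
      intro i hi j hj h
      exact hinj i (Finset.mem_range.1 (hP.1 hi)) j (Finset.mem_range.1 (hP.1 hj)) h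
    rw [← hc]
    apply Finset.card_le_card
    intro B hB
    obtain ⟨i, hi, rfl⟩ := Finset.mem_image.1 hB
    refine Finset.mem_filter.2 ⟨Finset.mem_image.2 ⟨i, hP.1 hi, rfl⟩, ?_⟩
    exact Finset.insert_subset (Finset.mem_union_left _ hi) Finset.subset_union_right
  · rw [Finset.card_image_of_injOn, Finset.card_range]
    intro i hi j hj h
    exact hinj i (by simpa using hi) j (by simpa using hj) h
  · rw [Finset.card_image_of_injOn, Finset.card_powersetCard, Finset.card_range]
    intro P hP Q hQ h
    have hP' := hdis P (Finset.mem_powersetCard.1 hP).1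
    have hQ' := hdis Q (Finset.mem_powersetCard.1 hQ).1
    have h' : (P ∪ C) \ C = (Q ∪ C) \ C := congrArg (· \ C) h
    rwa [Finset.union_sdiff_cancel_right hP', Finset.union_sdiff_cancel_right hQ'] at h'

theorem stmt_3 (r b : ℕ) (hr : 2 ≤ r) :
    f r 2 b = b.choose 2 ∧
    (∀ 𝒜 ℬ : Finset (Finset ℕ), ValidPair r 2 𝒜 ℬ → ℬ.card = b → 𝒜.card ≤ b.choose 2) ∧
    (∃ 𝒜 ℬ : Finset (Finset ℕ), ValidPair r 2 𝒜 ℬ ∧ ℬ.card = b ∧ 𝒜.card = b.choose 2) := by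
  have hu := stmt_3_upper r b hr
  have hl := stmt_3_lower r b hr
  refine ⟨?_, hu, hl⟩
  apply IsGreatest.csSup_eq
  refine ⟨hl, ?_⟩
  rintro a ⟨𝒜, ℬ, hv, hb, rfl⟩
  exact hu 𝒜 ℬ hv hb
end
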